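/- arXiv:1811.05215 — 3 statements merged into one kernel-verified Lean document; each statement's English description precedes it below -/
import Mathlib

section
/- Let a, b > 0, let d : [x_L,x_R] → ℝ be Lipschitz continuous with 0 < d_min ≤ d(x) ≤ d_max, let T > 0, and let p, m : [0,T] × [x_L,x_R] → ℝ be a classical solution of the damped linear wave system such that all partial derivatives ∂_t^i ∂_x^s p and ∂_t^i ∂_x^s m with i ≤ 2 and s ≤ k+1 exist and are continuous; set f = a ∂_t p + ∂_x m and g = b ∂_t m + ∂_x p + d m. Then there exists a constant C, depending on p, m, a, b, d, k, x_R − x_L and T but not on the mesh, such that for every mesh T_h of [x_L,x_R] with mesh size h, every semidiscrete solution (p_h, m_h) of the inexact Petrov–Galerkin method which is twice continuously differentiable in time and has initial values p_h(0) = I_h^k p(0,·), m_h(0) = I_h^k m(0,·) satisfies ‖p(t,·) − p_h(t)‖ + ‖m(t,·) − m_h(t)‖ ≤ C h^{k+1} for all 0 ≤ t ≤ T, where ‖·‖ is the L²(x_L,x_R) norm. -/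
/-!
On each element the discrete error is `u = I p - p_h`, `w = I m - m_h`, where `I` is the
interpolation operator `I_h^k`. Since `∂_x I v` has the same moments as `∂_x v`, the errors satisfy
the homogeneous Petrov-Galerkin equations up to the residuals `a (I p_t - p_t)` and
`b (I m_t - m_t) + d (π I m - m)`. The interpolation errors are of order `k + 1`
(`EltBasis.abs_sub_interp_le`). So is the friction term, although `π m - m` is only of order `k`:
the projection error is orthogonal to the test function, so `d` may be replaced by `d - d(x_n)`
(`friction_residual`). The equations may be differentiated in time (`EltEq.differentiate`), so
`(u_t, w_t)` satisfies a system of the same form (`eltSys_err`).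

Testing with `π u` and `π w` gives an energy balance on each element whose boundary terms
telescope, and Gronwall's inequality bounds `‖π u‖` and `‖π w‖` (`energy_estimate`). The same
estimate for `(u_t, w_t)`, whose initial projections are bounded by the residuals because
`u(0) = w(0) = 0`, bounds `‖π u_t‖` and `‖π w_t‖`. The equations then bound `‖u_x‖` and `‖w_x‖`
(`EltSys.deriv_le`), and a Poincare-type inequality on each element (`EltBasis.inner2_self_le`)
turns the bound on the projections into a bound on `u` and `w` themselves (`global_bound`).
Adding the interpolation error gives the claim.

Discrete functions are represented on each element by polynomial curves in time; `pe q` is the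
function of the polynomial `q`, and time derivatives of such curves are tested with all linear
functionals (`PolyDeriv`).
-/

open MeasureTheory intervalIntegral Set

noncomputable section

/-- A mesh `x_L = x_0 < x_1 < ⋯ < x_N = x_R` of the interval `[x_L, x_R]`. -/
structure Mesh (xL xR : ℝ) where
  N : ℕ
  Npos : 0 < N
  pt : ℕ → ℝ
  left : pt 0 = xL
  right : pt N = xR
  mono : ∀ n < N, pt n < pt (n + 1)

namespace Mesh

variable {xL xR : ℝ}

/-- The global mesh size `h = max_n (x_n - x_{n-1})`. -/
def hsize (M : Mesh xL xR) : ℝ :=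
  (Finset.range M.N).sup' (Finset.nonempty_range_iff.mpr M.Npos.ne') fun n =>
    M.pt (n + 1) - M.pt n

/-- `v ∈ P_j(T_h)`: on the interior of each element, `v` coincides with a polynomial of
degree at most `j`. -/
def PiecewisePoly (M : Mesh xL xR) (j : ℕ) (v : ℝ → ℝ) : Prop :=
  ∀ n < M.N, ∃ P : Polynomial ℝ, P.natDegree ≤ j ∧
    ∀ x ∈ Set.Ioo (M.pt n) (M.pt (n + 1)), v x = P.eval x

/-- `dv` is the elementwise derivative `∂_x v` of `v`. -/
def PiecewiseDeriv (M : Mesh xL xR) (v dv : ℝ → ℝ) : Prop :=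
  ∀ n < M.N, ∀ x ∈ Set.Ioo (M.pt n) (M.pt (n + 1)), HasDerivAt v (dv x) x

/-- `v` is continuous on `[x_L,x_R]` and piecewise continuously differentiable with
elementwise derivative `dv` (continuous up to the closure of each element). -/
def PiecewiseC1 (M : Mesh xL xR) (v dv : ℝ → ℝ) : Prop :=
  ContinuousOn v (Set.Icc xL xR) ∧ M.PiecewiseDeriv v dv ∧
    ∀ n < M.N, ∃ w : ℝ → ℝ, ContinuousOn w (Set.Icc (M.pt n) (M.pt (n + 1))) ∧
      Set.EqOn dv w (Set.Ioo (M.pt n) (M.pt (n + 1)))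

end Mesh

/-- The `L²(x_L,x_R)` inner product `(v,w) = ∫ v w`. -/
def inner2 (xL xR : ℝ) (v w : ℝ → ℝ) : ℝ := ∫ x in xL..xR, v x * w x

/-- The `L²(x_L,x_R)` norm. -/
def L2norm (xL xR : ℝ) (v : ℝ → ℝ) : ℝ := Real.sqrt (∫ x in xL..xR, v x ^ 2)

/-- `pw = π_h^j w` is the `L²`-orthogonal projection of `w` onto `P_j(T_h)`. -/
def IsL2Proj {xL xR : ℝ} (M : Mesh xL xR) (j : ℕ) (w pw : ℝ → ℝ) : Prop :=
  M.PiecewisePoly j pw ∧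
    ∀ q : ℝ → ℝ, M.PiecewisePoly j q → inner2 xL xR pw q = inner2 xL xR w q

/-- `Iv = I_h^k v` is the interpolant of `v` (with elementwise derivative `dv`):
`Iv` is a continuous piecewise polynomial of degree at most `k` with elementwise
derivative `dIv`, it matches `v` at the mesh points, and `(∂_x Iv, q̃) = (∂_x v, q̃)`
for all `q̃ ∈ P_{k-1}(T_h)`. -/
def IsInterp {xL xR : ℝ} (M : Mesh xL xR) (k : ℕ) (v dv Iv dIv : ℝ → ℝ) : Prop :=
  M.PiecewisePoly k Iv ∧ ContinuousOn Iv (Set.Icc xL xR) ∧ M.PiecewiseDeriv Iv dIv ∧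
    (∀ n ≤ M.N, Iv (M.pt n) = v (M.pt n)) ∧
    ∀ q : ℝ → ℝ, M.PiecewisePoly (k - 1) q → inner2 xL xR dIv q = inner2 xL xR dv q

/-- A semidiscrete solution `(p_h, m_h)` of the inexact Petrov--Galerkin method on `[0,T]`
for the damped linear wave system with coefficients `a`, `b`, friction `d` and data `f`, `g`.
The fields `dtp`, `dtm` are the time derivatives, `dxp`, `dxm` the elementwise spatial
derivatives, and `pim t = π_h^{k-1} (m_h t)`. -/
structure PGSol {xL xR : ℝ} (M : Mesh xL xR) (k : ℕ) (T a b : ℝ)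
    (d : ℝ → ℝ) (f g : ℝ → ℝ → ℝ) where
  p : ℝ → ℝ → ℝ
  m : ℝ → ℝ → ℝ
  dtp : ℝ → ℝ → ℝ
  dtm : ℝ → ℝ → ℝ
  dxp : ℝ → ℝ → ℝ
  dxm : ℝ → ℝ → ℝ
  pim : ℝ → ℝ → ℝ
  p_poly : ∀ t ∈ Set.Icc (0 : ℝ) T, M.PiecewisePoly k (p t)
  p_cont : ∀ t ∈ Set.Icc (0 : ℝ) T, ContinuousOn (p t) (Set.Icc xL xR)
  p_bcL : ∀ t ∈ Set.Icc (0 : ℝ) T, p t xL = 0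
  p_bcR : ∀ t ∈ Set.Icc (0 : ℝ) T, p t xR = 0
  m_poly : ∀ t ∈ Set.Icc (0 : ℝ) T, M.PiecewisePoly k (m t)
  m_cont : ∀ t ∈ Set.Icc (0 : ℝ) T, ContinuousOn (m t) (Set.Icc xL xR)
  dxp_spec : ∀ t ∈ Set.Icc (0 : ℝ) T, M.PiecewiseDeriv (p t) (dxp t)
  dxm_spec : ∀ t ∈ Set.Icc (0 : ℝ) T, M.PiecewiseDeriv (m t) (dxm t)
  dtp_spec : ∀ t ∈ Set.Icc (0 : ℝ) T, ∀ x,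
    HasDerivWithinAt (fun s => p s x) (dtp t x) (Set.Icc (0 : ℝ) T) t
  dtm_spec : ∀ t ∈ Set.Icc (0 : ℝ) T, ∀ x,
    HasDerivWithinAt (fun s => m s x) (dtm t x) (Set.Icc (0 : ℝ) T) t
  dtp_cont : ∀ x, ContinuousOn (fun t => dtp t x) (Set.Icc (0 : ℝ) T)
  dtm_cont : ∀ x, ContinuousOn (fun t => dtm t x) (Set.Icc (0 : ℝ) T)
  pim_spec : ∀ t ∈ Set.Icc (0 : ℝ) T, IsL2Proj M (k - 1) (m t) (pim t)
  eq1 : ∀ t ∈ Set.Icc (0 : ℝ) T, ∀ q : ℝ → ℝ, M.PiecewisePoly (k - 1) q →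
    inner2 xL xR (fun x => a * dtp t x) q + inner2 xL xR (dxm t) q =
      inner2 xL xR (f t) q
  eq2 : ∀ t ∈ Set.Icc (0 : ℝ) T, ∀ v : ℝ → ℝ, M.PiecewisePoly (k - 1) v →
    inner2 xL xR (fun x => b * dtm t x) v + inner2 xL xR (dxp t) v +
      inner2 xL xR (fun x => d x * pim t x) v = inner2 xL xR (g t) v

section helpers

open Polynomial

/-! ### The `L²` inner product on an interval -/

section L2
variable {α β : ℝ}

lemma inner2_comm (f g : ℝ → ℝ) : inner2 α β f g = inner2 α β g f := by
  simp only [inner2, mul_comm]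

lemma inner2_smul_left (c : ℝ) (f g : ℝ → ℝ) :
    inner2 α β (fun x => c * f x) g = c * inner2 α β f g := by
  simp only [inner2, mul_assoc, intervalIntegral.integral_const_mul]

lemma inner2_congr (hαβ : α < β) {f g f' g' : ℝ → ℝ} (hf : ∀ x ∈ Ioo α β, f x = f' x)
    (hg : ∀ x ∈ Ioo α β, g x = g' x) : inner2 α β f g = inner2 α β f' g' := by
  unfold inner2
  rw [intervalIntegral.integral_of_le hαβ.le, intervalIntegral.integral_of_le hαβ.le,
    integral_Ioc_eq_integral_Ioo, integral_Ioc_eq_integral_Ioo]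
  refine setIntegral_congr_fun measurableSet_Ioo fun x hx => ?_
  simp only [hf x hx, hg x hx]

lemma ii_mul (hαβ : α < β) {f g : ℝ → ℝ} (hf : ContinuousOn f (Icc α β))
    (hg : ContinuousOn g (Icc α β)) :
    IntervalIntegrable (fun x => f x * g x) volume α β :=
  (hf.mul hg).intervalIntegrable_of_Icc hαβ.le

lemma inner2_add_left (hαβ : α < β) {f g w : ℝ → ℝ} (hf : ContinuousOn f (Icc α β))
    (hg : ContinuousOn g (Icc α β)) (hw : ContinuousOn w (Icc α β)) :
    inner2 α β (fun x => f x + g x) w = inner2 α β f w + inner2 α β g w := by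
  unfold inner2
  rw [← intervalIntegral.integral_add (ii_mul hαβ hf hw) (ii_mul hαβ hg hw)]
  simp only [add_mul]

lemma inner2_sub_left (hαβ : α < β) {f g w : ℝ → ℝ} (hf : ContinuousOn f (Icc α β))
    (hg : ContinuousOn g (Icc α β)) (hw : ContinuousOn w (Icc α β)) :
    inner2 α β (fun x => f x - g x) w = inner2 α β f w - inner2 α β g w := by
  unfold inner2
  rw [← intervalIntegral.integral_sub (ii_mul hαβ hf hw) (ii_mul hαβ hg hw)]
  simp only [sub_mul]

lemma inner2_sub_right (hαβ : α < β) {f g w : ℝ → ℝ} (hf : ContinuousOn f (Icc α β))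
    (hg : ContinuousOn g (Icc α β)) (hw : ContinuousOn w (Icc α β)) :
    inner2 α β w (fun x => f x - g x) = inner2 α β w f - inner2 α β w g := by
  rw [inner2_comm, inner2_sub_left hαβ hf hg hw, inner2_comm f, inner2_comm g]

lemma inner2_self_nonneg (hαβ : α < β) (f : ℝ → ℝ) : 0 ≤ inner2 α β f f :=
  intervalIntegral.integral_nonneg hαβ.le fun _ _ => mul_self_nonneg _

lemma L2norm_nonneg (f : ℝ → ℝ) : 0 ≤ L2norm α β f := Real.sqrt_nonneg _

lemma L2norm_sq (hαβ : α < β) (f : ℝ → ℝ) : L2norm α β f ^ 2 = inner2 α β f f := by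
  have h : (∫ x in α..β, f x ^ 2) = inner2 α β f f := by simp only [inner2, sq]
  rw [L2norm, h, Real.sq_sqrt (inner2_self_nonneg hαβ f)]

/-- The Cauchy--Schwarz inequality, from the nonnegativity of `s ↦ ∫ (s f + g)²`. -/
lemma abs_inner2_le (hαβ : α < β) {f g : ℝ → ℝ} (hf : ContinuousOn f (Icc α β))
    (hg : ContinuousOn g (Icc α β)) : |inner2 α β f g| ≤ L2norm α β f * L2norm α β g := by
  have key : ∀ s : ℝ, 0 ≤ inner2 α β f f * (s * s) + 2 * inner2 α β f g * s + inner2 α β g g := by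
    intro s
    have hsf : ContinuousOn (fun x => s * f x) (Icc α β) := continuousOn_const.mul hf
    have hs : ContinuousOn (fun x => s * f x + g x) (Icc α β) := hsf.add hg
    have h := inner2_self_nonneg hαβ (fun x => s * f x + g x)
    rw [inner2_add_left hαβ hsf hg hs, inner2_smul_left, inner2_comm f, inner2_comm g,
      inner2_add_left hαβ hsf hg hf, inner2_add_left hαβ hsf hg hg, inner2_smul_left,
      inner2_smul_left, inner2_comm g f] at h
    linarith
  have hd := discrim_le_zero key
  unfold discrim at hd
  apply abs_le_of_sq_le_sq _ (mul_nonneg (L2norm_nonneg _) (L2norm_nonneg _))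
  rw [mul_pow, L2norm_sq hαβ, L2norm_sq hαβ]
  linarith

lemma inner2_self_le_of_sup (hαβ : α < β) {f : ℝ → ℝ} (hf : ContinuousOn f (Icc α β)) {K : ℝ}
    (hK : ∀ x ∈ Icc α β, |f x| ≤ K) : inner2 α β f f ≤ K ^ 2 * (β - α) := by
  have : inner2 α β f f ≤ ∫ _ in α..β, K ^ 2 := by
    refine intervalIntegral.integral_mono_on hαβ.le (ii_mul hαβ hf hf) (by simp) fun x hx => ?_
    have := hK x hx
    rw [← sq, ← sq_abs]
    gcongr
  simpa [mul_comm] using this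

lemma L2norm_le_of_sup (hαβ : α < β) {f : ℝ → ℝ} (hf : ContinuousOn f (Icc α β)) {K : ℝ}
    (hK : ∀ x ∈ Icc α β, |f x| ≤ K) : L2norm α β f ≤ K * √(β - α) := by
  have hK0 : 0 ≤ K := (abs_nonneg _).trans (hK α (left_mem_Icc.2 hαβ.le))
  apply le_of_sq_le_sq _ (by positivity)
  rw [L2norm_sq hαβ, mul_pow, Real.sq_sqrt (by linarith)]
  exact inner2_self_le_of_sup hαβ hf hK

lemma L2norm_add_le (hαβ : α < β) {f g : ℝ → ℝ} (hf : ContinuousOn f (Icc α β))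
    (hg : ContinuousOn g (Icc α β)) :
    L2norm α β (fun x => f x + g x) ≤ L2norm α β f + L2norm α β g := by
  apply le_of_sq_le_sq _ (add_nonneg (L2norm_nonneg _) (L2norm_nonneg _))
  have hfg : ContinuousOn (fun x => f x + g x) (Icc α β) := hf.add hg
  have h1 := abs_inner2_le hαβ hf hg
  have h2 := le_abs_self (inner2 α β f g)
  rw [add_sq, L2norm_sq hαβ, L2norm_sq hαβ, L2norm_sq hαβ, inner2_add_left hαβ hf hg hfg,
    inner2_comm f, inner2_comm g, inner2_add_left hαβ hf hg hf, inner2_add_left hαβ hf hg hg,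
    inner2_comm g f]
  linarith

end L2

/-! ### Polynomials on one element -/

/-- The polynomial function attached to a polynomial. -/
def pe (q : ℝ[X]) : ℝ → ℝ := fun x => q.eval x

lemma pe_cont (q : ℝ[X]) (s : Set ℝ) : ContinuousOn (pe q) s := q.continuous.continuousOn

/-- Pairing of a polynomial with a fixed function that is continuous on `[α, β]`,
as a linear functional. -/
def pairL (α β : ℝ) (hαβ : α < β) (w : ℝ → ℝ) (hw : ContinuousOn w (Icc α β)) : ℝ[X] →ₗ[ℝ] ℝ where
  toFun q := inner2 α β (pe q) w
  map_add' p q := by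
    rw [← inner2_add_left hαβ (pe_cont p _) (pe_cont q _) hw]
    congr 1; ext x; simp [pe]
  map_smul' c q := by
    rw [RingHom.id_apply, smul_eq_mul, ← inner2_smul_left]
    congr 1; ext x; simp [pe]

/-- An antiderivative of `q` vanishing at `α`. -/
lemma exists_antideriv (α : ℝ) (q : ℝ[X]) : ∃ Q : ℝ[X], derivative Q = q ∧ Q.eval α = 0 ∧
    ∀ k : ℕ, q.degree < k → Q.degree < (k + 1 : ℕ) := by
  let R : ℝ[X] := ∑ i ∈ q.support, monomial (i + 1) (q.coeff i / (i + 1))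
  have hR : derivative R = q := by
    conv_rhs => rw [q.as_sum_support]
    simp only [R, derivative_sum, derivative_monomial]
    refine Finset.sum_congr rfl fun i _ => ?_
    have : (i : ℝ) + 1 ≠ 0 := by positivity
    simp [div_mul_cancel₀ _ this]
  refine ⟨R - C (R.eval α), by simp [hR], by simp, fun k hk => ?_⟩
  rw [← mem_degreeLT]
  refine Submodule.sub_mem _ (Submodule.sum_mem _ fun i hi => ?_) ?_
  · rw [mem_degreeLT]
    refine (degree_monomial_le _ _).trans_lt ?_
    have := (le_degree_of_mem_supp i hi).trans_lt hk
    have : i < k := by exact_mod_cast this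
    exact_mod_cast Nat.succ_lt_succ this
  · rw [mem_degreeLT]
    exact degree_C_le.trans_lt (by exact_mod_cast Nat.succ_pos k)

lemma poly_eq_zero_of_inner2 {α β : ℝ} (hαβ : α < β) (q : ℝ[X])
    (h : inner2 α β (pe q) (pe q) = 0) : q = 0 := by
  have hz : ∀ x ∈ Ioo α β, q.eval x = 0 := by
    by_contra! hne
    obtain ⟨x, hx, hqx⟩ := hne
    have : 0 < inner2 α β (pe q) (pe q) := by
      refine intervalIntegral.integral_pos hαβ ((pe_cont q _).mul (pe_cont q _))
        (fun y _ => mul_self_nonneg _) ⟨x, Ioo_subset_Icc_self hx, ?_⟩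
      exact mul_self_pos.2 hqx
    exact this.ne' h
  exact eq_zero_of_infinite_isRoot q ((Ioo_infinite hαβ).mono fun x hx => hz x hx)

/-- An `L²(α, β)`-orthonormal basis of the polynomials of degree `< k`. -/
structure EltBasis (α β : ℝ) (k : ℕ) where
  dim : ℕ
  φ : Fin dim → ℝ[X]
  mem : ∀ j, φ j ∈ degreeLT ℝ k
  ortho : ∀ i j, inner2 α β (pe (φ i)) (pe (φ j)) = if i = j then 1 else 0
  repr : ∀ q ∈ degreeLT ℝ k, q = ∑ j, inner2 α β (pe q) (pe (φ j)) • φ j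

lemma exists_eltBasis {α β : ℝ} (hαβ : α < β) (k : ℕ) : Nonempty (EltBasis α β k) := by
  let cd : InnerProductSpace.Core ℝ (degreeLT ℝ k) :=
    { inner := fun p q => inner2 α β (pe p) (pe q)
      conj_inner_symm := fun p q => by simpa using inner2_comm _ _
      re_inner_nonneg := fun p => by simpa using inner2_self_nonneg hαβ _
      add_left := fun p q r => (pairL α β hαβ (pe r) (pe_cont _ _)).map_add p q
      smul_left := fun p q r => (pairL α β hαβ (pe q) (pe_cont _ _)).map_smul r p
      definite := fun p hp => Subtype.ext (poly_eq_zero_of_inner2 hαβ p hp) }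
  let : NormedAddCommGroup (degreeLT ℝ k) := cd.toNormedAddCommGroup
  let : InnerProductSpace ℝ (degreeLT ℝ k) := InnerProductSpace.ofCore cd.toCore
  have : FiniteDimensional ℝ (degreeLT ℝ k) :=
    Module.Finite.equiv (degreeLTEquiv ℝ k).symm
  let b := stdOrthonormalBasis ℝ (degreeLT ℝ k)
  refine ⟨⟨_, fun j => (b j : ℝ[X]), fun j => (b j).2, fun i j => ?_, fun q hq => ?_⟩⟩
  · exact (orthonormal_iff_ite.1 b.orthonormal) i j
  · have h := congrArg Subtype.val (b.sum_repr' ⟨q, hq⟩)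
    simp only [AddSubmonoidClass.coe_finsetSum, Submodule.coe_smul] at h
    conv_lhs => rw [← h]
    refine Finset.sum_congr rfl fun j _ => ?_
    congr 1
    exact inner2_comm _ _

namespace EltBasis
variable {α β : ℝ} {k : ℕ} (B : EltBasis α β k)

/-- The `L²(α, β)`-orthogonal projection onto polynomials of degree `< k`. -/
def proj (f : ℝ → ℝ) : ℝ[X] := ∑ j, inner2 α β f (pe (B.φ j)) • B.φ j

lemma proj_mem (f : ℝ → ℝ) : B.proj f ∈ degreeLT ℝ k :=
  Submodule.sum_mem _ fun j _ => Submodule.smul_mem _ _ (B.mem j)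

lemma proj_poly {q : ℝ[X]} (hq : q ∈ degreeLT ℝ k) : B.proj (pe q) = q := (B.repr q hq).symm

lemma inner2_proj_basis (hαβ : α < β) (f : ℝ → ℝ) (j : Fin B.dim) :
    inner2 α β (pe (B.proj f)) (pe (B.φ j)) = inner2 α β f (pe (B.φ j)) := by
  have h : inner2 α β (pe (B.proj f)) (pe (B.φ j)) =
      pairL α β hαβ (pe (B.φ j)) (pe_cont _ _) (B.proj f) := rfl
  rw [h, proj, map_sum]
  have : ∀ i, pairL α β hαβ (pe (B.φ j)) (pe_cont _ _) (B.φ i) = if i = j then 1 else 0 :=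
    fun i => B.ortho i j
  simp [map_smul, this]

lemma inner2_right_eq (hαβ : α < β) {f : ℝ → ℝ} (hf : ContinuousOn f (Icc α β)) {q : ℝ[X]}
    (hq : q ∈ degreeLT ℝ k) : inner2 α β f (pe q) =
      ∑ j, inner2 α β (pe q) (pe (B.φ j)) * inner2 α β f (pe (B.φ j)) := by
  have h : inner2 α β f (pe q) = pairL α β hαβ f hf q := inner2_comm _ _
  rw [h]
  conv_lhs => rw [B.repr q hq]
  rw [map_sum]
  refine Finset.sum_congr rfl fun j _ => ?_
  rw [map_smul, smul_eq_mul]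
  congr 1
  exact inner2_comm _ _

lemma inner2_proj (hαβ : α < β) {f : ℝ → ℝ} (hf : ContinuousOn f (Icc α β)) {q : ℝ[X]}
    (hq : q ∈ degreeLT ℝ k) : inner2 α β (pe (B.proj f)) (pe q) = inner2 α β f (pe q) := by
  rw [B.inner2_right_eq hαβ hf hq, B.inner2_right_eq hαβ (pe_cont _ _) hq]
  simp only [inner2_proj_basis B hαβ]

lemma inner2_proj_proj (hαβ : α < β) {f g : ℝ → ℝ} (hf : ContinuousOn f (Icc α β)) :
    inner2 α β f (pe (B.proj g)) =
      ∑ j, inner2 α β f (pe (B.φ j)) * inner2 α β g (pe (B.φ j)) := by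
  rw [B.inner2_right_eq hαβ hf (B.proj_mem g)]
  simp only [inner2_proj_basis B hαβ, mul_comm]

lemma proj_unique {f : ℝ → ℝ} {w : ℝ[X]} (hw : w ∈ degreeLT ℝ k)
    (h : ∀ q ∈ degreeLT ℝ k, inner2 α β (pe w) (pe q) = inner2 α β f (pe q)) : w = B.proj f := by
  rw [B.repr w hw, proj]
  exact Finset.sum_congr rfl fun j _ => by rw [h _ (B.mem j)]

lemma proj_sub (hαβ : α < β) {f g : ℝ → ℝ} (hf : ContinuousOn f (Icc α β))
    (hg : ContinuousOn g (Icc α β)) : B.proj (fun x => f x - g x) = B.proj f - B.proj g := by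
  simp only [proj, inner2_sub_left hαβ hf hg (pe_cont _ _), sub_smul, Finset.sum_sub_distrib]

lemma L2norm_proj_sq (hαβ : α < β) (f : ℝ → ℝ) :
    L2norm α β (pe (B.proj f)) ^ 2 = ∑ j, inner2 α β f (pe (B.φ j)) ^ 2 := by
  rw [L2norm_sq hαβ, B.inner2_proj_proj hαβ (pe_cont _ _)]
  simp only [inner2_proj_basis B hαβ, sq]

lemma L2norm_proj_le (hαβ : α < β) {f : ℝ → ℝ} (hf : ContinuousOn f (Icc α β)) :
    L2norm α β (pe (B.proj f)) ≤ L2norm α β f := by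
  have h1 := L2norm_sq hαβ (pe (B.proj f))
  rw [B.inner2_proj hαβ hf (B.proj_mem f)] at h1
  have h2 := (le_abs_self _).trans (abs_inner2_le hαβ hf (pe_cont (B.proj f) _))
  have h0 := L2norm_nonneg (α := α) (β := β) (pe (B.proj f))
  have h0' := L2norm_nonneg (α := α) (β := β) f
  by_contra! hlt
  nlinarith

/-- The projection is the best approximation. -/
lemma L2norm_sub_proj_le (hαβ : α < β) {f : ℝ → ℝ} (hf : ContinuousOn f (Icc α β)) {q : ℝ[X]}
    (hq : q ∈ degreeLT ℝ k) :
    L2norm α β (fun x => f x - pe (B.proj f) x) ≤ L2norm α β (fun x => f x - pe q x) := by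
  apply le_of_sq_le_sq _ (L2norm_nonneg _)
  set r := B.proj f with hr
  have hfr : ContinuousOn (fun x => f x - pe r x) (Icc α β) := hf.sub (pe_cont _ _)
  have hfq : ContinuousOn (fun x => f x - pe q x) (Icc α β) := hf.sub (pe_cont _ _)
  have e1 : inner2 α β (pe r) (pe q) = inner2 α β f (pe q) := B.inner2_proj hαβ hf hq
  have e2 : inner2 α β (pe r) (pe r) = inner2 α β f (pe r) :=
    B.inner2_proj hαβ hf (B.proj_mem f)
  have hrq : ContinuousOn (fun x => pe r x - pe q x) (Icc α β) := (pe_cont _ _).sub (pe_cont _ _)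
  -- `‖f - q‖² - ‖f - πf‖² = ‖πf - q‖²`
  have h0 := inner2_self_nonneg hαβ (fun x => pe r x - pe q x)
  rw [inner2_sub_left hαβ (pe_cont _ _) (pe_cont _ _) hrq,
    inner2_sub_right hαβ (pe_cont _ _) (pe_cont _ _) (pe_cont _ _),
    inner2_sub_right hαβ (pe_cont _ _) (pe_cont _ _) (pe_cont _ _), inner2_comm (pe q) (pe r),
    e1, e2] at h0
  rw [L2norm_sq hαβ, L2norm_sq hαβ, inner2_sub_left hαβ hf (pe_cont _ _) hfr,
    inner2_sub_left hαβ hf (pe_cont _ _) hfq, inner2_sub_right hαβ hf (pe_cont _ _) hf,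
    inner2_sub_right hαβ hf (pe_cont _ _) (pe_cont _ _),
    inner2_sub_right hαβ hf (pe_cont _ _) hf,
    inner2_sub_right hαβ hf (pe_cont _ _) (pe_cont _ _), inner2_comm (pe q) f,
    inner2_comm (pe r) f, e2]
  linarith

end EltBasis

/-- `|u(x) - u(y)| ≤ ‖u'‖_{L²(α,β)} √(β - α)`. -/
lemma abs_sub_le_L2norm_deriv {α β : ℝ} (hαβ : α < β) {u u' : ℝ → ℝ}
    (hu' : ContinuousOn u' (Icc α β))
    (hu : ∀ x ∈ Icc α β, HasDerivWithinAt u (u' x) (Icc α β) x) {x : ℝ} (hx : x ∈ Icc α β) :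
    |u x - u α| ≤ L2norm α β u' * √(β - α) := by
  have h1 : ∫ y in α..x, u' y = u x - u α := by
    refine integral_eq_sub_of_hasDerivAt_of_le hx.1
      (fun y hy => ((hu y ⟨hy.1, hy.2.trans hx.2⟩).continuousWithinAt.mono
        (Icc_subset_Icc_right hx.2))) (fun y hy => ?_) ?_
    · exact (hu y ⟨hy.1.le, hy.2.le.trans hx.2⟩).hasDerivAt
        (Icc_mem_nhds hy.1 (hy.2.trans_le hx.2))
    · exact (hu'.mono (Icc_subset_Icc_right hx.2)).intervalIntegrable_of_Icc hx.1
  have habs : ContinuousOn (fun y => |u' y|) (Icc α β) := hu'.abs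
  have h2 : |u x - u α| ≤ inner2 α β (fun y => |u' y|) (fun _ => 1) := by
    rw [← h1]
    refine (abs_integral_le_integral_abs hx.1).trans ?_
    simp only [inner2, mul_one]
    refine integral_mono_interval le_rfl hx.1 hx.2 ?_ (habs.intervalIntegrable_of_Icc hαβ.le)
    exact Filter.Eventually.of_forall fun y => abs_nonneg _
  refine h2.trans ((le_abs_self _).trans ((abs_inner2_le hαβ habs continuousOn_const).trans ?_))
  have h3 : L2norm α β (fun y => |u' y|) = L2norm α β u' := by simp [L2norm]
  have h4 : L2norm α β (fun _ => 1) = √(β - α) := by simp [L2norm]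
  rw [h3, h4]

/-- Polynomial approximation by Taylor expansion at the left end point. -/
lemma exists_taylor {α β : ℝ} (hαβ : α < β) (k : ℕ) : ∀ (w : ℕ → ℝ → ℝ) (K : ℝ),
    (∀ s < k, ∀ x ∈ Icc α β, HasDerivWithinAt (w s) (w (s + 1) x) (Icc α β) x) →
    (∀ x ∈ Icc α β, |w k x| ≤ K) →
    ∃ q ∈ degreeLT ℝ k, ∀ x ∈ Icc α β, |w 0 x - pe q x| ≤ K * (β - α) ^ k := by
  induction k with
  | zero => intro w K _ hK; exact ⟨0, Submodule.zero_mem _, fun x hx => by simpa [pe] using hK x hx⟩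
  | succ k ih =>
    intro w K hw hK
    obtain ⟨q, hq, hb⟩ := ih (fun s => w (s + 1)) K (fun s hs => hw (s + 1) (by omega)) hK
    obtain ⟨R, hR, hR0, hRd⟩ := exists_antideriv α q
    refine ⟨C (w 0 α) + R, Submodule.add_mem _ ?_ ?_, fun x hx => ?_⟩
    · rw [mem_degreeLT]
      exact degree_C_le.trans_lt (by exact_mod_cast Nat.succ_pos k)
    · exact mem_degreeLT.2 (hRd k (mem_degreeLT.1 hq))
    have hα : α ∈ Icc α β := left_mem_Icc.2 hαβ.le
    have hK0 : 0 ≤ K := (abs_nonneg _).trans (hK α hα)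
    have := Convex.norm_image_sub_le_of_norm_hasDerivWithin_le
      (f := fun y => w 0 y - pe (C (w 0 α) + R) y) (f' := fun y => w 1 y - pe q y)
      (s := Icc α β) (C := K * (β - α) ^ k) (fun y hy => ?_) (fun y hy => hb y hy)
      (convex_Icc _ _) hα hx
    · simp only [pe, eval_add, eval_C, hR0, add_zero, sub_self, sub_zero, Real.norm_eq_abs] at this ⊢
      refine this.trans ?_
      rw [pow_succ, ← mul_assoc]
      gcongr
      rw [abs_of_nonneg (by linarith [hx.1])]; linarith [hx.2]
    · refine (hw 0 (by omega) y hy).sub ?_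
      have h := (C (w 0 α) + R).hasDerivAt y
      simp only [derivative_add, derivative_C, zero_add, hR] at h
      exact h.hasDerivWithinAt

/-! ### Time-dependent functions -/

/-- Differentiation under the integral sign, one-sided at the ends of `[0, T]`. -/
lemma hasDerivWithinAt_inner2 {T α β : ℝ} (hαβ : α < β) {g g' : ℝ → ℝ → ℝ}
    (hg : ∀ t ∈ Icc (0 : ℝ) T, ContinuousOn (g t) (Icc α β))
    (hg' : ContinuousOn (fun z : ℝ × ℝ => g' z.1 z.2) (Icc (0 : ℝ) T ×ˢ Icc α β))
    (hd : ∀ t ∈ Icc (0 : ℝ) T, ∀ x ∈ Icc α β,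
      HasDerivWithinAt (fun s => g s x) (g' t x) (Icc (0 : ℝ) T) t)
    {w : ℝ → ℝ} (hw : ContinuousOn w (Icc α β)) {t : ℝ} (ht : t ∈ Icc (0 : ℝ) T) :
    HasDerivWithinAt (fun s => inner2 α β (g s) w) (inner2 α β (g' t) w) (Icc (0 : ℝ) T) t := by
  obtain ⟨K, hK⟩ := (isCompact_Icc.prod isCompact_Icc).exists_bound_of_continuousOn hg'
  obtain ⟨W, hW⟩ := isCompact_Icc.exists_bound_of_continuousOn hw
  rw [hasDerivWithinAt_iff_tendsto_slope]
  have hmem : ∀ᶠ s in nhdsWithin t (Icc (0 : ℝ) T \ {t}), s ∈ Icc (0 : ℝ) T \ {t} :=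
    self_mem_nhdsWithin
  have hsub : uIoc α β ⊆ Icc α β := by rw [uIoc_of_le hαβ.le]; exact Ioc_subset_Icc_self
  -- the difference quotients are dominated by `K * W`, by the mean value inequality
  have key : Filter.Tendsto (fun s => ∫ x in α..β, slope (fun τ => g τ x) t s * w x)
      (nhdsWithin t (Icc (0 : ℝ) T \ {t})) (nhds (∫ x in α..β, g' t x * w x)) := by
    refine intervalIntegral.tendsto_integral_filter_of_dominated_convergence (fun _ => K * W)
      ?_ ?_ (by simp) ?_
    · filter_upwards [hmem] with s hs
      have : ContinuousOn (fun x => slope (fun τ => g τ x) t s * w x) (Icc α β) := by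
        simp only [slope_def_field]
        exact (((hg s hs.1).sub (hg t ht)).div_const _).mul hw
      exact (this.mono hsub).aestronglyMeasurable measurableSet_uIoc
    · filter_upwards [hmem] with s hs
      refine Filter.Eventually.of_forall fun x hx => ?_
      have hx' := hsub hx
      have h1 := Convex.norm_image_sub_le_of_norm_hasDerivWithin_le (f := fun τ => g τ x)
        (f' := fun τ => g' τ x) (s := Icc (0 : ℝ) T) (C := K)
        (fun τ hτ => hd τ hτ x hx') (fun τ hτ => hK (τ, x) ⟨hτ, hx'⟩) (convex_Icc _ _) ht hs.1
      have h2 : 0 < ‖s - t‖ := norm_pos_iff.2 (sub_ne_zero.2 hs.2)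
      have h3 : ‖slope (fun τ => g τ x) t s‖ ≤ K := by
        rw [slope_def_field, norm_div, div_le_iff₀ h2]; exact h1
      rw [norm_mul]
      exact mul_le_mul h3 (hW x hx') (norm_nonneg _) ((norm_nonneg _).trans h3)
    · refine Filter.Eventually.of_forall fun x hx => ?_
      have := hd t ht x (hsub hx)
      rw [hasDerivWithinAt_iff_tendsto_slope] at this
      exact this.mul_const _
  refine key.congr' ?_
  filter_upwards [hmem] with s hs
  rw [slope_def_field]
  simp only [slope_def_field, inner2]
  rw [← intervalIntegral.integral_sub (ii_mul hαβ (hg s hs.1) hw) (ii_mul hαβ (hg t ht) hw),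
    ← intervalIntegral.integral_div]
  congr 1; ext x; ring

/-- `e'` is the time derivative on `[0, T]` of the polynomial-valued curve `e`, expressed through
all linear functionals. -/
def PolyDeriv (T : ℝ) (e e' : ℝ → ℝ[X]) : Prop :=
  ∀ t ∈ Icc (0 : ℝ) T, ∀ ℓ : ℝ[X] →ₗ[ℝ] ℝ,
    HasDerivWithinAt (fun s => ℓ (e s)) (ℓ (e' t)) (Icc (0 : ℝ) T) t

lemma PolyDeriv.sub {T : ℝ} {e e' f f' : ℝ → ℝ[X]} (he : PolyDeriv T e e')
    (hf : PolyDeriv T f f') : PolyDeriv T (fun t => e t - f t) (fun t => e' t - f' t) := by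
  intro t ht ℓ
  simp only [map_sub]
  exact (he t ht ℓ).sub (hf t ht ℓ)

lemma PolyDeriv.add {T : ℝ} {e e' f f' : ℝ → ℝ[X]} (he : PolyDeriv T e e')
    (hf : PolyDeriv T f f') : PolyDeriv T (fun t => e t + f t) (fun t => e' t + f' t) := by
  intro t ht ℓ
  simp only [map_add]
  exact (he t ht ℓ).add (hf t ht ℓ)

lemma PolyDeriv.sum_smul {T : ℝ} {n : ℕ} {c c' : Fin n → ℝ → ℝ} {ψ : Fin n → ℝ[X]}
    (hc : ∀ j, ∀ t ∈ Icc (0 : ℝ) T, HasDerivWithinAt (c j) (c' j t) (Icc (0 : ℝ) T) t) :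
    PolyDeriv T (fun t => ∑ j, c j t • ψ j) (fun t => ∑ j, c' j t • ψ j) := by
  intro t ht ℓ
  simp only [map_sum, map_smul, smul_eq_mul]
  exact HasDerivWithinAt.fun_sum fun j _ => (hc j t ht).mul_const _

lemma PolyDeriv.const_smul {T : ℝ} {c c' : ℝ → ℝ} {ψ : ℝ[X]}
    (hc : ∀ t ∈ Icc (0 : ℝ) T, HasDerivWithinAt c (c' t) (Icc (0 : ℝ) T) t) :
    PolyDeriv T (fun t => c t • ψ) (fun t => c' t • ψ) := by
  intro t ht ℓ
  simp only [map_smul, smul_eq_mul]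
  exact (hc t ht).mul_const _

/-- Moments of a differentiable polynomial curve are differentiable. -/
lemma PolyDeriv.inner2 {T α β : ℝ} (hαβ : α < β) {e e' : ℝ → ℝ[X]} (he : PolyDeriv T e e')
    {w : ℝ → ℝ} (hw : ContinuousOn w (Icc α β)) {t : ℝ} (ht : t ∈ Icc (0 : ℝ) T) :
    HasDerivWithinAt (fun s => inner2 α β (pe (e s)) w) (inner2 α β (pe (e' t)) w)
      (Icc (0 : ℝ) T) t := he t ht (pairL α β hαβ w hw)

lemma PolyDeriv.derivative {T : ℝ} {e e' : ℝ → ℝ[X]} (he : PolyDeriv T e e') :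
    PolyDeriv T (fun t => derivative (e t)) (fun t => derivative (e' t)) :=
  fun t ht ℓ => he t ht (ℓ.comp Polynomial.derivative)

namespace EltBasis
variable {α β : ℝ} {k : ℕ} (B : EltBasis α β k)

/-- The projection as a linear map on polynomials. -/
def projL (hαβ : α < β) : ℝ[X] →ₗ[ℝ] ℝ[X] :=
  ∑ j, (pairL α β hαβ (pe (B.φ j)) (pe_cont _ _)).smulRight (B.φ j)

lemma projL_apply (hαβ : α < β) (q : ℝ[X]) : B.projL hαβ q = B.proj (pe q) := by
  simp [projL, proj, pairL]

lemma polyDeriv_proj (hαβ : α < β) {T : ℝ} {e e' : ℝ → ℝ[X]} (he : PolyDeriv T e e') :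
    PolyDeriv T (fun t => B.proj (pe (e t))) (fun t => B.proj (pe (e' t))) := by
  intro t ht ℓ
  simp only [← projL_apply B hαβ]
  exact he t ht (ℓ.comp (B.projL hαβ))

/-- The interpolant on one element: the polynomial with the value of `v` at `α` whose derivative
is the projection of `v'`. -/
def interp (v v' : ℝ → ℝ) : ℝ[X] :=
  C (v α) + ∑ j, inner2 α β v' (pe (B.φ j)) • (exists_antideriv α (B.φ j)).choose

lemma derivative_interp (v v' : ℝ → ℝ) : derivative (B.interp v v') = B.proj v' := by
  simp only [interp, proj, derivative_add, derivative_C, zero_add, derivative_sum, derivative_smul,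
    (exists_antideriv α (B.φ _)).choose_spec.1]

lemma eval_interp_left (v v' : ℝ → ℝ) : (B.interp v v').eval α = v α := by
  have h : ∀ j, (exists_antideriv α (B.φ j)).choose.eval α = 0 :=
    fun j => (exists_antideriv α (B.φ j)).choose_spec.2.1
  simp only [interp, eval_add, eval_C, eval_finsetSum, eval_smul, h, smul_zero,
    Finset.sum_const_zero, add_zero]

lemma interp_mem (v v' : ℝ → ℝ) : B.interp v v' ∈ degreeLT ℝ (k + 1) := by
  refine Submodule.add_mem _ ?_ (Submodule.sum_mem _ fun j _ => Submodule.smul_mem _ _ ?_)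
  · rw [mem_degreeLT]
    exact degree_C_le.trans_lt (by exact_mod_cast Nat.succ_pos k)
  · rw [mem_degreeLT]
    exact (exists_antideriv α (B.φ _)).choose_spec.2.2 k (mem_degreeLT.1 (B.mem j))

lemma integral_deriv_eq (hαβ : α < β) {u u' : ℝ → ℝ} (hu' : ContinuousOn u' (Icc α β))
    (hu : ∀ x ∈ Icc α β, HasDerivWithinAt u (u' x) (Icc α β) x) :
    ∫ y in α..β, u' y = u β - u α :=
  integral_eq_sub_of_hasDerivAt_of_le hαβ.le (fun y hy => (hu y hy).continuousWithinAt)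
    (fun y hy => (hu y (Ioo_subset_Icc_self hy)).hasDerivAt (Icc_mem_nhds hy.1 hy.2))
    (hu'.intervalIntegrable_of_Icc hαβ.le)

lemma pe_hasDeriv (q : ℝ[X]) (s : Set ℝ) (x : ℝ) :
    HasDerivWithinAt (pe q) (pe (derivative q) x) s x := (q.hasDerivAt x).hasDerivWithinAt

/-- Constants have degree `< k`, so the interpolant also matches `v` at the right end point. -/
lemma eval_interp_right (hαβ : α < β) (hk : 1 ≤ k) {v v' : ℝ → ℝ}
    (hv' : ContinuousOn v' (Icc α β))
    (hv : ∀ x ∈ Icc α β, HasDerivWithinAt v (v' x) (Icc α β) x) :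
    (B.interp v v').eval β = v β := by
  have h1 := integral_deriv_eq hαβ hv' hv
  have h2 := integral_deriv_eq hαβ (pe_cont (derivative (B.interp v v')) _)
    (fun x _ => pe_hasDeriv (B.interp v v') _ x)
  have hone : (1 : ℝ[X]) ∈ degreeLT ℝ k := by
    rw [mem_degreeLT, degree_one]; exact_mod_cast hk
  have h3 := B.inner2_proj hαβ hv' hone
  rw [derivative_interp] at h2
  simp only [inner2, pe, eval_one, mul_one] at h3 h2
  rw [eval_interp_left] at h2
  linarith

lemma polyDeriv_interp (hαβ : α < β) {T : ℝ} {v vx w wx : ℝ → ℝ → ℝ}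
    (hvx : ∀ t ∈ Icc (0 : ℝ) T, ContinuousOn (vx t) (Icc α β))
    (hwx : ContinuousOn (fun z : ℝ × ℝ => wx z.1 z.2) (Icc (0 : ℝ) T ×ˢ Icc α β))
    (hd : ∀ t ∈ Icc (0 : ℝ) T, HasDerivWithinAt (fun s => v s α) (w t α) (Icc (0 : ℝ) T) t)
    (hdx : ∀ t ∈ Icc (0 : ℝ) T, ∀ x ∈ Icc α β,
      HasDerivWithinAt (fun s => vx s x) (wx t x) (Icc (0 : ℝ) T) t) :
    PolyDeriv T (fun t => B.interp (v t) (vx t)) (fun t => B.interp (w t) (wx t)) := by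
  refine PolyDeriv.add ?_ (PolyDeriv.sum_smul fun j t ht =>
    hasDerivWithinAt_inner2 hαβ hvx hwx hdx (pe_cont _ _) ht)
  have hC : ∀ c : ℝ, C c = c • (1 : ℝ[X]) := fun c => by rw [smul_eq_C_mul, mul_one]
  simp only [hC]
  exact PolyDeriv.const_smul hd

/-- Interpolation error in the maximum norm. -/
lemma abs_sub_interp_le (hαβ : α < β) {w : ℕ → ℝ → ℝ} {K : ℝ}
    (hw : ∀ s < k + 1, ∀ x ∈ Icc α β, HasDerivWithinAt (w s) (w (s + 1) x) (Icc α β) x)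
    (hc : ContinuousOn (w 1) (Icc α β))
    (hK : ∀ x ∈ Icc α β, |w (k + 1) x| ≤ K) {x : ℝ} (hx : x ∈ Icc α β) :
    |w 0 x - pe (B.interp (w 0) (w 1)) x| ≤ K * (β - α) ^ (k + 1) := by
  obtain ⟨q, hq, hb⟩ := exists_taylor hαβ k (fun s => w (s + 1)) K
    (fun s hs => hw (s + 1) (by omega)) hK
  have hr : ContinuousOn (fun x => w 1 x - pe (B.proj (w 1)) x) (Icc α β) :=
    hc.sub (pe_cont _ _)
  have h1 := abs_sub_le_L2norm_deriv hαβ (u := fun x => w 0 x - pe (B.interp (w 0) (w 1)) x)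
    hr (fun y hy => by
      have := (hw 0 (by omega) y hy).sub (pe_hasDeriv (B.interp (w 0) (w 1)) (Icc α β) y)
      rwa [derivative_interp] at this) hx
  have h2 : pe (B.interp (w 0) (w 1)) α = w 0 α := B.eval_interp_left _ _
  simp only [h2, sub_self, sub_zero] at h1
  have h3 := B.L2norm_sub_proj_le hαβ hc hq
  have hcq : ContinuousOn (fun x => w 1 x - pe q x) (Icc α β) := hc.sub (pe_cont _ _)
  have h4 := L2norm_le_of_sup hαβ hcq hb
  calc _ ≤ _ := h1
    _ ≤ (K * (β - α) ^ k * √(β - α)) * √(β - α) := by gcongr; exact h3.trans h4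
    _ = K * (β - α) ^ (k + 1) := by
      rw [mul_assoc, Real.mul_self_sqrt (by linarith)]; ring

/-- Projection error in `L²`. -/
lemma L2norm_sub_proj_le_pow (hαβ : α < β) {w : ℕ → ℝ → ℝ} {K : ℝ}
    (hw : ∀ s < k, ∀ x ∈ Icc α β, HasDerivWithinAt (w s) (w (s + 1) x) (Icc α β) x)
    (hc : ContinuousOn (w 0) (Icc α β))
    (hK : ∀ x ∈ Icc α β, |w k x| ≤ K) :
    L2norm α β (fun x => w 0 x - pe (B.proj (w 0)) x) ≤ K * (β - α) ^ k * √(β - α) := by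
  obtain ⟨q, hq, hb⟩ := exists_taylor hαβ k w K hw hK
  have hcq : ContinuousOn (fun x => w 0 x - pe q x) (Icc α β) := hc.sub (pe_cont _ _)
  exact (B.L2norm_sub_proj_le hαβ hc hq).trans (L2norm_le_of_sup hαβ hcq hb)

/-- The interpolant is characterised by its left end point value and its derivative. -/
lemma eq_interp {v v' : ℝ → ℝ} {u : ℝ[X]} (hu : derivative u ∈ degreeLT ℝ k)
    (h0 : u.eval α = v α)
    (h : ∀ q ∈ degreeLT ℝ k, inner2 α β (pe (derivative u)) (pe q) = inner2 α β v' (pe q)) :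
    u = B.interp v v' := by
  have hd : derivative (u - B.interp v v') = 0 := by
    rw [derivative_sub, derivative_interp, B.proj_unique hu h, sub_self]
  have hc := eq_C_of_derivative_eq_zero hd
  have h1 : (u - B.interp v v').eval α = 0 := by rw [eval_sub, h0, eval_interp_left, sub_self]
  rw [hc, eval_C] at h1
  rw [h1, C_0] at hc
  exact sub_eq_zero.1 hc

/-- An approximation property: the part of a polynomial not seen by the projection is controlled
by its derivative. -/
lemma inner2_self_le (hαβ : α < β) (hk : 1 ≤ k) (e : ℝ[X]) :
    inner2 α β (pe e) (pe e) ≤ 2 * L2norm α β (pe (B.proj (pe e))) ^ 2 +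
      2 * (β - α) ^ 2 * L2norm α β (pe (derivative e)) ^ 2 := by
  have hone : C (e.eval α) ∈ degreeLT ℝ k := by
    rw [mem_degreeLT]
    exact degree_C_le.trans_lt (by exact_mod_cast hk)
  have h1 := B.L2norm_sub_proj_le hαβ (pe_cont e _) hone
  have h2 : L2norm α β (fun x => pe e x - pe (C (e.eval α)) x) ≤
      (L2norm α β (pe (derivative e)) * √(β - α)) * √(β - α) := by
    refine L2norm_le_of_sup hαβ ((pe_cont _ _).sub (pe_cont _ _)) fun x hx => ?_
    have := abs_sub_le_L2norm_deriv hαβ (pe_cont (derivative e) _)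
      (fun x _ => pe_hasDeriv e _ x) hx
    simpa [pe] using this
  rw [mul_assoc, Real.mul_self_sqrt (by linarith)] at h2
  have hsub : ContinuousOn (fun x => pe e x - pe (B.proj (pe e)) x) (Icc α β) :=
    (pe_cont _ _).sub (pe_cont _ _)
  have h3 := L2norm_add_le hαβ (pe_cont (B.proj (pe e)) (Icc α β)) hsub
  simp only [add_sub_cancel] at h3
  rw [← L2norm_sq hαβ]
  have h4 : L2norm α β (pe e) ≤ L2norm α β (pe (B.proj (pe e))) +
      L2norm α β (pe (derivative e)) * (β - α) := by
    refine h3.trans ?_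
    gcongr
    exact h1.trans h2
  have h5 := L2norm_nonneg (α := α) (β := β) (pe e)
  calc _ ≤ (L2norm α β (pe (B.proj (pe e))) + L2norm α β (pe (derivative e)) * (β - α)) ^ 2 := by
        gcongr
    _ ≤ _ := by
        nlinarith [sq_nonneg (L2norm α β (pe (B.proj (pe e))) -
          L2norm α β (pe (derivative e)) * (β - α))]

end EltBasis

/-! ### The discrete energy estimate -/

/-- Gronwall's inequality for a function that is differentiable on `[0, T]`. -/
lemma gronwall_Icc {T A D : ℝ} (hA : 0 ≤ A) (hD : 0 ≤ D) {E E' : ℝ → ℝ}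
    (hE : ∀ t ∈ Icc (0 : ℝ) T, HasDerivWithinAt E (E' t) (Icc (0 : ℝ) T) t)
    (h : ∀ t ∈ Icc (0 : ℝ) T, E' t ≤ A * E t + D) (h0 : 0 ≤ E 0) {t : ℝ}
    (ht : t ∈ Icc (0 : ℝ) T) : E t ≤ (E 0 + D * T) * Real.exp (A * T) := by
  -- `t ↦ E t * exp (-A t) - D t` is nonincreasing
  have hder : ∀ s ∈ Icc (0 : ℝ) T, HasDerivWithinAt (fun s => E s * Real.exp (-A * s) - D * s)
      ((E' s - A * E s) * Real.exp (-A * s) - D) (Icc (0 : ℝ) T) s := by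
    intro s hs
    have h1 : HasDerivAt (fun s => Real.exp (-A * s)) (Real.exp (-A * s) * (-A * 1)) s :=
      ((hasDerivAt_id s).const_mul (-A)).exp
    have h2 : HasDerivAt (fun s => D * s) (D * 1) s := (hasDerivAt_id s).const_mul D
    exact (((hE s hs).fun_mul h1.hasDerivWithinAt).fun_sub h2.hasDerivWithinAt).congr_deriv
      (by ring)
  have hanti : AntitoneOn (fun s => E s * Real.exp (-A * s) - D * s) (Icc (0 : ℝ) T) := by
    refine antitoneOn_of_hasDerivWithinAt_nonpos (convex_Icc _ _)
      (f' := fun s => (E' s - A * E s) * Real.exp (-A * s) - D)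
      (fun s hs => (hder s hs).continuousWithinAt)
      (fun s hs => (hder s (interior_subset hs)).mono interior_subset) (fun s hs => ?_)
    have hs' := interior_subset hs
    have h1 : E' s - A * E s ≤ D := by linarith [h s hs']
    have h2 : Real.exp (-A * s) ≤ 1 := Real.exp_le_one_iff.2 (by nlinarith [hs'.1])
    have h3 := Real.exp_pos (-A * s)
    nlinarith
  have hT : 0 ≤ T := ht.1.trans ht.2
  have := hanti (left_mem_Icc.2 hT) ht ht.1
  simp only [mul_zero, Real.exp_zero, mul_one, sub_zero] at this
  have h1 : E t * Real.exp (-A * t) ≤ E 0 + D * T := by nlinarith [ht.2]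
  have h2 : E t = E t * Real.exp (-A * t) * Real.exp (A * t) := by
    rw [mul_assoc, ← Real.exp_add]; simp
  rw [h2]
  have h3 : Real.exp (A * t) ≤ Real.exp (A * T) :=
    Real.exp_le_exp.2 (mul_le_mul_of_nonneg_left ht.2 hA)
  have h4 : 0 ≤ E 0 + D * T := by positivity
  exact mul_le_mul h1 h3 (Real.exp_pos _).le h4

/-- On one element, `(u, w)` is a curve of polynomials with time derivative `(u₁, w₁)` that
satisfies the homogeneous Petrov--Galerkin equations up to a residual of size `δ` in `L²`. -/
structure EltSys (T a b : ℝ) (d : ℝ → ℝ) {α β : ℝ} {k : ℕ} (B : EltBasis α β k) (δ : ℝ)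
    (u u₁ w w₁ : ℝ → ℝ[X]) : Prop where
  du : PolyDeriv T u u₁
  dw : PolyDeriv T w w₁
  u_mem : ∀ t ∈ Icc (0 : ℝ) T, derivative (u t) ∈ degreeLT ℝ k
  w_mem : ∀ t ∈ Icc (0 : ℝ) T, derivative (w t) ∈ degreeLT ℝ k
  eq1 : ∀ t ∈ Icc (0 : ℝ) T, ∀ q ∈ degreeLT ℝ k,
    |a * inner2 α β (pe (u₁ t)) (pe q) + inner2 α β (pe (derivative (w t))) (pe q)| ≤
      δ * L2norm α β (pe q)
  eq2 : ∀ t ∈ Icc (0 : ℝ) T, ∀ q ∈ degreeLT ℝ k,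
    |b * inner2 α β (pe (w₁ t)) (pe q) + inner2 α β (pe (derivative (u t))) (pe q) +
      inner2 α β (fun x => d x * pe (B.proj (pe (w t))) x) (pe q)| ≤ δ * L2norm α β (pe q)

/-- The energy balance on one element: testing with the projected errors leaves only the boundary
terms and the residuals. -/
lemma EltSys.energy_le {T a b : ℝ} {d : ℝ → ℝ} {α β : ℝ} (hαβ : α < β) {k : ℕ}
    {B : EltBasis α β k} {δ : ℝ} {u u₁ w w₁ : ℝ → ℝ[X]} (S : EltSys T a b d B δ u u₁ w w₁)
    (hd : ∀ x ∈ Icc α β, 0 ≤ d x) {t : ℝ} (ht : t ∈ Icc (0 : ℝ) T) :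
    a * inner2 α β (pe (u₁ t)) (pe (B.proj (pe (u t)))) +
      b * inner2 α β (pe (w₁ t)) (pe (B.proj (pe (w t)))) ≤
    -((u t).eval β * (w t).eval β - (u t).eval α * (w t).eval α) +
      δ * (L2norm α β (pe (B.proj (pe (u t)))) + L2norm α β (pe (B.proj (pe (w t))))) := by
  have h1 := (le_abs_self _).trans (S.eq1 t ht _ (B.proj_mem (pe (u t))))
  have h2 := (le_abs_self _).trans (S.eq2 t ht _ (B.proj_mem (pe (w t))))
  rw [inner2_comm (pe (derivative (w t))), B.inner2_proj hαβ (pe_cont _ _) (S.w_mem t ht)] at h1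
  rw [inner2_comm (pe (derivative (u t))), B.inner2_proj hαβ (pe_cont _ _) (S.u_mem t ht)] at h2
  have h3 : 0 ≤ inner2 α β (fun x => d x * pe (B.proj (pe (w t))) x) (pe (B.proj (pe (w t)))) := by
    refine intervalIntegral.integral_nonneg hαβ.le fun x hx => ?_
    rw [mul_assoc]
    exact mul_nonneg (hd x hx) (mul_self_nonneg _)
  have h4 := EltBasis.integral_deriv_eq hαβ (pe_cont (derivative (u t * w t)) _)
    (fun x _ => EltBasis.pe_hasDeriv (u t * w t) _ x)
  have h5 : (∫ y in α..β, pe (derivative (u t * w t)) y) =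
      inner2 α β (pe (u t)) (pe (derivative (w t))) +
        inner2 α β (pe (w t)) (pe (derivative (u t))) := by
    unfold inner2
    rw [← intervalIntegral.integral_add (ii_mul hαβ (pe_cont _ _) (pe_cont _ _))
      (ii_mul hαβ (pe_cont _ _) (pe_cont _ _))]
    congr 1; ext x; simp [pe, derivative_mul]; ring
  rw [h5] at h4
  simp only [pe, eval_mul] at h4
  simp only [pe] at h1 h2 h3 ⊢
  linarith

/-- The energy `∑ₙ a ‖π uₙ‖² + b ‖π wₙ‖²`. -/
def energy {N : ℕ} {x : ℕ → ℝ} {k : ℕ} (a b : ℝ)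
    (B : ∀ n : Fin N, EltBasis (x n) (x (n + 1)) k) (u w : Fin N → ℝ → ℝ[X]) (t : ℝ) : ℝ :=
  ∑ n : Fin N, (a * L2norm (x n) (x (n + 1)) (pe ((B n).proj (pe (u n t)))) ^ 2 +
    b * L2norm (x n) (x (n + 1)) (pe ((B n).proj (pe (w n t)))) ^ 2)

lemma energy_nonneg {N : ℕ} {x : ℕ → ℝ} {k : ℕ} {a b : ℝ} (ha : 0 < a) (hb : 0 < b)
    (B : ∀ n : Fin N, EltBasis (x n) (x (n + 1)) k) (u w : Fin N → ℝ → ℝ[X]) (t : ℝ) :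
    0 ≤ energy a b B u w t := Finset.sum_nonneg fun n _ => by positivity

/-- Energy estimate: the boundary terms telescope, since neighbouring polynomials share their
values at the mesh points and `u` vanishes at both ends of the domain. -/
lemma energy_estimate {N : ℕ} {x : ℕ → ℝ} (hx : ∀ n < N, x n < x (n + 1)) {k : ℕ} {T a b : ℝ}
    (ha : 0 < a) (hb : 0 < b) {d : ℝ → ℝ} (hd : ∀ n < N, ∀ y ∈ Icc (x n) (x (n + 1)), 0 ≤ d y)
    {B : ∀ n : Fin N, EltBasis (x n) (x (n + 1)) k} {δ : Fin N → ℝ}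
    {u u₁ w w₁ : Fin N → ℝ → ℝ[X]}
    (S : ∀ n, EltSys T a b d (B n) (δ n) (u n) (u₁ n) (w n) (w₁ n))
    {bu bw : ℕ → ℝ → ℝ}
    (hul : ∀ n : Fin N, ∀ t ∈ Icc (0 : ℝ) T, (u n t).eval (x n) = bu n t)
    (hur : ∀ n : Fin N, ∀ t ∈ Icc (0 : ℝ) T, (u n t).eval (x (n + 1)) = bu (n + 1) t)
    (hwl : ∀ n : Fin N, ∀ t ∈ Icc (0 : ℝ) T, (w n t).eval (x n) = bw n t)
    (hwr : ∀ n : Fin N, ∀ t ∈ Icc (0 : ℝ) T, (w n t).eval (x (n + 1)) = bw (n + 1) t)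
    (h0 : ∀ t ∈ Icc (0 : ℝ) T, bu 0 t = 0) (hN : ∀ t ∈ Icc (0 : ℝ) T, bu N t = 0)
    {t : ℝ} (ht : t ∈ Icc (0 : ℝ) T) :
    energy a b B u w t ≤ (energy a b B u w 0 + 2 * (∑ n, δ n ^ 2) * T) *
      Real.exp ((1 / a + 1 / b) * T) := by
  have hlt : ∀ n : Fin N, x n < x (n + 1) := fun n => hx n n.2
  refine gronwall_Icc (E' := fun t => ∑ n : Fin N,
    (2 * (a * inner2 (x n) (x (n + 1)) (pe (u₁ n t)) (pe ((B n).proj (pe (u n t)))) +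
      b * inner2 (x n) (x (n + 1)) (pe (w₁ n t)) (pe ((B n).proj (pe (w n t)))))))
    (by positivity) (by positivity) (fun t ht => ?_) (fun t ht => ?_)
    (energy_nonneg ha hb B u w 0) ht
  · have aux : ∀ (n : Fin N) {v v₁ : ℝ → ℝ[X]}, PolyDeriv T v v₁ →
        HasDerivWithinAt (fun t => L2norm (x n) (x (n + 1)) (pe ((B n).proj (pe (v t)))) ^ 2)
          (2 * inner2 (x n) (x (n + 1)) (pe (v₁ t)) (pe ((B n).proj (pe (v t)))))
          (Icc (0 : ℝ) T) t := by
      intro n v v₁ hv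
      simp only [(B n).L2norm_proj_sq (hlt n), (B n).inner2_proj_proj (hlt n) (pe_cont _ _),
        Finset.mul_sum]
      refine HasDerivWithinAt.fun_sum fun j _ => ?_
      exact ((hv.inner2 (hlt n) (pe_cont ((B n).φ j) _) ht).fun_pow 2).congr_deriv
        (by push_cast; ring)
    refine HasDerivWithinAt.fun_sum fun n _ => ?_
    exact (((aux n (S n).du).const_mul a).fun_add ((aux n (S n).dw).const_mul b)).congr_deriv
      (by ring)
  · have hloc := fun n : Fin N => (S n).energy_le (hlt n) (hd n n.2) ht
    have htel : ∑ n : Fin N, (bu (n + 1) t * bw (n + 1) t - bu n t * bw n t) = 0 := by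
      rw [Fin.sum_univ_eq_sum_range (fun n => bu (n + 1) t * bw (n + 1) t - bu n t * bw n t),
        Finset.sum_range_sub (fun n => bu n t * bw n t), h0 t ht, hN t ht]
      simp
    calc _ ≤ ∑ n : Fin N, ((-2) * (bu (n + 1) t * bw (n + 1) t - bu n t * bw n t) +
          ((1 / a + 1 / b) * (a * L2norm (x n) (x (n + 1)) (pe ((B n).proj (pe (u n t)))) ^ 2 +
            b * L2norm (x n) (x (n + 1)) (pe ((B n).proj (pe (w n t)))) ^ 2) + 2 * δ n ^ 2)) := by
          refine Finset.sum_le_sum fun n _ => ?_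
          have h := hloc n
          rw [hul n t ht, hur n t ht, hwl n t ht, hwr n t ht] at h
          set U := L2norm (x n) (x (n + 1)) (pe ((B n).proj (pe (u n t))))
          set W := L2norm (x n) (x (n + 1)) (pe ((B n).proj (pe (w n t))))
          have e : (1 / a + 1 / b) * (a * U ^ 2 + b * W ^ 2) =
              U ^ 2 + W ^ 2 + (a / b * U ^ 2 + b / a * W ^ 2) := by field_simp; ring
          have e' : 0 ≤ a / b * U ^ 2 + b / a * W ^ 2 := by positivity
          rw [e]
          nlinarith [sq_nonneg (U - δ n), sq_nonneg (W - δ n)]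
      _ = _ := by
          rw [Finset.sum_add_distrib, ← Finset.mul_sum, htel, Finset.sum_add_distrib,
            ← Finset.mul_sum, ← Finset.mul_sum, energy]
          ring

/-- At a time where the errors vanish, their projected time derivatives are residual-sized. -/
lemma EltSys.initial_le {T a b : ℝ} (ha : 0 < a) (hb : 0 < b) {d : ℝ → ℝ} {α β : ℝ}
    (hαβ : α < β) {k : ℕ}
    {B : EltBasis α β k} {δ : ℝ} (hδ : 0 ≤ δ) {u u₁ w w₁ : ℝ → ℝ[X]}
    (S : EltSys T a b d B δ u u₁ w w₁) {t : ℝ} (ht : t ∈ Icc (0 : ℝ) T)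
    (hu : u t = 0) (hw : w t = 0) :
    a * L2norm α β (pe (B.proj (pe (u₁ t)))) ^ 2 +
      b * L2norm α β (pe (B.proj (pe (w₁ t)))) ^ 2 ≤ (1 / a + 1 / b) * δ ^ 2 := by
  have hz : pe (0 : ℝ[X]) = fun _ => 0 := by ext; simp [pe]
  have hp0 : B.proj (pe 0) = 0 := B.proj_poly (Submodule.zero_mem _)
  have h1 := (le_abs_self _).trans (S.eq1 t ht _ (B.proj_mem (pe (u₁ t))))
  have h2 := (le_abs_self _).trans (S.eq2 t ht _ (B.proj_mem (pe (w₁ t))))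
  rw [hw, hp0] at h2
  simp only [hu, hw, derivative_zero, hz, mul_zero, inner2, zero_mul,
    intervalIntegral.integral_zero, add_zero] at h1 h2
  have e1 := B.inner2_proj hαβ (pe_cont (u₁ t) _) (B.proj_mem (pe (u₁ t)))
  have e2 := B.inner2_proj hαβ (pe_cont (w₁ t) _) (B.proj_mem (pe (w₁ t)))
  rw [← L2norm_sq hαβ] at e1 e2
  unfold inner2 at e1 e2
  rw [← e1] at h1
  rw [← e2] at h2
  have aux : ∀ c U : ℝ, 0 < c → 0 ≤ U → c * U ^ 2 ≤ δ * U → c * U ^ 2 ≤ 1 / c * δ ^ 2 := by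
    intro c U hc hU h
    have h3 : c * U ≤ δ := by
      by_contra! hlt
      have : 0 < U := by
        rcases hU.eq_or_lt with h | h
        · rw [← h] at hlt; simp at hlt; linarith
        · exact h
      nlinarith
    have h4 : (c * U) ^ 2 ≤ δ ^ 2 := by gcongr
    rw [one_div, inv_mul_eq_div, le_div_iff₀ hc]
    nlinarith
  have := aux a _ ha (L2norm_nonneg _) h1
  have := aux b _ hb (L2norm_nonneg _) h2
  linarith

/-- The spatial derivatives of the errors are recovered from the equations. -/
lemma EltSys.deriv_le {T a b dmax : ℝ} (ha : 0 < a) (hb : 0 < b) {d : ℝ → ℝ} {α β : ℝ}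
    (hαβ : α < β) {k : ℕ} {B : EltBasis α β k} {δ : ℝ} (hδ : 0 ≤ δ)
    {u u₁ w w₁ : ℝ → ℝ[X]} (S : EltSys T a b d B δ u u₁ w w₁) (hdc : ContinuousOn d (Icc α β))
    (hd : ∀ x ∈ Icc α β, |d x| ≤ dmax) {t : ℝ} (ht : t ∈ Icc (0 : ℝ) T) :
    L2norm α β (pe (derivative (w t))) ≤ δ + a * L2norm α β (pe (B.proj (pe (u₁ t)))) ∧
    L2norm α β (pe (derivative (u t))) ≤ δ + b * L2norm α β (pe (B.proj (pe (w₁ t)))) +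
      dmax * L2norm α β (pe (B.proj (pe (w t)))) := by
  have hdm : 0 ≤ dmax := (abs_nonneg _).trans (hd α (left_mem_Icc.2 hαβ.le))
  have aux : ∀ X Y : ℝ, 0 ≤ X → 0 ≤ Y → X ^ 2 ≤ Y * X → X ≤ Y := by
    intro X Y hX hY h
    by_contra! hlt
    nlinarith
  have h1 := (abs_le.1 (S.eq1 t ht _ (S.w_mem t ht))).2
  have h2 := (abs_le.1 (S.eq2 t ht _ (S.u_mem t ht))).2
  rw [← L2norm_sq hαβ, ← B.inner2_proj hαβ (pe_cont (u₁ t) _) (S.w_mem t ht)] at h1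
  rw [← L2norm_sq hαβ, ← B.inner2_proj hαβ (pe_cont (w₁ t) _) (S.u_mem t ht)] at h2
  have c1 := (abs_le.1 (abs_inner2_le hαβ (pe_cont (B.proj (pe (u₁ t))) _)
    (pe_cont (derivative (w t)) _))).1
  have c2 := (abs_le.1 (abs_inner2_le hαβ (pe_cont (B.proj (pe (w₁ t))) _)
    (pe_cont (derivative (u t)) _))).1
  have hcc : ContinuousOn (fun x => d x * pe (B.proj (pe (w t))) x) (Icc α β) :=
    hdc.mul (pe_cont _ _)
  have c3 := (abs_le.1 (abs_inner2_le hαβ hcc (pe_cont (derivative (u t)) _))).1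
  have c4 : L2norm α β (fun x => d x * pe (B.proj (pe (w t))) x) ≤
      dmax * L2norm α β (pe (B.proj (pe (w t)))) := by
    apply le_of_sq_le_sq _ (mul_nonneg hdm (L2norm_nonneg _))
    rw [mul_pow, L2norm_sq hαβ, L2norm_sq hαβ]
    unfold inner2
    rw [← intervalIntegral.integral_const_mul]
    refine intervalIntegral.integral_mono_on hαβ.le (ii_mul hαβ hcc hcc)
      ((ii_mul hαβ (pe_cont _ _) (pe_cont _ _)).const_mul _) fun x hx => ?_
    have h3 : d x ^ 2 ≤ dmax ^ 2 := by
      rw [← sq_abs]; have := hd x hx; gcongr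
    nlinarith [mul_le_mul_of_nonneg_right h3 (mul_self_nonneg (pe (B.proj (pe (w t))) x))]
  have n1 := L2norm_nonneg (α := α) (β := β) (pe (derivative (w t)))
  have n2 := L2norm_nonneg (α := α) (β := β) (pe (derivative (u t)))
  have n3 := L2norm_nonneg (α := α) (β := β) (pe (B.proj (pe (u₁ t))))
  have n4 := L2norm_nonneg (α := α) (β := β) (pe (B.proj (pe (w₁ t))))
  have n5 := L2norm_nonneg (α := α) (β := β) (pe (B.proj (pe (w t))))
  have c5 := mul_le_mul_of_nonneg_right c4 n2
  constructor
  · refine aux _ _ n1 (by positivity) ?_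
    nlinarith
  · refine aux _ _ n2 (by positivity) ?_
    nlinarith

/-- The arithmetic that combines the bounds on the projected errors (`U`, `W`), on their time
derivatives (`U₁`, `W₁`) and on the spatial derivatives (`X`, `Z`) on one element. -/
lemma local_arith {a b c dmax Λ U W U₁ W₁ X Z δ ℓ A B : ℝ} (ha : 0 < a) (hb : 0 < b)
    (hc : c = 1 / a + 1 / b) (hX0 : 0 ≤ X) (hZ0 : 0 ≤ Z) (hℓ : ℓ ^ 2 ≤ Λ ^ 2)
    (hX : X ≤ δ + a * U₁) (hZ : Z ≤ δ + b * W₁ + dmax * W)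
    (f1 : A ≤ 2 * U ^ 2 + 2 * ℓ ^ 2 * Z ^ 2) (f2 : B ≤ 2 * W ^ 2 + 2 * ℓ ^ 2 * X ^ 2) :
    A + B ≤ (2 + 6 * Λ ^ 2 * dmax ^ 2) * c * (a * U ^ 2 + b * W ^ 2) + 10 * Λ ^ 2 * δ ^ 2 +
      2 * Λ ^ 2 * (2 * a ^ 2 + 3 * b ^ 2) * c * (a * U₁ ^ 2 + b * W₁ ^ 2) := by
  have sq2 : ∀ r s : ℝ, (r + s) ^ 2 ≤ 2 * (r ^ 2 + s ^ 2) := fun r s => by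
    nlinarith [sq_nonneg (r - s)]
  have sq3 : ∀ r s v : ℝ, (r + s + v) ^ 2 ≤ 3 * (r ^ 2 + s ^ 2 + v ^ 2) := fun r s v => by
    nlinarith [sq_nonneg (r - s), sq_nonneg (r - v), sq_nonneg (s - v)]
  have hX2 : X ^ 2 ≤ 2 * (δ ^ 2 + (a * U₁) ^ 2) := (pow_le_pow_left₀ hX0 hX 2).trans (sq2 _ _)
  have hZ2 : Z ^ 2 ≤ 3 * (δ ^ 2 + (b * W₁) ^ 2 + (dmax * W) ^ 2) :=
    (pow_le_pow_left₀ hZ0 hZ 2).trans (sq3 _ _ _)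
  have hX3 := mul_le_mul hℓ hX2 (sq_nonneg X) (sq_nonneg Λ)
  have hZ3 := mul_le_mul hℓ hZ2 (sq_nonneg Z) (sq_nonneg Λ)
  have hce : ∀ r s : ℝ, r ^ 2 + s ^ 2 ≤ c * (a * r ^ 2 + b * s ^ 2) := by
    intro r s
    have e : c * (a * r ^ 2 + b * s ^ 2) =
        r ^ 2 + s ^ 2 + (a / b * r ^ 2 + b / a * s ^ 2) := by rw [hc]; field_simp; ring
    have e' : 0 ≤ a / b * r ^ 2 + b / a * s ^ 2 := by positivity
    linarith
  have k1 := mul_le_mul_of_nonneg_left (hce U W)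
    (by positivity : 0 ≤ 2 + 6 * Λ ^ 2 * dmax ^ 2)
  have k2 := mul_le_mul_of_nonneg_left (hce U₁ W₁)
    (by positivity : 0 ≤ 2 * Λ ^ 2 * (2 * a ^ 2 + 3 * b ^ 2))
  have p1 : 0 ≤ Λ ^ 2 * dmax ^ 2 * U ^ 2 := by positivity
  have p2 : 0 ≤ Λ ^ 2 * a ^ 2 * W₁ ^ 2 := by positivity
  have p3 : 0 ≤ Λ ^ 2 * b ^ 2 * U₁ ^ 2 := by positivity
  linarith

/-- Mesh-independent `L²` bound for the discrete errors. The energy estimate is applied to the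
errors and to their time derivatives; the latter control the spatial derivatives, hence the part
of the errors that the projection does not see. -/
lemma global_bound {a b dmax Λ T : ℝ} (ha : 0 < a) (hb : 0 < b) (hΛ : 0 < Λ)
    (hT : 0 ≤ T) : ∃ C₁ : ℝ, 0 ≤ C₁ ∧ ∀ (k : ℕ), 1 ≤ k → ∀ (N : ℕ) (x : ℕ → ℝ),
    (∀ n < N, x n < x (n + 1)) → x N - x 0 = Λ → (∀ n < N, x (n + 1) - x n ≤ Λ) →
    ∀ (d : ℝ → ℝ),
    (∀ n < N, ContinuousOn d (Icc (x n) (x (n + 1)))) →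
    (∀ n < N, ∀ y ∈ Icc (x n) (x (n + 1)), 0 ≤ d y ∧ d y ≤ dmax) →
    ∀ (B : ∀ n : Fin N, EltBasis (x n) (x (n + 1)) k) (κ : ℝ), 0 ≤ κ →
    ∀ (u u₁ u₂ w w₁ w₂ : Fin N → ℝ → ℝ[X]),
    (∀ n, EltSys T a b d (B n) (κ * √(x (n + 1) - x n)) (u n) (u₁ n) (w n) (w₁ n)) →
    (∀ n, EltSys T a b d (B n) (κ * √(x (n + 1) - x n)) (u₁ n) (u₂ n) (w₁ n) (w₂ n)) →
    ∀ (bu bw bu₁ bw₁ : ℕ → ℝ → ℝ),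
    (∀ n : Fin N, ∀ t ∈ Icc (0 : ℝ) T,
      ((u n t).eval (x n) = bu n t ∧ (u n t).eval (x (n + 1)) = bu (n + 1) t) ∧
      ((w n t).eval (x n) = bw n t ∧ (w n t).eval (x (n + 1)) = bw (n + 1) t) ∧
      ((u₁ n t).eval (x n) = bu₁ n t ∧ (u₁ n t).eval (x (n + 1)) = bu₁ (n + 1) t) ∧
      ((w₁ n t).eval (x n) = bw₁ n t ∧ (w₁ n t).eval (x (n + 1)) = bw₁ (n + 1) t)) →
    (∀ t ∈ Icc (0 : ℝ) T, bu 0 t = 0 ∧ bu N t = 0 ∧ bu₁ 0 t = 0 ∧ bu₁ N t = 0) →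
    (∀ n, u n 0 = 0 ∧ w n 0 = 0) →
    ∀ t ∈ Icc (0 : ℝ) T, ∑ n : Fin N, (inner2 (x n) (x (n + 1)) (pe (u n t)) (pe (u n t)) +
      inner2 (x n) (x (n + 1)) (pe (w n t)) (pe (w n t))) ≤ C₁ * κ ^ 2 := by
  set c := 1 / a + 1 / b with hc
  have hc0 : 0 < c := by positivity
  set Y := (c + 2 * T) * Real.exp (c * T) with hY
  have hY0 : 0 ≤ Y := by positivity
  refine ⟨((2 + 6 * Λ ^ 2 * dmax ^ 2) * c * Y + 10 * Λ ^ 2 +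
    2 * Λ ^ 2 * (2 * a ^ 2 + 3 * b ^ 2) * c * Y) * Λ, by positivity, ?_⟩
  intro k hk N x hx hxΛ hxle d hdc hd B κ hκ u u₁ u₂ w w₁ w₂ S0 S1 bu bw bu₁ bw₁ hbd hb0 hinit t ht
  have hlt : ∀ n : Fin N, x n < x (n + 1) := fun n => hx n n.2
  have h0T : (0 : ℝ) ∈ Icc (0 : ℝ) T := left_mem_Icc.2 hT
  have hsq : ∀ n : Fin N, (κ * √(x (n + 1) - x n)) ^ 2 = κ ^ 2 * (x (n + 1) - x n) := by
    intro n
    rw [mul_pow, Real.sq_sqrt (by linarith [hlt n])]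
  have hsum : ∑ n : Fin N, (κ * √(x (n + 1) - x n)) ^ 2 = κ ^ 2 * Λ := by
    simp only [hsq, ← Finset.mul_sum]
    rw [Fin.sum_univ_eq_sum_range (fun n => x (n + 1) - x n), Finset.sum_range_sub, hxΛ]
  have hE0 := energy_estimate hx ha hb (fun n hn y hy => (hd n hn y hy).1) S0
    (fun n t ht => (hbd n t ht).1.1) (fun n t ht => (hbd n t ht).1.2)
    (fun n t ht => (hbd n t ht).2.1.1) (fun n t ht => (hbd n t ht).2.1.2)
    (fun t ht => (hb0 t ht).1) (fun t ht => (hb0 t ht).2.1) ht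
  have hE1 := energy_estimate hx ha hb (fun n hn y hy => (hd n hn y hy).1) S1
    (fun n t ht => (hbd n t ht).2.2.1.1) (fun n t ht => (hbd n t ht).2.2.1.2)
    (fun n t ht => (hbd n t ht).2.2.2.1) (fun n t ht => (hbd n t ht).2.2.2.2)
    (fun t ht => (hb0 t ht).2.2.1) (fun t ht => (hb0 t ht).2.2.2) ht
  have hz : ∀ n, pe ((B n).proj (pe 0)) = fun _ => 0 := fun n => by
    rw [(B n).proj_poly (Submodule.zero_mem _)]; ext; simp [pe]
  have hI0 : energy a b B u w 0 = 0 := by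
    refine Finset.sum_eq_zero fun n _ => ?_
    rw [(hinit n).1, (hinit n).2, hz]
    simp [L2norm]
  have hI1 : energy a b B u₁ w₁ 0 ≤ c * (κ ^ 2 * Λ) := by
    rw [← hsum, Finset.mul_sum]
    refine Finset.sum_le_sum fun n _ => ?_
    exact (S0 n).initial_le ha hb (hlt n) (by positivity) h0T (hinit n).1 (hinit n).2
  rw [hI0, hsum, ← hc] at hE0
  rw [hsum, ← hc] at hE1
  have hex := Real.exp_pos (c * T)
  have hD : 0 ≤ κ ^ 2 * Λ := by positivity
  have hE0' : energy a b B u w t ≤ Y * (κ ^ 2 * Λ) := by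
    refine hE0.trans ?_
    have : 0 ≤ c * (κ ^ 2 * Λ) * Real.exp (c * T) := by positivity
    rw [hY]; linarith
  have hE1' : energy a b B u₁ w₁ t ≤ Y * (κ ^ 2 * Λ) := by
    refine hE1.trans ?_
    have := mul_le_mul_of_nonneg_right hI1 hex.le
    rw [hY]; linarith
  have hloc : ∀ n : Fin N, inner2 (x n) (x (n + 1)) (pe (u n t)) (pe (u n t)) +
      inner2 (x n) (x (n + 1)) (pe (w n t)) (pe (w n t)) ≤
      (2 + 6 * Λ ^ 2 * dmax ^ 2) * c *
        (a * L2norm (x n) (x (n + 1)) (pe ((B n).proj (pe (u n t)))) ^ 2 +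
          b * L2norm (x n) (x (n + 1)) (pe ((B n).proj (pe (w n t)))) ^ 2) +
      10 * Λ ^ 2 * (κ * √(x (n + 1) - x n)) ^ 2 +
      2 * Λ ^ 2 * (2 * a ^ 2 + 3 * b ^ 2) * c *
        (a * L2norm (x n) (x (n + 1)) (pe ((B n).proj (pe (u₁ n t)))) ^ 2 +
          b * L2norm (x n) (x (n + 1)) (pe ((B n).proj (pe (w₁ n t)))) ^ 2) := by
    intro n
    have hdabs : ∀ y ∈ Icc (x n) (x (n + 1)), |d y| ≤ dmax := fun y hy => by
      rw [abs_of_nonneg (hd n n.2 y hy).1]; exact (hd n n.2 y hy).2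
    obtain ⟨g1, g2⟩ := (S0 n).deriv_le ha hb (hlt n) (by positivity) (hdc n n.2) hdabs ht
    have f1 := (B n).inner2_self_le (hlt n) hk (u n t)
    have f2 := (B n).inner2_self_le (hlt n) hk (w n t)
    have hℓ : (x (n + 1) - x n) ^ 2 ≤ Λ ^ 2 := by
      have h1 := hxle n n.2
      have h2 := hlt n
      have h3 : 0 ≤ x (n + 1) - x n := by linarith
      gcongr
    exact local_arith ha hb hc (L2norm_nonneg _) (L2norm_nonneg _) hℓ g1 g2
      (by linarith only [f1]) (by linarith only [f2])
  refine (Finset.sum_le_sum fun n _ => hloc n).trans ?_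
  rw [Finset.sum_add_distrib, Finset.sum_add_distrib, ← Finset.mul_sum, ← Finset.mul_sum,
    ← Finset.mul_sum, hsum]
  change _ * energy a b B u w t + _ + _ * energy a b B u₁ w₁ t ≤ _
  have q1 := mul_le_mul_of_nonneg_left hE0'
    (by positivity : 0 ≤ (2 + 6 * Λ ^ 2 * dmax ^ 2) * c)
  have q2 := mul_le_mul_of_nonneg_left hE1'
    (by positivity : 0 ≤ 2 * Λ ^ 2 * (2 * a ^ 2 + 3 * b ^ 2) * c)
  linarith

/-! ### The error equations on one element -/

/-- A curve of functions that are polynomials of degree at most `k` inside `(α, β)` is a curve of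
polynomials, twice differentiable in time as soon as its point values are: its coordinates in a
Lagrange basis are point values at interior nodes. -/
lemma exists_polyCurve {T α β : ℝ} (hT : 0 < T) (hαβ : α < β) {k : ℕ} {v v₁ v₂ : ℝ → ℝ → ℝ}
    (hpoly : ∀ t ∈ Icc (0 : ℝ) T, ∃ R : ℝ[X], R.natDegree ≤ k ∧
      ∀ x ∈ Ioo α β, v t x = R.eval x)
    (hc : ∀ t ∈ Icc (0 : ℝ) T, ContinuousOn (v t) (Icc α β))
    (h1 : ∀ t ∈ Icc (0 : ℝ) T, ∀ x,
      HasDerivWithinAt (fun s => v s x) (v₁ t x) (Icc (0 : ℝ) T) t)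
    (h2 : ∀ t ∈ Icc (0 : ℝ) T, ∀ x,
      HasDerivWithinAt (fun s => v₁ s x) (v₂ t x) (Icc (0 : ℝ) T) t) :
    ∃ V : ℕ → ℝ → ℝ[X], PolyDeriv T (V 0) (V 1) ∧ PolyDeriv T (V 1) (V 2) ∧
      (∀ i t, V i t ∈ degreeLT ℝ (k + 1)) ∧
      ∀ t ∈ Icc (0 : ℝ) T, ∀ x ∈ Icc α β, v t x = pe (V 0 t) x ∧ v₁ t x = pe (V 1 t) x := by
  set y : Fin (k + 1) → ℝ := fun j => α + (j + 1) / (k + 2) * (β - α) with hy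
  have hk2 : (0 : ℝ) < k + 2 := by positivity
  have hβα : 0 < β - α := by linarith
  have hyI : ∀ j, y j ∈ Ioo α β := by
    intro j
    have hj : ((j : ℕ) : ℝ) + 1 < k + 2 := by
      have : ((j : ℕ) : ℝ) < (k + 1 : ℕ) := by exact_mod_cast j.2
      push_cast at this; linarith
    have h3 : ((j : ℕ) + 1 : ℝ) / (k + 2) < 1 := (div_lt_one hk2).2 hj
    have h4 : 0 < ((j : ℕ) + 1 : ℝ) / (k + 2) := by positivity
    constructor
    · have := mul_pos h4 hβα
      simp only [hy]; linarith
    · have := mul_lt_mul_of_pos_right h3 hβα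
      simp only [hy]; linarith
  have hinj : Set.InjOn y ↑(Finset.univ : Finset (Fin (k + 1))) := by
    intro i _ j _ hij
    have h3 : ((i : ℕ) + 1 : ℝ) / (k + 2) * (β - α) = ((j : ℕ) + 1) / (k + 2) * (β - α) := by
      simpa [hy] using hij
    have h4 := mul_right_cancel₀ hβα.ne' h3
    rw [div_left_inj' hk2.ne'] at h4
    have : ((i : ℕ) : ℝ) = (j : ℕ) := by linarith
    exact Fin.ext (by exact_mod_cast this)
  set ψ : Fin (k + 1) → ℝ[X] := fun j => Lagrange.basis Finset.univ y j with hψ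
  have hψm : ∀ j, ψ j ∈ degreeLT ℝ (k + 1) := by
    intro j
    rw [mem_degreeLT, hψ, Lagrange.degree_basis hinj (Finset.mem_univ j)]
    simp only [Finset.card_univ, Fintype.card_fin, Nat.add_sub_cancel]
    exact_mod_cast Nat.lt_succ_self k
  -- `V 0`, `V 1`, `V 2` interpolate `v`, `v₁`, `v₂`
  set V : ℕ → ℝ → ℝ[X] := fun i t =>
    ∑ j, (if i = 0 then v t (y j) else if i = 1 then v₁ t (y j) else v₂ t (y j)) • ψ j with hV
  have d0 : PolyDeriv T (V 0) (V 1) := PolyDeriv.sum_smul (fun j t ht => h1 t ht (y j))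
  have d1 : PolyDeriv T (V 1) (V 2) := PolyDeriv.sum_smul (fun j t ht => h2 t ht (y j))
  have e0 : ∀ t ∈ Icc (0 : ℝ) T, ∀ x ∈ Icc α β, v t x = pe (V 0 t) x := by
    intro t ht
    obtain ⟨R, hR, hRv⟩ := hpoly t ht
    have hRV : R = V 0 t := by
      have hdeg : R.degree < (Finset.univ : Finset (Fin (k + 1))).card := by
        rw [Finset.card_univ, Fintype.card_fin]
        exact (natDegree_le_iff_degree_le.1 hR).trans_lt (by exact_mod_cast Nat.lt_succ_self k)
      rw [Lagrange.eq_interpolate_of_eval_eq (fun j => v t (y j)) hinj hdeg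
        (fun j _ => (hRv _ (hyI j)).symm), Lagrange.interpolate_apply]
      simp [hV, hψ, smul_eq_C_mul]
    have hcl : closure (Ioo α β) = Icc α β := closure_Ioo hαβ.ne
    have : EqOn (v t) (pe (V 0 t)) (Icc α β) := by
      refine Set.EqOn.of_subset_closure (s := Ioo α β) (fun x hx => ?_) (hc t ht) (pe_cont _ _)
        Ioo_subset_Icc_self hcl.symm.subset
      rw [hRv x hx, hRV]; rfl
    exact this
  refine ⟨V, d0, d1, fun i t => Submodule.sum_mem _ fun j _ => Submodule.smul_mem _ _ (hψm j),
    fun t ht x hx => ⟨e0 t ht x hx, ?_⟩⟩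
  have h3 : HasDerivWithinAt (fun s => v s x) (pe (V 1 t) x) (Icc (0 : ℝ) T) t :=
    (d0 t ht (Polynomial.leval x)).congr (fun s hs => e0 s hs x hx) (e0 t ht x hx)
  exact (uniqueDiffOn_Icc hT t ht).eq_deriv _ (h1 t ht x) h3

/-- `P i s` is `∂_t^i ∂_x^s` of one function on `[0, T] × [α, β]`, for `i ≤ 2` and `s ≤ k + 1`,
and all these derivatives are bounded by `K`. -/
structure SmoothElt (k : ℕ) (T α β K : ℝ) (P : ℕ → ℕ → ℝ → ℝ → ℝ) : Prop where
  dt : ∀ i < 2, ∀ s ≤ k + 1, ∀ t ∈ Icc (0 : ℝ) T, ∀ x ∈ Icc α β,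
    HasDerivWithinAt (fun τ => P i s τ x) (P (i + 1) s t x) (Icc (0 : ℝ) T) t
  dx : ∀ i ≤ 2, ∀ s < k + 1, ∀ t ∈ Icc (0 : ℝ) T, ∀ x ∈ Icc α β,
    HasDerivWithinAt (P i s t) (P i (s + 1) t x) (Icc α β) x
  joint : ∀ i ≤ 2, ∀ s ≤ k + 1,
    ContinuousOn (fun z : ℝ × ℝ => P i s z.1 z.2) (Icc (0 : ℝ) T ×ˢ Icc α β)
  bd : ∀ i ≤ 2, ∀ s ≤ k + 1, ∀ t ∈ Icc (0 : ℝ) T, ∀ x ∈ Icc α β, |P i s t x| ≤ K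

lemma SmoothElt.cont {k : ℕ} {T α β K : ℝ} {P : ℕ → ℕ → ℝ → ℝ → ℝ} (S : SmoothElt k T α β K P)
    {i s : ℕ} (hi : i ≤ 2) (hs : s ≤ k + 1) {t : ℝ} (ht : t ∈ Icc (0 : ℝ) T) :
    ContinuousOn (P i s t) (Icc α β) :=
  (S.joint i hi s hs).comp (f := fun x => (t, x)) (by fun_prop) fun _ hx => ⟨ht, hx⟩

lemma L2norm_mul_le {α β D : ℝ} (hαβ : α < β) (hD : 0 ≤ D) {c f : ℝ → ℝ}
    (hc : ContinuousOn c (Icc α β)) (hf : ContinuousOn f (Icc α β))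
    (h : ∀ x ∈ Icc α β, |c x| ≤ D) :
    L2norm α β (fun x => c x * f x) ≤ D * L2norm α β f := by
  apply le_of_sq_le_sq _ (mul_nonneg hD (L2norm_nonneg _))
  rw [mul_pow, L2norm_sq hαβ, L2norm_sq hαβ]
  unfold inner2
  rw [← intervalIntegral.integral_const_mul]
  refine intervalIntegral.integral_mono_on hαβ.le (ii_mul hαβ (hc.mul hf) (hc.mul hf))
    ((ii_mul hαβ hf hf).const_mul _) fun x hx => ?_
  have h3 : c x ^ 2 ≤ D ^ 2 := by
    rw [← sq_abs]; have := h x hx; gcongr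
  nlinarith [mul_le_mul_of_nonneg_right h3 (mul_self_nonneg (f x))]

section Elt

variable {k : ℕ} {T a b K α β : ℝ} {d : ℝ → ℝ} {P Q : ℕ → ℕ → ℝ → ℝ → ℝ}
  {V W : ℕ → ℝ → ℝ[X]} {B : EltBasis α β k}

/-- The Petrov--Galerkin equations on one element, differentiated `i` times in time. -/
def EltEq (T a b : ℝ) (d : ℝ → ℝ) (P Q : ℕ → ℕ → ℝ → ℝ → ℝ) (B : EltBasis α β k)
    (V W : ℕ → ℝ → ℝ[X]) (i : ℕ) : Prop :=
  ∀ t ∈ Icc (0 : ℝ) T, ∀ q ∈ degreeLT ℝ k,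
    a * inner2 α β (pe (V (i + 1) t)) (pe q) + inner2 α β (pe (derivative (W i t))) (pe q) =
      inner2 α β (fun x => a * P (i + 1) 0 t x + Q i 1 t x) (pe q) ∧
    b * inner2 α β (pe (W (i + 1) t)) (pe q) + inner2 α β (pe (derivative (V i t))) (pe q) +
        inner2 α β (fun x => d x * pe (B.proj (pe (W i t))) x) (pe q) =
      inner2 α β (fun x => b * Q (i + 1) 0 t x + P i 1 t x + d x * Q i 0 t x) (pe q)

lemma EltEq.differentiate (hT : 0 < T) (hαβ : α < β) (hd : ContinuousOn d (Icc α β))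
    (hP : SmoothElt k T α β K P) (hQ : SmoothElt k T α β K Q)
    (hV0 : PolyDeriv T (V 0) (V 1)) (hV1 : PolyDeriv T (V 1) (V 2))
    (hW0 : PolyDeriv T (W 0) (W 1)) (hW1 : PolyDeriv T (W 1) (W 2))
    (h : EltEq T a b d P Q B V W 0) : EltEq T a b d P Q B V W 1 := by
  intro t ht q hq
  have hqc := pe_cont q (Icc α β)
  have hdq : ContinuousOn (fun x => d x * pe q x) (Icc α β) := hd.mul hqc
  have hswap : ∀ r : ℝ[X], inner2 α β (fun x => d x * pe r x) (pe q) =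
      inner2 α β (pe r) (fun x => d x * pe q x) := by
    intro r; unfold inner2; congr 1; ext x; ring
  have hd' : ContinuousOn (fun z : ℝ × ℝ => d z.2) (Icc (0 : ℝ) T ×ˢ Icc α β) :=
    hd.comp continuousOn_snd fun z hz => hz.2
  have uniq := uniqueDiffOn_Icc hT t ht
  constructor
  · have l := ((hV1.inner2 hαβ hqc ht).const_mul a).fun_add (hW0.derivative.inner2 hαβ hqc ht)
    have r := hasDerivWithinAt_inner2 (T := T) hαβ
      (g := fun t x => a * P 1 0 t x + Q 0 1 t x) (g' := fun t x => a * P 2 0 t x + Q 1 1 t x)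
      (fun t ht => ((hP.cont (by lia) (by lia) ht).const_mul a).add
        (hQ.cont (by lia) (by lia) ht))
      (((hP.joint 2 (by lia) 0 (by lia)).const_mul a).add (hQ.joint 1 (by lia) 1 (by lia)))
      (fun t ht x hx => ((hP.dt 1 (by lia) 0 (by lia) t ht x hx).const_mul a).fun_add
        (hQ.dt 0 (by lia) 1 (by lia) t ht x hx)) hqc ht
    exact uniq.eq_deriv _ l (r.congr (fun s hs => (h s hs q hq).1) (h t ht q hq).1)
  · have l := (((hW1.inner2 hαβ hqc ht).const_mul b).fun_add
      (hV0.derivative.inner2 hαβ hqc ht)).fun_add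
      ((B.polyDeriv_proj hαβ hW0).inner2 hαβ hdq ht)
    have r := hasDerivWithinAt_inner2 (T := T) hαβ
      (g := fun t x => b * Q 1 0 t x + P 0 1 t x + d x * Q 0 0 t x)
      (g' := fun t x => b * Q 2 0 t x + P 1 1 t x + d x * Q 1 0 t x)
      (fun t ht => (((hQ.cont (by lia) (by lia) ht).const_mul b).add
        (hP.cont (by lia) (by lia) ht)).add (hd.mul (hQ.cont (by lia) (by lia) ht)))
      ((((hQ.joint 2 (by lia) 0 (by lia)).const_mul b).add (hP.joint 1 (by lia) 1 (by lia))).add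
        (hd'.mul (hQ.joint 1 (by lia) 0 (by lia))))
      (fun t ht x hx => (((hQ.dt 1 (by lia) 0 (by lia) t ht x hx).const_mul b).fun_add
        (hP.dt 0 (by lia) 1 (by lia) t ht x hx)).fun_add
        ((hQ.dt 0 (by lia) 0 (by lia) t ht x hx).const_mul (d x))) hqc ht
    rw [hswap]
    refine uniq.eq_deriv _ l (r.congr (fun s hs => ?_) ?_)
    · rw [← hswap]; exact (h s hs q hq).2
    · rw [← hswap]; exact (h t ht q hq).2

end Elt

section Elt

variable {k : ℕ} {T a b K α β : ℝ} {d : ℝ → ℝ} {P Q : ℕ → ℕ → ℝ → ℝ → ℝ}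
  {V W : ℕ → ℝ → ℝ[X]} {B : EltBasis α β k}

/-- The friction residual is of order `k + 1`, although `π v - v` is only of order `k`: the
projection error is orthogonal to the test function, so `d` may be replaced by `d - d(α)`, which
gains one order by Lipschitz continuity. -/
lemma friction_residual {D L ℓ : ℝ} (hαβ : α < β) (hℓ : β - α ≤ ℓ) (hD : 0 ≤ D) (hL : 0 ≤ L)
    (hd : ContinuousOn d (Icc α β)) (hdD : ∀ x ∈ Icc α β, |d x| ≤ D)
    (hdL : ∀ x ∈ Icc α β, |d x - d α| ≤ L * (β - α)) {v : ℕ → ℝ → ℝ}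
    (hvx : ∀ s < k + 1, ∀ x ∈ Icc α β, HasDerivWithinAt (v s) (v (s + 1) x) (Icc α β) x)
    (hvc : ∀ s ≤ k + 1, ContinuousOn (v s) (Icc α β)) (hK0 : 0 ≤ K)
    (hvK : ∀ s ≤ k + 1, ∀ x ∈ Icc α β, |v s x| ≤ K) {q : ℝ[X]} (hq : q ∈ degreeLT ℝ k) :
    |inner2 α β (fun x => d x * pe (B.proj (pe (B.interp (v 0) (v 1)))) x) (pe q) -
      inner2 α β (fun x => d x * v 0 x) (pe q)| ≤
      (D + L) * K * ℓ ^ (k + 1) * √(β - α) * L2norm α β (pe q) := by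
  have hβα : 0 < β - α := by linarith
  have hqc := pe_cont q (Icc α β)
  have hv0 := hvc 0 (by lia)
  set I := B.interp (v 0) (v 1) with hI
  have hIv : ContinuousOn (fun x => pe I x - v 0 x) (Icc α β) := (pe_cont _ _).sub hv0
  have hpv : ContinuousOn (fun x => v 0 x - pe (B.proj (v 0)) x) (Icc α β) :=
    hv0.sub (pe_cont _ _)
  have hdd : ContinuousOn (fun x => d x - d α) (Icc α β) := hd.sub continuousOn_const
  set f₁ : ℝ → ℝ := fun x => d x * pe (B.proj fun x => pe I x - v 0 x) x with hf₁
  set f₂ : ℝ → ℝ := fun x => (d x - d α) * (v 0 x - pe (B.proj (v 0)) x) with hf₂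
  set f₃ : ℝ → ℝ := fun x => v 0 x - pe (B.proj (v 0)) x with hf₃
  have c₁ : ContinuousOn f₁ (Icc α β) := hd.mul (pe_cont _ _)
  have c₂ : ContinuousOn f₂ (Icc α β) := hdd.mul hpv
  have e : inner2 α β (fun x => d x * pe (B.proj (pe I)) x) (pe q) -
      inner2 α β (fun x => d x * v 0 x) (pe q) =
      inner2 α β f₁ (pe q) - inner2 α β f₂ (pe q) - d α * inner2 α β f₃ (pe q) := by
    rw [← inner2_smul_left, ← inner2_sub_left hαβ c₁ c₂ hqc]
    have c₃ : ContinuousOn (fun x => f₁ x - f₂ x) (Icc α β) := c₁.sub c₂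
    have c₄ : ContinuousOn (fun x => d α * f₃ x) (Icc α β) := continuousOn_const.mul hpv
    have c₅ : ContinuousOn (fun x => d x * pe (B.proj (pe I)) x) (Icc α β) := hd.mul (pe_cont _ _)
    have c₆ : ContinuousOn (fun x => d x * v 0 x) (Icc α β) := hd.mul hv0
    rw [← inner2_sub_left hαβ c₃ c₄ hqc, ← inner2_sub_left hαβ c₅ c₆ hqc]
    congr 1
    ext x
    simp only [hf₁, hf₂, hf₃, B.proj_sub hαβ (pe_cont I _) hv0]
    simp only [pe, eval_sub]
    ring
  have e3 : inner2 α β f₃ (pe q) = 0 := by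
    rw [hf₃, inner2_sub_left hαβ hv0 (pe_cont _ _) hqc, B.inner2_proj hαβ hv0 hq, sub_self]
  have n1 : L2norm α β f₁ ≤ D * (K * (β - α) ^ (k + 1) * √(β - α)) := by
    refine (L2norm_mul_le hαβ hD hd (pe_cont _ _) hdD).trans ?_
    refine mul_le_mul_of_nonneg_left ((B.L2norm_proj_le hαβ hIv).trans ?_) hD
    refine L2norm_le_of_sup hαβ hIv fun x hx => ?_
    rw [abs_sub_comm]
    exact B.abs_sub_interp_le hαβ hvx (hvc 1 (by lia)) (hvK (k + 1) le_rfl) hx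
  have n2 : L2norm α β f₂ ≤ L * (β - α) * (K * (β - α) ^ k * √(β - α)) := by
    refine (L2norm_mul_le hαβ (by positivity) hdd hpv hdL).trans ?_
    refine mul_le_mul_of_nonneg_left ?_ (by positivity)
    exact B.L2norm_sub_proj_le_pow hαβ (fun s hs => hvx s (by lia)) hv0 (hvK k (by lia))
  have i1 := (abs_inner2_le hαβ c₁ hqc).trans (mul_le_mul_of_nonneg_right n1 (L2norm_nonneg _))
  have i2 := (abs_inner2_le hαβ c₂ hqc).trans (mul_le_mul_of_nonneg_right n2 (L2norm_nonneg _))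
  rw [e, e3, mul_zero, sub_zero]
  have hp : (β - α) ^ (k + 1) ≤ ℓ ^ (k + 1) := by gcongr
  have hfac : 0 ≤ (D + L) * K * (√(β - α) * L2norm α β (pe q)) :=
    mul_nonneg (by positivity) (mul_nonneg (Real.sqrt_nonneg _) (L2norm_nonneg _))
  calc _ ≤ _ := abs_sub _ _
    _ ≤ _ := add_le_add i1 i2
    _ = (D + L) * K * (√(β - α) * L2norm α β (pe q)) * (β - α) ^ (k + 1) := by ring
    _ ≤ (D + L) * K * (√(β - α) * L2norm α β (pe q)) * ℓ ^ (k + 1) :=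
        mul_le_mul_of_nonneg_left hp hfac
    _ = _ := by ring

/-- The interpolation error, tested with a polynomial. -/
lemma interp_residual {ℓ : ℝ} (hαβ : α < β) (hℓ : β - α ≤ ℓ) {v : ℕ → ℝ → ℝ}
    (hvx : ∀ s < k + 1, ∀ x ∈ Icc α β, HasDerivWithinAt (v s) (v (s + 1) x) (Icc α β) x)
    (hvc : ∀ s ≤ k + 1, ContinuousOn (v s) (Icc α β)) (hK0 : 0 ≤ K)
    (hvK : ∀ s ≤ k + 1, ∀ x ∈ Icc α β, |v s x| ≤ K) (q : ℝ[X]) :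
    |inner2 α β (pe (B.interp (v 0) (v 1))) (pe q) - inner2 α β (v 0) (pe q)| ≤
      K * ℓ ^ (k + 1) * √(β - α) * L2norm α β (pe q) := by
  have hβα : 0 < β - α := by linarith
  have hqc := pe_cont q (Icc α β)
  have hv0 := hvc 0 (by lia)
  have hIv : ContinuousOn (fun x => pe (B.interp (v 0) (v 1)) x - v 0 x) (Icc α β) :=
    (pe_cont _ _).sub hv0
  rw [← inner2_sub_left hαβ (pe_cont _ _) hv0 hqc]
  refine (abs_inner2_le hαβ hIv hqc).trans (mul_le_mul_of_nonneg_right ?_ (L2norm_nonneg _))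
  refine L2norm_le_of_sup hαβ hIv fun x hx => ?_
  rw [abs_sub_comm]
  refine (B.abs_sub_interp_le hαβ hvx (hvc 1 (by lia)) (hvK (k + 1) le_rfl) hx).trans ?_
  gcongr

lemma pe_sub_inner (hαβ : α < β) (p r : ℝ[X]) {w : ℝ → ℝ} (hw : ContinuousOn w (Icc α β)) :
    inner2 α β (pe (p - r)) w = inner2 α β (pe p) w - inner2 α β (pe r) w := by
  rw [← inner2_sub_left hαβ (pe_cont _ _) (pe_cont _ _) hw]
  congr 1; ext x; simp [pe]

/-- The `i`-th time derivative of the discrete error, the interpolant minus the discrete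
solution. -/
def err (B : EltBasis α β k) (P : ℕ → ℕ → ℝ → ℝ → ℝ) (V : ℕ → ℝ → ℝ[X]) (i : ℕ) (t : ℝ) : ℝ[X] :=
  B.interp (P i 0 t) (P i 1 t) - V i t

lemma polyDeriv_err (hαβ : α < β) (hP : SmoothElt k T α β K P) {i : ℕ} (hi : i < 2)
    (hV : PolyDeriv T (V i) (V (i + 1))) : PolyDeriv T (err B P V i) (err B P V (i + 1)) :=
  (B.polyDeriv_interp hαβ (v := P i 0) (w := P (i + 1) 0)
    (fun _ ht => hP.cont (by lia) (by lia) ht) (hP.joint (i + 1) (by lia) 1 (by lia))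
    (fun t ht => hP.dt i hi 0 (by lia) t ht α (left_mem_Icc.2 hαβ.le))
    (fun t ht x hx => hP.dt i hi 1 (by lia) t ht x hx)).sub hV

lemma derivative_mem {q : ℝ[X]} (hq : q ∈ degreeLT ℝ (k + 1)) : derivative q ∈ degreeLT ℝ k := by
  rw [mem_degreeLT] at hq ⊢
  by_cases h : q = 0
  · simp only [h, derivative_zero, degree_zero]; exact WithBot.bot_lt_coe _
  · have h1 := degree_derivative_lt h
    have h2 : q.degree ≤ k := by
      rw [degree_eq_natDegree h] at hq ⊢
      have : q.natDegree < k + 1 := by exact_mod_cast hq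
      exact_mod_cast Nat.lt_succ_iff.1 this
    exact h1.trans_le h2

/-- The discrete errors solve the homogeneous equations up to a residual of order `k + 1`; the
spatial derivatives contribute nothing, since the interpolant preserves their moments. -/
lemma eltSys_err {D L ℓ : ℝ} {i : ℕ} (hi : i < 2) (ha : 0 < a) (hb : 0 < b) (hαβ : α < β)
    (hℓ : β - α ≤ ℓ) (hD : 0 ≤ D) (hL : 0 ≤ L)
    (hd : ContinuousOn d (Icc α β)) (hdD : ∀ x ∈ Icc α β, |d x| ≤ D)
    (hdL : ∀ x ∈ Icc α β, |d x - d α| ≤ L * (β - α)) (hK0 : 0 ≤ K)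
    (hP : SmoothElt k T α β K P) (hQ : SmoothElt k T α β K Q)
    (hV : PolyDeriv T (V i) (V (i + 1))) (hW : PolyDeriv T (W i) (W (i + 1)))
    (hVm : ∀ i t, V i t ∈ degreeLT ℝ (k + 1)) (hWm : ∀ i t, W i t ∈ degreeLT ℝ (k + 1))
    (h : EltEq T a b d P Q B V W i) :
    EltSys T a b d B ((a + b + D + L) * K * ℓ ^ (k + 1) * √(β - α))
      (err B P V i) (err B P V (i + 1)) (err B Q W i) (err B Q W (i + 1)) := by
  have hℓ0 : 0 < ℓ := by linarith
  refine ⟨polyDeriv_err hαβ hP hi hV, polyDeriv_err hαβ hQ hi hW,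
    fun t _ => derivative_mem (Submodule.sub_mem _ (B.interp_mem _ _) (hVm i t)),
    fun t _ => derivative_mem (Submodule.sub_mem _ (B.interp_mem _ _) (hWm i t)), ?_, ?_⟩
  · intro t ht q hq
    have hqc := pe_cont q (Icc α β)
    have r := interp_residual (B := B) hαβ hℓ (fun s hs => hP.dx (i + 1) (by lia) s hs t ht)
      (fun s hs => hP.cont (i := i + 1) (by lia) hs ht) hK0
      (fun s hs => hP.bd (i + 1) (by lia) s hs t ht) q
    have e := (h t ht q hq).1
    have cP : ContinuousOn (fun x => a * P (i + 1) 0 t x) (Icc α β) :=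
      continuousOn_const.mul (hP.cont (by lia) (by lia) ht)
    have cQ : ContinuousOn (Q i 1 t) (Icc α β) := hQ.cont (by lia) (by lia) ht
    rw [inner2_add_left hαβ cP cQ hqc, inner2_smul_left] at e
    simp only [err, derivative_sub, pe_sub_inner hαβ _ _ hqc, B.derivative_interp]
    rw [B.inner2_proj hαβ cQ hq]
    have e' : ∀ X Y Z U R : ℝ, a * Y + Z = a * U + R →
        a * (X - Y) + (R - Z) = a * (X - U) := by intros; linarith
    rw [e' _ _ _ _ _ e, abs_mul, abs_of_pos ha]
    refine (mul_le_mul_of_nonneg_left r ha.le).trans ?_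
    have hn : 0 ≤ K * ℓ ^ (k + 1) * √(β - α) * L2norm α β (pe q) :=
      mul_nonneg (by positivity) (L2norm_nonneg _)
    have := mul_nonneg (by positivity : 0 ≤ b + D + L) hn
    linarith
  · intro t ht q hq
    have hqc := pe_cont q (Icc α β)
    have r := interp_residual (B := B) hαβ hℓ (fun s hs => hQ.dx (i + 1) (by lia) s hs t ht)
      (fun s hs => hQ.cont (i := i + 1) (by lia) hs ht) hK0
      (fun s hs => hQ.bd (i + 1) (by lia) s hs t ht) q
    have r2 := friction_residual (B := B) hαβ hℓ hD hL hd hdD hdL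
      (fun s hs => hQ.dx i (by lia) s hs t ht)
      (fun s hs => hQ.cont (i := i) (by lia) hs ht) hK0
      (fun s hs => hQ.bd i (by lia) s hs t ht) hq
    have e := (h t ht q hq).2
    have c1 : ContinuousOn (fun x => b * Q (i + 1) 0 t x) (Icc α β) :=
      continuousOn_const.mul (hQ.cont (by lia) (by lia) ht)
    have c2 : ContinuousOn (P i 1 t) (Icc α β) := hP.cont (by lia) (by lia) ht
    have c3 : ContinuousOn (fun x => b * Q (i + 1) 0 t x + P i 1 t x) (Icc α β) := c1.add c2
    have c4 : ContinuousOn (fun x => d x * Q i 0 t x) (Icc α β) :=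
      hd.mul (hQ.cont (by lia) (by lia) ht)
    rw [inner2_add_left hαβ c3 c4 hqc, inner2_add_left hαβ c1 c2 hqc, inner2_smul_left] at e
    have c5 : ∀ p : ℝ[X], ContinuousOn (fun x => d x * pe p x) (Icc α β) :=
      fun p => hd.mul (pe_cont _ _)
    have e3 : inner2 α β (fun x => d x * pe (B.proj (pe (err B Q W i t))) x) (pe q) =
        inner2 α β (fun x => d x * pe (B.proj (pe (B.interp (Q i 0 t) (Q i 1 t)))) x) (pe q) -
        inner2 α β (fun x => d x * pe (B.proj (pe (W i t))) x) (pe q) := by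
      rw [← inner2_sub_left hαβ (c5 _) (c5 _) hqc]
      congr 1; ext x
      have : pe (err B Q W i t) =
          fun x => pe (B.interp (Q i 0 t) (Q i 1 t)) x - pe (W i t) x := by
        ext x; simp [pe, err]
      rw [this, B.proj_sub hαβ (pe_cont _ _) (pe_cont _ _)]
      simp only [pe, eval_sub]; ring
    rw [e3]
    simp only [err, derivative_sub, pe_sub_inner hαβ _ _ hqc, B.derivative_interp]
    rw [B.inner2_proj hαβ c2 hq]
    have e' : ∀ X Y Z U R S F G : ℝ, b * Y + Z + S = b * U + R + F →
        b * (X - Y) + (R - Z) + (G - S) = b * (X - U) + (G - F) := by intros; linarith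
    rw [e' _ _ _ _ _ _ _ _ e]
    refine (abs_add_le _ _).trans ?_
    rw [abs_mul, abs_of_pos hb]
    have r' := mul_le_mul_of_nonneg_left r hb.le
    have hn : 0 ≤ K * ℓ ^ (k + 1) * √(β - α) * L2norm α β (pe q) :=
      mul_nonneg (by positivity) (L2norm_nonneg _)
    have := mul_nonneg ha.le hn
    linarith

end Elt

/-! ### From the mesh to its elements -/

namespace Mesh

variable {xL xR : ℝ} (M : Mesh xL xR)

lemma pt_le {m n : ℕ} (hmn : m ≤ n) (hn : n ≤ M.N) : M.pt m ≤ M.pt n := by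
  induction n, hmn using Nat.le_induction with
  | base => exact le_rfl
  | succ j _ ih => exact (ih (by lia)).trans (M.mono j (by lia)).le

lemma left_le {n : ℕ} (hn : n ≤ M.N) : xL ≤ M.pt n := by
  have := M.pt_le (Nat.zero_le n) hn
  rwa [M.left] at this

lemma le_right {n : ℕ} (hn : n ≤ M.N) : M.pt n ≤ xR := by
  have := M.pt_le hn le_rfl
  rwa [M.right] at this

lemma elt_subset {n : ℕ} (hn : n < M.N) : Icc (M.pt n) (M.pt (n + 1)) ⊆ Icc xL xR :=
  Icc_subset_Icc (M.left_le hn.le) (M.le_right hn)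

lemma elt_le_hsize {n : ℕ} (hn : n < M.N) : M.pt (n + 1) - M.pt n ≤ M.hsize :=
  Finset.le_sup' (fun n => M.pt (n + 1) - M.pt n) (Finset.mem_range.2 hn)

lemma hsize_nonneg : 0 ≤ M.hsize :=
  (sub_nonneg.2 (M.mono 0 M.Npos).le).trans (M.elt_le_hsize M.Npos)

/-- A polynomial on one element, extended by zero, is an admissible test function. -/
lemma piecewisePoly_indicator {k n : ℕ} (hn : n < M.N) {q : ℝ[X]} (hq : q ∈ degreeLT ℝ k) :
    M.PiecewisePoly (k - 1) (indicator (Ioo (M.pt n) (M.pt (n + 1))) (pe q)) := by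
  intro m hm
  by_cases hmn : m = n
  · subst hmn
    refine ⟨q, ?_, fun x hx => by rw [indicator_of_mem hx]; rfl⟩
    by_cases h0 : q = 0
    · simp [h0]
    · rw [mem_degreeLT, degree_eq_natDegree h0] at hq
      have : q.natDegree < k := by exact_mod_cast hq
      lia
  · refine ⟨0, by simp, fun x hx => ?_⟩
    rw [indicator_of_notMem, eval_zero]
    intro hx'
    rcases lt_or_gt_of_ne hmn with h | h
    · have := M.pt_le (Nat.succ_le_of_lt h) hn.le
      exact absurd (hx.2.trans_le this) hx'.1.le.not_gt
    · have := M.pt_le (Nat.succ_le_of_lt h) hm.le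
      exact absurd (hx'.2.trans_le this) hx.1.le.not_gt

lemma inner2_indicator {n : ℕ} (hn : n < M.N) (v w : ℝ → ℝ) :
    inner2 xL xR v (indicator (Ioo (M.pt n) (M.pt (n + 1))) w) =
      inner2 (M.pt n) (M.pt (n + 1)) v w := by
  have hl := M.left_le hn.le
  have hr := M.le_right (Nat.succ_le_of_lt hn)
  have hlt := M.mono n hn
  unfold inner2
  have e : (fun x => v x * indicator (Ioo (M.pt n) (M.pt (n + 1))) w x) =
      indicator (Ioo (M.pt n) (M.pt (n + 1))) (fun x => v x * w x) := by
    ext x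
    by_cases hx : x ∈ Ioo (M.pt n) (M.pt (n + 1)) <;> simp [hx]
  rw [e, intervalIntegral.integral_of_le (by linarith), intervalIntegral.integral_of_le hlt.le,
    setIntegral_indicator measurableSet_Ioo, integral_Ioc_eq_integral_Ioo]
  congr 2
  rw [inter_eq_right]
  exact fun x hx => ⟨hl.trans_lt hx.1, (hx.2.trans_le hr).le⟩

lemma inner2_eq_sum {f : ℝ → ℝ} (hf : ContinuousOn f (Icc xL xR)) :
    inner2 xL xR f f = ∑ n : Fin M.N, inner2 (M.pt n) (M.pt (n + 1)) f f := by
  have h := intervalIntegral.sum_integral_adjacent_intervals (a := M.pt) (n := M.N) (μ := volume)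
    (f := fun x => f x * f x) fun n hn =>
      ii_mul (M.mono n hn) (hf.mono (M.elt_subset hn)) (hf.mono (M.elt_subset hn))
  rw [M.left, M.right] at h
  unfold inner2
  rw [← h, Finset.sum_range]

end Mesh

lemma mem_degreeLT_of_natDegree_le {k : ℕ} (hk : 1 ≤ k) {R : ℝ[X]} (hR : R.natDegree ≤ k - 1) :
    R ∈ degreeLT ℝ k := by
  rw [mem_degreeLT]
  refine (natDegree_le_iff_degree_le.1 hR).trans_lt ?_
  have : k - 1 < k := by lia
  exact_mod_cast this

/-- An elementwise derivative agrees inside the element with the derivative of the polynomial. -/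
lemma Mesh.PiecewiseDeriv.eq_derivative {xL xR : ℝ} {M : Mesh xL xR} {v dv : ℝ → ℝ}
    (h : M.PiecewiseDeriv v dv) {n : ℕ} (hn : n < M.N) {V : ℝ[X]}
    (hV : ∀ x ∈ Icc (M.pt n) (M.pt (n + 1)), v x = pe V x) {x : ℝ}
    (hx : x ∈ Ioo (M.pt n) (M.pt (n + 1))) : dv x = pe (derivative V) x := by
  have h1 : HasDerivAt v (pe (derivative V) x) x := by
    refine (V.hasDerivAt x).congr_of_eventuallyEq ?_
    filter_upwards [isOpen_Ioo.mem_nhds hx] with y hy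
    exact hV y (Ioo_subset_Icc_self hy)
  exact (h n hn x hx).unique h1

/-- The Petrov--Galerkin equations restricted to one element. -/
lemma eltEq_zero {xL xR : ℝ} {M : Mesh xL xR} {k : ℕ} (hk : 1 ≤ k) {T a b : ℝ} {d : ℝ → ℝ}
    {P Q : ℕ → ℕ → ℝ → ℝ → ℝ}
    (sol : PGSol M k T a b d (fun t x => a * P 1 0 t x + Q 0 1 t x)
      (fun t x => b * Q 1 0 t x + P 0 1 t x + d x * Q 0 0 t x)) {n : ℕ} (hn : n < M.N)
    (B : EltBasis (M.pt n) (M.pt (n + 1)) k) {V W : ℕ → ℝ → ℝ[X]}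
    (hV : ∀ t ∈ Icc (0 : ℝ) T, ∀ x ∈ Icc (M.pt n) (M.pt (n + 1)),
      sol.p t x = pe (V 0 t) x ∧ sol.dtp t x = pe (V 1 t) x)
    (hW : ∀ t ∈ Icc (0 : ℝ) T, ∀ x ∈ Icc (M.pt n) (M.pt (n + 1)),
      sol.m t x = pe (W 0 t) x ∧ sol.dtm t x = pe (W 1 t) x) :
    EltEq T a b d P Q B V W 0 := by
  intro t ht q hq
  have hαβ := M.mono n hn
  have htest := M.piecewisePoly_indicator hn hq
  have sub : ∀ {x}, x ∈ Ioo (M.pt n) (M.pt (n + 1)) → x ∈ Icc (M.pt n) (M.pt (n + 1)) :=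
    fun hx => Ioo_subset_Icc_self hx
  have e1 := sol.eq1 t ht _ htest
  have e2 := sol.eq2 t ht _ htest
  simp only [M.inner2_indicator hn] at e1 e2
  rw [inner2_smul_left] at e1 e2
  constructor
  · rw [← e1]
    congr 1
    · congr 1
      exact inner2_congr hαβ (fun x hx => ((hV t ht x (sub hx)).2).symm) (fun _ _ => rfl)
    · exact inner2_congr hαβ (fun x hx => ((sol.dxm_spec t ht).eq_derivative hn
        (fun y hy => (hW t ht y hy).1) hx).symm) (fun _ _ => rfl)
  · rw [← e2]
    congr 1
    · congr 1
      · congr 1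
        exact inner2_congr hαβ (fun x hx => ((hW t ht x (sub hx)).2).symm) (fun _ _ => rfl)
      · exact inner2_congr hαβ (fun x hx => ((sol.dxp_spec t ht).eq_derivative hn
          (fun y hy => (hV t ht y hy).1) hx).symm) (fun _ _ => rfl)
    · obtain ⟨hpp, hpi⟩ := sol.pim_spec t ht
      obtain ⟨R, hR, hRe⟩ := hpp n hn
      have hRp : R = B.proj (pe (W 0 t)) := by
        refine B.proj_unique (mem_degreeLT_of_natDegree_le hk hR) fun r hr => ?_
        have h := hpi _ (M.piecewisePoly_indicator hn hr)
        simp only [M.inner2_indicator hn] at h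
        rw [inner2_congr hαβ (fun x hx => hRe x hx) (fun _ _ => rfl),
          inner2_congr (f := sol.m t) hαβ (fun x hx => (hW t ht x (sub hx)).1)
            (fun _ _ => rfl)] at h
        exact h
      rw [← hRp]
      refine inner2_congr hαβ (fun x hx => ?_) (fun _ _ => rfl)
      rw [hRe x hx]; rfl

/-- With interpolated initial values the discrete error vanishes initially. -/
lemma err_zero {xL xR : ℝ} {M : Mesh xL xR} {k : ℕ} {P : ℕ → ℕ → ℝ → ℝ → ℝ} {v dv : ℝ → ℝ}
    (h : IsInterp M k (P 0 0 0) (P 0 1 0) v dv) {n : ℕ} (hn : n < M.N)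
    (B : EltBasis (M.pt n) (M.pt (n + 1)) k) {V : ℕ → ℝ → ℝ[X]}
    (hVm : V 0 0 ∈ degreeLT ℝ (k + 1))
    (hV : ∀ x ∈ Icc (M.pt n) (M.pt (n + 1)), v x = pe (V 0 0) x) : err B P V 0 0 = 0 := by
  have hαβ := M.mono n hn
  obtain ⟨-, -, hder, hpt, hint⟩ := h
  rw [err, sub_eq_zero]
  refine (B.eq_interp (derivative_mem hVm) ?_ fun q hq => ?_).symm
  · rw [← hpt n hn.le, hV _ (left_mem_Icc.2 hαβ.le)]; rfl
  · have h := hint _ (M.piecewisePoly_indicator hn hq)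
    simp only [M.inner2_indicator hn] at h
    rw [← h]
    exact inner2_congr hαβ (fun x hx => (hder.eq_derivative hn hV hx).symm) (fun _ _ => rfl)

/-- The full error on one element is controlled by the discrete error and the interpolation
error. -/
lemma elt_error_le {k : ℕ} {T K α β ℓ : ℝ} {P : ℕ → ℕ → ℝ → ℝ → ℝ} (hαβ : α < β) (hℓ : β - α ≤ ℓ)
    (hK0 : 0 ≤ K) (hP : SmoothElt k T α β K P) (B : EltBasis α β k) {V : ℕ → ℝ → ℝ[X]} {t : ℝ}
    (ht : t ∈ Icc (0 : ℝ) T) {v : ℝ → ℝ} (hV : ∀ x ∈ Icc α β, v x = pe (V 0 t) x) :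
    inner2 α β (fun x => P 0 0 t x - v x) (fun x => P 0 0 t x - v x) ≤
      2 * (K * ℓ ^ (k + 1)) ^ 2 * (β - α) +
        2 * inner2 α β (pe (err B P V 0 t)) (pe (err B P V 0 t)) := by
  have hβα : 0 < β - α := by linarith
  set ρ : ℝ → ℝ := fun x => P 0 0 t x - pe (B.interp (P 0 0 t) (P 0 1 t)) x with hρ
  have cρ : ContinuousOn ρ (Icc α β) := (hP.cont (by lia) (by lia) ht).sub (pe_cont _ _)
  have ce := pe_cont (err B P V 0 t) (Icc α β)
  have c0 : ContinuousOn (fun x => P 0 0 t x - v x) (Icc α β) :=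
    (hP.cont (by lia) (by lia) ht).sub ((pe_cont (V 0 t) _).congr hV)
  have h1 : inner2 α β ρ ρ ≤ (K * ℓ ^ (k + 1)) ^ 2 * (β - α) := by
    refine inner2_self_le_of_sup hαβ cρ fun x hx => ?_
    refine (B.abs_sub_interp_le hαβ (fun s hs => hP.dx 0 (by lia) s hs t ht)
      (hP.cont (by lia) (by lia) ht) (hP.bd 0 (by lia) (k + 1) le_rfl t ht) hx).trans ?_
    gcongr
  have h2 : inner2 α β (fun x => P 0 0 t x - v x) (fun x => P 0 0 t x - v x) ≤
      2 * inner2 α β ρ ρ + 2 * inner2 α β (pe (err B P V 0 t)) (pe (err B P V 0 t)) := by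
    unfold inner2
    rw [← intervalIntegral.integral_const_mul, ← intervalIntegral.integral_const_mul,
      ← intervalIntegral.integral_add ((ii_mul hαβ cρ cρ).const_mul 2)
        ((ii_mul hαβ ce ce).const_mul 2)]
    refine intervalIntegral.integral_mono_on hαβ.le (ii_mul hαβ c0 c0)
      (((ii_mul hαβ cρ cρ).const_mul 2).add ((ii_mul hαβ ce ce).const_mul 2)) fun x hx => ?_
    have e : P 0 0 t x - v x = ρ x + pe (err B P V 0 t) x := by
      rw [hV x hx]; simp [hρ, pe, err]
    beta_reduce
    rw [e]
    nlinarith [sq_nonneg (ρ x - pe (err B P V 0 t) x)]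
  linarith

lemma exists_bound_derivs {k : ℕ} {T xL xR : ℝ} {P : ℕ → ℕ → ℝ → ℝ → ℝ}
    (hP : ∀ i ≤ 2, ∀ s ≤ k + 1,
      ContinuousOn (fun z : ℝ × ℝ => P i s z.1 z.2) (Icc (0 : ℝ) T ×ˢ Icc xL xR)) :
    ∃ K : ℝ, 0 ≤ K ∧ ∀ i ≤ 2, ∀ s ≤ k + 1, ∀ t ∈ Icc (0 : ℝ) T, ∀ x ∈ Icc xL xR,
      |P i s t x| ≤ K := by
  have h : ∀ i s, ∃ K : ℝ, 0 ≤ K ∧ (i ≤ 2 → s ≤ k + 1 →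
      ∀ t ∈ Icc (0 : ℝ) T, ∀ x ∈ Icc xL xR, |P i s t x| ≤ K) := by
    intro i s
    by_cases his : i ≤ 2 ∧ s ≤ k + 1
    · obtain ⟨K, hK⟩ := (isCompact_Icc.prod isCompact_Icc).exists_bound_of_continuousOn
        (hP i his.1 s his.2)
      exact ⟨|K|, abs_nonneg _, fun _ _ t ht x hx => (hK (t, x) ⟨ht, hx⟩).trans (le_abs_self K)⟩
    · exact ⟨0, le_rfl, fun h1 h2 => absurd ⟨h1, h2⟩ his⟩
  choose K hK0 hK using h
  refine ⟨∑ i ∈ Finset.range 3, ∑ s ∈ Finset.range (k + 2), K i s,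
    Finset.sum_nonneg fun i _ => Finset.sum_nonneg fun s _ => hK0 i s,
    fun i hi s hs t ht x hx => (hK i s hi hs t ht x hx).trans ?_⟩
  refine (Finset.single_le_sum (fun s _ => hK0 i s)
    (Finset.mem_range.2 (by lia : s < k + 2))).trans ?_
  exact Finset.single_le_sum (f := fun i => ∑ s ∈ Finset.range (k + 2), K i s)
    (fun i _ => Finset.sum_nonneg fun s _ => hK0 i s) (Finset.mem_range.2 (by lia : i < 3))

lemma err_eval {k : ℕ} (hk : 1 ≤ k) {T K α β : ℝ} {P : ℕ → ℕ → ℝ → ℝ → ℝ} (hαβ : α < β)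
    (hP : SmoothElt k T α β K P) (B : EltBasis α β k) {V : ℕ → ℝ → ℝ[X]} {i : ℕ} (hi : i ≤ 2)
    {t : ℝ} (ht : t ∈ Icc (0 : ℝ) T) {v : ℝ → ℝ} (hV : ∀ x ∈ Icc α β, v x = pe (V i t) x) :
    (err B P V i t).eval α = P i 0 t α - v α ∧ (err B P V i t).eval β = P i 0 t β - v β := by
  rw [hV α (left_mem_Icc.2 hαβ.le), hV β (right_mem_Icc.2 hαβ.le)]
  simp only [err, eval_sub, B.eval_interp_left, pe, true_and]
  rw [B.eval_interp_right hαβ hk (hP.cont hi (by lia) ht) (hP.dx i hi 0 (by lia) t ht)]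

/-- A time derivative of a function that vanishes on `[0, T]` vanishes. -/
lemma deriv_zero_of_zero {T : ℝ} (hT : 0 < T) {v : ℝ → ℝ} {v' t : ℝ}
    (h : ∀ s ∈ Icc (0 : ℝ) T, v s = 0) (ht : t ∈ Icc (0 : ℝ) T)
    (hv : HasDerivWithinAt v v' (Icc (0 : ℝ) T) t) : v' = 0 :=
  (uniqueDiffOn_Icc hT t ht).eq_deriv _ hv
    ((hasDerivWithinAt_const t _ (0 : ℝ)).congr h (h t ht))

/-- The error of one component, from the sum of the squared discrete errors over the elements. -/
lemma error_le_of_sum {k : ℕ} {T K xL xR C₁ κ₀ : ℝ} (hxLR : xL < xR) (M : Mesh xL xR)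
    (hK0 : 0 ≤ K) (B : ∀ n : Fin M.N, EltBasis (M.pt n) (M.pt (n + 1)) k)
    {R : ℕ → ℕ → ℝ → ℝ → ℝ} (Z : Fin M.N → ℕ → ℝ → ℝ[X])
    (hR : ∀ n : Fin M.N, SmoothElt k T (M.pt n) (M.pt (n + 1)) K R)
    {t : ℝ} (ht : t ∈ Icc (0 : ℝ) T) {r : ℝ → ℝ}
    (hRc : ContinuousOn (fun x => R 0 0 t x - r x) (Icc xL xR))
    (hZ : ∀ n : Fin M.N, ∀ x ∈ Icc (M.pt n) (M.pt (n + 1)), r x = pe (Z n 0 t) x)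
    (hsum : ∑ n : Fin M.N, inner2 (M.pt n) (M.pt (n + 1)) (pe (err (B n) R (Z n) 0 t))
      (pe (err (B n) R (Z n) 0 t)) ≤ C₁ * (κ₀ * M.hsize ^ (k + 1)) ^ 2) :
    L2norm xL xR (fun x => R 0 0 t x - r x) ≤
      √(2 * K ^ 2 * (xR - xL) + 2 * (C₁ * κ₀ ^ 2)) * M.hsize ^ (k + 1) := by
  have hlen : ∑ n : Fin M.N, (M.pt (n + 1) - M.pt n) = xR - xL := by
    rw [Fin.sum_univ_eq_sum_range (fun n => M.pt (n + 1) - M.pt n), Finset.sum_range_sub,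
      M.left, M.right]
  have h2 : L2norm xL xR (fun x => R 0 0 t x - r x) ^ 2 ≤
      (2 * K ^ 2 * (xR - xL) + 2 * (C₁ * κ₀ ^ 2)) * (M.hsize ^ (k + 1)) ^ 2 := by
    rw [L2norm_sq hxLR, M.inner2_eq_sum hRc]
    refine (Finset.sum_le_sum fun (n : Fin M.N) _ => elt_error_le (M.mono n n.2)
      (M.elt_le_hsize n.2) hK0 (hR n) (B n) ht (hZ n)).trans ?_
    rw [Finset.sum_add_distrib, ← Finset.mul_sum, ← Finset.mul_sum, hlen]
    linarith
  have h3 := Real.sqrt_le_sqrt h2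
  rwa [Real.sqrt_sq (L2norm_nonneg _), Real.sqrt_mul' _ (sq_nonneg _),
    Real.sqrt_sq (pow_nonneg M.hsize_nonneg _)] at h3

end helpers

/-- **Order-optimal convergence (Theorem 1).** Let `a, b > 0`, let `d` be Lipschitz with
`0 < d_min ≤ d ≤ d_max`, and let `(p, m)` be a classical solution of the damped linear wave
system such that all partial derivatives `∂_t^i ∂_x^s p`, `∂_t^i ∂_x^s m` with `i ≤ 2`,
`s ≤ k+1` exist and are continuous (here `P i s`/`Q i s` denote `∂_t^i ∂_x^s p`/`∂_t^i ∂_x^s m`,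
and `f := a ∂_t p + ∂_x m`, `g := b ∂_t m + ∂_x p + d m`).  Then there is a constant `C`,
independent of the mesh, such that every twice continuously (in time) differentiable
semidiscrete Petrov--Galerkin solution with interpolated initial values satisfies
`‖p(t) - p_h(t)‖ + ‖m(t) - m_h(t)‖ ≤ C h^{k+1}` for all `0 ≤ t ≤ T`. -/
theorem petrov_galerkin_convergence
    (xL xR : ℝ) (hxLR : xL < xR) (k : ℕ) (hk : 1 ≤ k)
    (a b : ℝ) (ha : 0 < a) (hb : 0 < b)
    (d : ℝ → ℝ) (d_min d_max : ℝ) (hdmin : 0 < d_min)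
    (hdbd : ∀ x ∈ Set.Icc xL xR, d_min ≤ d x ∧ d x ≤ d_max)
    (L : NNReal) (hdLip : LipschitzOnWith L d (Set.Icc xL xR))
    (T : ℝ) (hT : 0 < T)
    -- `P i s = ∂_t^i ∂_x^s p`, `Q i s = ∂_t^i ∂_x^s m` for `i ≤ 2`, `s ≤ k + 1`
    (P Q : ℕ → ℕ → ℝ → ℝ → ℝ)
    (hPt : ∀ i < 2, ∀ s ≤ k + 1, ∀ t ∈ Set.Icc (0 : ℝ) T, ∀ x ∈ Set.Icc xL xR,
      HasDerivWithinAt (fun τ => P i s τ x) (P (i + 1) s t x) (Set.Icc (0 : ℝ) T) t ∧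
      HasDerivWithinAt (fun τ => Q i s τ x) (Q (i + 1) s t x) (Set.Icc (0 : ℝ) T) t)
    (hPx : ∀ i ≤ 2, ∀ s < k + 1, ∀ t ∈ Set.Icc (0 : ℝ) T, ∀ x ∈ Set.Icc xL xR,
      HasDerivWithinAt (fun y => P i s t y) (P i (s + 1) t x) (Set.Icc xL xR) x ∧
      HasDerivWithinAt (fun y => Q i s t y) (Q i (s + 1) t x) (Set.Icc xL xR) x)
    (hPc : ∀ i ≤ 2, ∀ s ≤ k + 1,
      ContinuousOn (fun z : ℝ × ℝ => P i s z.1 z.2)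
        (Set.Icc (0 : ℝ) T ×ˢ Set.Icc xL xR) ∧
      ContinuousOn (fun z : ℝ × ℝ => Q i s z.1 z.2)
        (Set.Icc (0 : ℝ) T ×ˢ Set.Icc xL xR))
    -- the boundary conditions for the pressure
    (hBC : ∀ t ∈ Set.Icc (0 : ℝ) T, P 0 0 t xL = 0 ∧ P 0 0 t xR = 0) :
    ∃ C : ℝ, 0 < C ∧
      ∀ (M : Mesh xL xR)
        (sol : PGSol M k T a b d
          (fun t x => a * P 1 0 t x + Q 0 1 t x)
          (fun t x => b * Q 1 0 t x + P 0 1 t x + d x * Q 0 0 t x))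
        (dttp dttm : ℝ → ℝ → ℝ),
        (∀ t ∈ Set.Icc (0 : ℝ) T, ∀ x,
          HasDerivWithinAt (fun s => sol.dtp s x) (dttp t x) (Set.Icc (0 : ℝ) T) t ∧
          HasDerivWithinAt (fun s => sol.dtm s x) (dttm t x) (Set.Icc (0 : ℝ) T) t) →
        (∀ x, ContinuousOn (fun t => dttp t x) (Set.Icc (0 : ℝ) T)) →
        (∀ x, ContinuousOn (fun t => dttm t x) (Set.Icc (0 : ℝ) T)) →
        IsInterp M k (P 0 0 0) (P 0 1 0) (sol.p 0) (sol.dxp 0) →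
        IsInterp M k (Q 0 0 0) (Q 0 1 0) (sol.m 0) (sol.dxm 0) →
      ∀ t ∈ Set.Icc (0 : ℝ) T,
        L2norm xL xR (fun x => P 0 0 t x - sol.p t x) +
          L2norm xL xR (fun x => Q 0 0 t x - sol.m t x) ≤ C * M.hsize ^ (k + 1) := by
  have hΛ : 0 < xR - xL := by linarith
  obtain ⟨K₁, hK₁0, hK₁⟩ := exists_bound_derivs fun i hi s hs => (hPc i hi s hs).1
  obtain ⟨K₂, hK₂0, hK₂⟩ := exists_bound_derivs fun i hi s hs => (hPc i hi s hs).2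
  set K := K₁ + K₂ with hKdef
  have hK0 : 0 ≤ K := by positivity
  have hD0 : 0 ≤ d_max := by
    have := hdbd xL (left_mem_Icc.2 hxLR.le)
    linarith
  obtain ⟨C₁, hC₁0, hC₁⟩ := global_bound (dmax := d_max) (Λ := xR - xL) ha hb hΛ hT.le
  set κ₀ := (a + b + d_max + L) * K with hκ₀
  set C₂ := 2 * K ^ 2 * (xR - xL) + 2 * (C₁ * κ₀ ^ 2)
  refine ⟨2 * √C₂ + 1, by positivity, ?_⟩
  intro M sol dttp dttm hdtt _ _ hp0 hm0 t ht
  set h := M.hsize with hh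
  have hh0 : 0 ≤ h := M.hsize_nonneg
  have hdc : ContinuousOn d (Icc xL xR) := hdLip.continuousOn
  have hlt : ∀ n : Fin M.N, M.pt n < M.pt (n + 1) := fun n => M.mono n n.2
  have hsub : ∀ n : Fin M.N, Icc (M.pt n) (M.pt (n + 1)) ⊆ Icc xL xR :=
    fun n => M.elt_subset n.2
  have hSP : ∀ n : Fin M.N, SmoothElt k T (M.pt n) (M.pt (n + 1)) K P := fun n =>
    ⟨fun i hi s hs t ht x hx => (hPt i hi s hs t ht x (hsub n hx)).1,
      fun i hi s hs t ht x hx => ((hPx i hi s hs t ht x (hsub n hx)).1).mono (hsub n),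
      fun i hi s hs => ((hPc i hi s hs).1).mono (prod_mono_right (hsub n)),
      fun i hi s hs t ht x hx => (hK₁ i hi s hs t ht x (hsub n hx)).trans (by linarith)⟩
  have hSQ : ∀ n : Fin M.N, SmoothElt k T (M.pt n) (M.pt (n + 1)) K Q := fun n =>
    ⟨fun i hi s hs t ht x hx => (hPt i hi s hs t ht x (hsub n hx)).2,
      fun i hi s hs t ht x hx => ((hPx i hi s hs t ht x (hsub n hx)).2).mono (hsub n),
      fun i hi s hs => ((hPc i hi s hs).2).mono (prod_mono_right (hsub n)),
      fun i hi s hs t ht x hx => (hK₂ i hi s hs t ht x (hsub n hx)).trans (by linarith)⟩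
  have B : ∀ n : Fin M.N, EltBasis (M.pt n) (M.pt (n + 1)) k := fun n =>
    Classical.choice (exists_eltBasis (hlt n) k)
  choose V hV0 hV1 hVm hV using fun n : Fin M.N => exists_polyCurve hT (hlt n)
    (fun t ht => sol.p_poly t ht n n.2) (fun t ht => (sol.p_cont t ht).mono (hsub n))
    sol.dtp_spec (fun t ht x => (hdtt t ht x).1)
  choose W hW0 hW1 hWm hW using fun n : Fin M.N => exists_polyCurve hT (hlt n)
    (fun t ht => sol.m_poly t ht n n.2) (fun t ht => (sol.m_cont t ht).mono (hsub n))
    sol.dtm_spec (fun t ht x => (hdtt t ht x).2)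
  have hE0 : ∀ n, EltEq T a b d P Q (B n) (V n) (W n) 0 := fun n =>
    eltEq_zero hk sol n.2 (B n) (hV n) (hW n)
  have hE1 : ∀ n, EltEq T a b d P Q (B n) (V n) (W n) 1 := fun n =>
    (hE0 n).differentiate hT (hlt n) (hdc.mono (hsub n)) (hSP n) (hSQ n) (hV0 n) (hV1 n)
      (hW0 n) (hW1 n)
  have hdD : ∀ x ∈ Icc xL xR, |d x| ≤ d_max := fun x hx => by
    have := hdbd x hx
    rw [abs_of_nonneg (by linarith)]; exact this.2
  have hdL : ∀ n : Fin M.N, ∀ x ∈ Icc (M.pt n) (M.pt (n + 1)),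
      |d x - d (M.pt n)| ≤ L * (M.pt (n + 1) - M.pt n) := by
    intro n x hx
    have h1 := hdLip.dist_le_mul x (hsub n hx) _ (hsub n (left_mem_Icc.2 (hlt n).le))
    rw [Real.dist_eq, Real.dist_eq, abs_of_nonneg (by linarith [hx.1] : 0 ≤ x - M.pt n)] at h1
    exact h1.trans (mul_le_mul_of_nonneg_left (by linarith [hx.2]) L.2)
  have hS0 := fun n : Fin M.N => eltSys_err (by lia : 0 < 2) ha hb (hlt n)
    (M.elt_le_hsize n.2) hD0 L.2 (hdc.mono (hsub n)) (fun x hx => hdD x (hsub n hx)) (hdL n) hK0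
    (hSP n) (hSQ n) (hV0 n) (hW0 n) (hVm n) (hWm n) (hE0 n)
  have hS1 := fun n : Fin M.N => eltSys_err (by lia : 1 < 2) ha hb (hlt n)
    (M.elt_le_hsize n.2) hD0 L.2 (hdc.mono (hsub n)) (fun x hx => hdD x (hsub n hx)) (hdL n) hK0
    (hSP n) (hSQ n) (hV1 n) (hW1 n) (hVm n) (hWm n) (hE1 n)
  have h0T : (0 : ℝ) ∈ Icc (0 : ℝ) T := left_mem_Icc.2 hT.le
  have hbound := hC₁ k hk M.N M.pt M.mono (by rw [M.left, M.right])
    (fun n hn => by linarith [M.left_le hn.le, M.le_right (Nat.succ_le_of_lt hn)]) d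
    (fun n hn => hdc.mono (M.elt_subset hn))
    (fun n hn y hy => ⟨by linarith [(hdbd y (M.elt_subset hn hy)).1],
      (hdbd y (M.elt_subset hn hy)).2⟩)
    B (κ₀ * h ^ (k + 1)) (by positivity)
    (fun n => err (B n) P (V n) 0) (fun n => err (B n) P (V n) 1) (fun n => err (B n) P (V n) 2)
    (fun n => err (B n) Q (W n) 0) (fun n => err (B n) Q (W n) 1) (fun n => err (B n) Q (W n) 2)
    hS0 hS1
    (fun n t => P 0 0 t (M.pt n) - sol.p t (M.pt n))
    (fun n t => Q 0 0 t (M.pt n) - sol.m t (M.pt n))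
    (fun n t => P 1 0 t (M.pt n) - sol.dtp t (M.pt n))
    (fun n t => Q 1 0 t (M.pt n) - sol.dtm t (M.pt n))
    (fun n t ht =>
      ⟨err_eval hk (hlt n) (hSP n) (B n) (by lia) ht (fun x hx => (hV n t ht x hx).1),
        err_eval hk (hlt n) (hSQ n) (B n) (by lia) ht (fun x hx => (hW n t ht x hx).1),
        err_eval hk (hlt n) (hSP n) (B n) (by lia) ht (fun x hx => (hV n t ht x hx).2),
        err_eval hk (hlt n) (hSQ n) (B n) (by lia) ht (fun x hx => (hW n t ht x hx).2)⟩)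
    (fun t ht => by
      have z1 := deriv_zero_of_zero hT (fun s hs => (hBC s hs).1) ht
        (hPt 0 (by lia) 0 (by lia) t ht xL (left_mem_Icc.2 hxLR.le)).1
      have z2 := deriv_zero_of_zero hT (fun s hs => (hBC s hs).2) ht
        (hPt 0 (by lia) 0 (by lia) t ht xR (right_mem_Icc.2 hxLR.le)).1
      have z3 := deriv_zero_of_zero hT sol.p_bcL ht (sol.dtp_spec t ht xL)
      have z4 := deriv_zero_of_zero hT sol.p_bcR ht (sol.dtp_spec t ht xR)
      rw [zero_add] at z1 z2
      simp only [M.left, M.right, (hBC t ht).1, (hBC t ht).2, sol.p_bcL t ht, sol.p_bcR t ht,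
        z1, z2, z3, z4, sub_self, and_self])
    (fun n => ⟨err_zero hp0 n.2 (B n) (hVm n 0 0) (fun x hx => (hV n 0 h0T x hx).1),
      err_zero hm0 n.2 (B n) (hWm n 0 0) (fun x hx => (hW n 0 h0T x hx).1)⟩) t ht
  have hcP : ContinuousOn (P 0 0 t) (Icc xL xR) :=
    (hPc 0 (by lia) 0 (by lia)).1.comp (f := fun x => (t, x)) (by fun_prop) fun _ hx => ⟨ht, hx⟩
  have hcQ : ContinuousOn (Q 0 0 t) (Icc xL xR) :=
    (hPc 0 (by lia) 0 (by lia)).2.comp (f := fun x => (t, x)) (by fun_prop) fun _ hx => ⟨ht, hx⟩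
  have hkp := error_le_of_sum hxLR M hK0 B V hSP ht (hcP.sub (sol.p_cont t ht))
    (fun n x hx => (hV n t ht x hx).1)
    ((Finset.sum_le_sum fun n _ =>
      le_add_of_nonneg_right (inner2_self_nonneg (hlt n) _)).trans hbound)
  have hkm := error_le_of_sum hxLR M hK0 B W hSQ ht (hcQ.sub (sol.m_cont t ht))
    (fun n x hx => (hW n t ht x hx).1)
    ((Finset.sum_le_sum fun n _ =>
      le_add_of_nonneg_left (inner2_self_nonneg (hlt n) _)).trans hbound)
  have : 0 ≤ h ^ (k + 1) := by positivity
  linarith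
end
end

section
/- If (p_h, m_h) and (p̃_h, m̃_h) are two semidiscrete solutions of the inexact Petrov–Galerkin method with the same data f, g and the same initial values p_h(0) = p̃_h(0) and m_h(0) = m̃_h(0), then p_h(t) = p̃_h(t) and m_h(t) = m̃_h(t) for all 0 ≤ t ≤ T. -/
/-!
Uniqueness is an energy argument for the difference `(P, W)` of two solutions. Write `π` for the
`L²` projection onto `P_{k-1}(T_h)`. Testing the two equations with `π P` and `π W` gives

`½ d/dt (a ‖π P‖² + b ‖π W‖²) = -(∂ₓ W, π P) - (∂ₓ P, π W) - (d π W, π W)`.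

Since `∂ₓ W` and `∂ₓ P` lie in `P_{k-1}(T_h)`, the projections on the right may be dropped in the
first two terms, which then add up to `-∫ ∂ₓ (P W) = 0` because `P` vanishes at both ends. So the
energy is nonincreasing, starts at zero, and therefore vanishes: `π P = π W = 0` for all times.
The equations now say that `∂ₓ W` and `∂ₓ P` are orthogonal to `P_{k-1}(T_h)`, which contains
them; hence `P` and `W` are piecewise constant, and being annihilated by `π`, which
fixes piecewise constants, they are zero.

Everything is done element by element, with polynomials: `PGSol.exists_local` restricts a solution
to an element, `element_energy` is the argument above up to the flux through the ends of the
element, and the theorem sums over the elements, where the fluxes telescope. The projection enters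
through an orthonormal basis (`exists_orthonormal_expansion`), and differentiability in time of the
projected coefficients through Lagrange interpolation (`exists_poly_curve`).

The friction coefficient `d` is bounded but not assumed measurable, and the data `f`, `g` need not
be integrable in space. The data terms cancel whatever their value; for the friction term see
`friction_nonneg`.
-/

open MeasureTheory intervalIntegral Set

noncomputable section

section Auxiliary

/-! ### The `L²` pairing of polynomials on an interval -/

open Polynomial in
/-- The `L²(c,d)` inner product of two real polynomials, as a bilinear map. -/
def polyPair (c d : ℝ) : ℝ[X] →ₗ[ℝ] ℝ[X] →ₗ[ℝ] ℝ :=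
  LinearMap.mk₂ ℝ (fun p q => ∫ x in c..d, p.eval x * q.eval x)
    (fun p p' q => by
      rw [← intervalIntegral.integral_add]
      · simp [add_mul]
      · exact (by fun_prop : Continuous _).intervalIntegrable _ _
      · exact (by fun_prop : Continuous _).intervalIntegrable _ _)
    (fun r p q => by
      simp [mul_assoc])
    (fun p q q' => by
      rw [← intervalIntegral.integral_add]
      · simp [mul_add]
      · exact (by fun_prop : Continuous _).intervalIntegrable _ _
      · exact (by fun_prop : Continuous _).intervalIntegrable _ _)
    (fun r p q => by
      simp only [eval_smul, smul_eq_mul, ← intervalIntegral.integral_const_mul]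
      congr 1; ext x; ring)

open Polynomial

lemma polyPair_apply (c d : ℝ) (p q : ℝ[X]) :
    polyPair c d p q = ∫ x in c..d, p.eval x * q.eval x := rfl

lemma polyPair_comm (c d : ℝ) (p q : ℝ[X]) : polyPair c d p q = polyPair c d q p := by
  simp only [polyPair_apply, mul_comm]

lemma polyPair_self_nonneg {c d : ℝ} (h : c < d) (p : ℝ[X]) : 0 ≤ polyPair c d p p :=
  intervalIntegral.integral_nonneg h.le fun _ _ => mul_self_nonneg _

lemma poly_eq_zero_of_Ioo {c d : ℝ} (h : c < d) (p : ℝ[X])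
    (hp : ∀ x ∈ Ioo c d, p.eval x = 0) : p = 0 :=
  p.eq_zero_of_infinite_isRoot ((Ioo_infinite h).mono fun x hx => hp x hx)

lemma polyPair_self_eq_zero {c d : ℝ} (h : c < d) {p : ℝ[X]} (hp : polyPair c d p p = 0) :
    p = 0 := by
  refine poly_eq_zero_of_Ioo h p fun x hx => ?_
  by_contra hne
  have : 0 < ∫ x in c..d, p.eval x * p.eval x := by
    refine intervalIntegral.integral_pos h (by fun_prop) (fun _ _ => mul_self_nonneg _)
      ⟨x, Ioo_subset_Icc_self hx, mul_self_pos.mpr hne⟩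
  exact this.ne' hp

lemma mem_degreeLT_iff_natDegree_le {j : ℕ} {q : ℝ[X]} :
    q ∈ degreeLT ℝ (j + 1) ↔ q.natDegree ≤ j := by
  rw [mem_degreeLT, natDegree_le_iff_degree_le]
  exact Polynomial.degree_lt_iff_coeff_zero q (j + 1) |>.trans
    (Polynomial.degree_le_iff_coeff_zero q j |>.trans (by
      simp only [Nat.cast_lt, Nat.succ_le_iff])).symm

/-- An `L²(c,d)`-orthonormal basis `e` of the polynomials of degree at most `j`; only the
expansion `q = ∑ (q, eᵢ) eᵢ` is recorded, since it is all that the energy argument uses. -/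
lemma exists_orthonormal_expansion {c d : ℝ} (h : c < d) (j : ℕ) :
    ∃ (r : ℕ) (e : Fin r → ℝ[X]), (∀ i, (e i).natDegree ≤ j) ∧
      ∀ q : ℝ[X], q.natDegree ≤ j → q = ∑ i, polyPair c d q (e i) • e i := by
  let core : InnerProductSpace.Core ℝ (degreeLT ℝ (j + 1)) :=
    { inner := fun p q => polyPair c d p q
      conj_inner_symm := fun p q => by simpa using polyPair_comm c d _ _
      re_inner_nonneg := fun p => by simpa using polyPair_self_nonneg h _
      add_left := fun p q r => by simp
      smul_left := fun p q r => by simp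
      definite := fun p hp => Subtype.ext (polyPair_self_eq_zero h hp) }
  let _ : NormedAddCommGroup (degreeLT ℝ (j + 1)) := core.toNormedAddCommGroup
  let _ : InnerProductSpace ℝ (degreeLT ℝ (j + 1)) := InnerProductSpace.ofCore core.toCore
  let B := stdOrthonormalBasis ℝ (degreeLT ℝ (j + 1))
  refine ⟨_, fun i => (B i : ℝ[X]), fun i => mem_degreeLT_iff_natDegree_le.1 (B i).2,
    fun q hq => ?_⟩
  have := congrArg Subtype.val (B.sum_repr' ⟨q, mem_degreeLT_iff_natDegree_le.2 hq⟩)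
  rw [Submodule.coe_sum] at this
  refine this.symm.trans (Finset.sum_congr rfl fun i _ => ?_)
  rw [polyPair_comm]
  rfl

/-! ### Differentiability in time -/

/-- A curve `u` of functions that are polynomials of degree at most `k` on `(c,d)`, pointwise
differentiable in time, is a differentiable curve of polynomials: Lagrange interpolation at
`k + 1` fixed nodes expresses `u t` through finitely many of its values. -/
lemma exists_poly_curve {c d T : ℝ} (h : c < d) (hT : 0 < T) (k : ℕ) (u ut : ℝ → ℝ → ℝ)
    (hu : ∀ t ∈ Icc (0 : ℝ) T, ∃ P : ℝ[X], P.natDegree ≤ k ∧ ∀ x ∈ Ioo c d, u t x = P.eval x)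
    (hut : ∀ t ∈ Icc (0 : ℝ) T, ∀ x,
      HasDerivWithinAt (fun s => u s x) (ut t x) (Icc (0 : ℝ) T) t) :
    ∃ U Ut : ℝ → ℝ[X], ∀ t ∈ Icc (0 : ℝ) T, (U t).natDegree ≤ k ∧
      (∀ x ∈ Ioo c d, u t x = (U t).eval x) ∧ (∀ x ∈ Ioo c d, ut t x = (Ut t).eval x) ∧
      ∀ e : ℝ[X], HasDerivWithinAt (fun s => polyPair c d (U s) e) (polyPair c d (Ut t) e)
        (Icc (0 : ℝ) T) t := by
  let v : ℕ → ℝ := fun i => c + (d - c) * ((i + 1) / (k + 2))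
  have hdc : 0 < d - c := sub_pos.2 h
  have hv : ∀ i ∈ Finset.range (k + 1), v i ∈ Ioo c d := by
    intro i hi
    have hi' : (i : ℝ) + 1 < k + 2 := by
      have := Finset.mem_range.1 hi
      exact_mod_cast (by omega : i + 1 < k + 2)
    have h0 : (0 : ℝ) < (i + 1) / (k + 2) := by positivity
    have h1 : ((i : ℝ) + 1) / (k + 2) < 1 := by rw [div_lt_one (by positivity)]; exact hi'
    constructor
    · simp only [v]; nlinarith
    · simp only [v]; nlinarith
  have hinj : Set.InjOn v (Finset.range (k + 1)) := by
    intro i _ i' _ hii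
    simp only [v] at hii
    have h2 : (k : ℝ) + 2 ≠ 0 := by positivity
    have := mul_left_cancel₀ hdc.ne' (add_left_cancel hii)
    rw [div_left_inj' h2] at this
    exact_mod_cast add_right_cancel this
  let L : ℕ → ℝ[X] := fun i => Lagrange.basis (Finset.range (k + 1)) v i
  let lift : (ℝ → ℝ) → ℝ[X] := fun w => ∑ i ∈ Finset.range (k + 1), w (v i) • L i
  have key : ∀ t ∈ Icc (0 : ℝ) T, (lift (u t)).natDegree ≤ k ∧
      ∀ x ∈ Ioo c d, u t x = (lift (u t)).eval x := by
    intro t ht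
    obtain ⟨P, hPk, hP⟩ := hu t ht
    have hPe : P = lift (u t) := by
      have := Lagrange.eq_interpolate_of_eval_eq (s := Finset.range (k + 1)) (v := v)
        (fun i => u t (v i)) (f := P) hinj
        (by
          rw [Finset.card_range, ← mem_degreeLT]
          exact mem_degreeLT_iff_natDegree_le.2 hPk)
        (fun i hi => (hP _ (hv i hi)).symm)
      rw [this, Lagrange.interpolate_apply]
      simp only [lift, L, smul_eq_C_mul]
    rw [← hPe]
    exact ⟨hPk, hP⟩
  refine ⟨fun t => lift (u t), fun t => lift (ut t), fun t ht =>
    ⟨(key t ht).1, (key t ht).2, fun x hx => ?_, fun e => ?_⟩⟩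
  · have h1 : HasDerivWithinAt (fun s => (lift (u s)).eval x) ((lift (ut t)).eval x)
        (Icc (0 : ℝ) T) t := by
      simp only [lift, eval_finsetSum, eval_smul, smul_eq_mul]
      exact HasDerivWithinAt.fun_sum fun i _ => (hut t ht (v i)).mul_const _
    have h2 := h1.congr (fun s hs => (key s hs).2 x hx) ((key t ht).2 x hx)
    exact (uniqueDiffOn_Icc hT t ht).eq_deriv _ (hut t ht x) h2
  · simp only [lift, map_sum, map_smul, LinearMap.sum_apply, LinearMap.smul_apply, smul_eq_mul]
    exact HasDerivWithinAt.fun_sum fun i _ => (hut t ht (v i)).mul_const _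

/-! ### Localised integrals and the friction term -/

/-- Testing against a function supported in one element localises the `L²` inner product.
No integrability is needed. -/
lemma inner2_indicator {xL xR c d : ℝ} (hL : xL ≤ c) (h : c < d) (hR : d ≤ xR)
    (w : ℝ → ℝ) (q : ℝ → ℝ) :
    inner2 xL xR w ((Ioo c d).indicator q) = ∫ x in c..d, w x * q x := by
  have hsub : Ioc xL xR ∩ Ioo c d = Ioo c d :=
    inter_eq_right.2 fun x hx => ⟨hL.trans_lt hx.1, hx.2.le.trans hR⟩
  have : (fun x => w x * (Ioo c d).indicator q x) = (Ioo c d).indicator fun x => w x * q x := by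
    ext x; by_cases hx : x ∈ Ioo c d <;> simp [hx]
  rw [inner2, this, intervalIntegral.integral_of_le (hL.trans (h.le.trans hR)),
    setIntegral_indicator measurableSet_Ioo, hsub, intervalIntegral.integral_of_le h.le,
    integral_Ioc_eq_integral_Ioo]

lemma intervalIntegral_congr_Ioo {c d : ℝ} (h : c < d) {w w' : ℝ → ℝ}
    (hw : ∀ x ∈ Ioo c d, w x = w' x) : ∫ x in c..d, w x = ∫ x in c..d, w' x := by
  rw [intervalIntegral.integral_of_le h.le, intervalIntegral.integral_of_le h.le,
    integral_Ioc_eq_integral_Ioo, integral_Ioc_eq_integral_Ioo]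
  exact setIntegral_congr_fun measurableSet_Ioo hw

/-- The friction term is monotone. If `d` is not measurable on the element, both integrals
take the junk value `0`, because a nonzero polynomial vanishes only on a null set. -/
lemma friction_nonneg {c e : ℝ} (h : c < e) (d : ℝ → ℝ) {d_min d_max : ℝ} (hdmin : 0 < d_min)
    (hd : ∀ᵐ x ∂(volume.restrict (Ioo c e)), d_min ≤ d x ∧ d x ≤ d_max) (R R' : ℝ[X]) :
    0 ≤ (∫ x in c..e, d x * R.eval x * (R - R').eval x) -
      ∫ x in c..e, d x * R'.eval x * (R - R').eval x := by
  simp only [intervalIntegral.integral_of_le h.le, integral_Ioc_eq_integral_Ioo]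
  by_cases hm : AEStronglyMeasurable d (volume.restrict (Ioo c e))
  · have hint : ∀ A B : ℝ[X], Integrable (fun x => d x * A.eval x * B.eval x)
        (volume.restrict (Ioo c e)) := by
      intro A B
      have hc : Integrable (fun x => A.eval x * B.eval x) (volume.restrict (Ioo c e)) :=
        ((by fun_prop : Continuous fun x => A.eval x * B.eval x).integrableOn_Icc).mono_set
          Ioo_subset_Icc_self
      have := hc.bdd_mul (c := d_max) hm (by
        filter_upwards [hd] with x hx
        rw [Real.norm_of_nonneg (hdmin.le.trans hx.1)]
        exact hx.2)
      simpa only [mul_assoc] using this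
    rw [← integral_sub (hint _ _) (hint _ _)]
    refine integral_nonneg_of_ae ?_
    filter_upwards [hd] with x hx
    have : d x * R.eval x * (R - R').eval x - d x * R'.eval x * (R - R').eval x =
        d x * (R.eval x - R'.eval x) ^ 2 := by
      rw [eval_sub]; ring
    rw [this]
    exact mul_nonneg (hdmin.le.trans hx.1) (sq_nonneg _)
  · have hz : ∀ A B : ℝ[X], ∫ x in Ioo c e, d x * A.eval x * B.eval x = 0 := by
      intro A B
      by_cases hAB : A * B = 0
      · have : ∀ x, d x * A.eval x * B.eval x = 0 := fun x => by
          rw [mul_assoc, ← eval_mul, hAB]; simp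
        simp [this]
      · refine integral_undef fun hi => hm ?_
        have hmeas : AEStronglyMeasurable
            (fun x => d x * A.eval x * B.eval x * ((A * B).eval x)⁻¹)
            (volume.restrict (Ioo c e)) :=
          hi.aestronglyMeasurable.mul
            ((A * B).continuous.measurable.inv.aestronglyMeasurable)
        refine hmeas.congr (ae_restrict_of_ae ?_)
        have hfin : {x | (A * B).IsRoot x}.Finite := finite_setOfPred_isRoot hAB
        filter_upwards [hfin.countable.ae_notMem volume] with x hx
        have hx' : (A * B).eval x ≠ 0 := hx
        rw [mul_assoc (d x), ← eval_mul, mul_assoc, mul_inv_cancel₀ hx', mul_one]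
    rw [hz, hz, sub_zero]

/-! ### Meshes and restriction to one element -/

lemma Mesh.pt_le_s15 {xL xR : ℝ} (M : Mesh xL xR) {i n : ℕ} (hin : i ≤ n) (hn : n ≤ M.N) :
    M.pt i ≤ M.pt n := by
  induction n, hin using Nat.le_induction with
  | base => exact le_rfl
  | succ n _ ih => exact (ih (by omega)).trans (M.mono n (by omega)).le

lemma Mesh.left_le_pt {xL xR : ℝ} (M : Mesh xL xR) {n : ℕ} (hn : n ≤ M.N) : xL ≤ M.pt n :=
  M.left.symm.le.trans (M.pt_le_s15 (Nat.zero_le n) hn)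

lemma Mesh.pt_le_right {xL xR : ℝ} (M : Mesh xL xR) {n : ℕ} (hn : n ≤ M.N) : M.pt n ≤ xR :=
  (M.pt_le_s15 hn le_rfl).trans M.right.le

lemma Mesh.exists_element {xL xR : ℝ} (M : Mesh xL xR) {x : ℝ} (hx : x ∈ Icc xL xR) :
    ∃ n < M.N, x ∈ Icc (M.pt n) (M.pt (n + 1)) := by
  by_contra! hcon
  have : ∀ n ≤ M.N, M.pt n ≤ x ∧ (0 < n → M.pt n < x) := by
    intro n
    induction n with
    | zero => intro _; exact ⟨M.left.le.trans hx.1, fun h => absurd h (lt_irrefl _)⟩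
    | succ n ih =>
      intro hn
      have h1 := (ih (by omega)).1
      have h2 : M.pt (n + 1) < x := by
        by_contra! h3
        exact hcon n (by omega) ⟨h1, h3⟩
      exact ⟨h2.le, fun _ => h2⟩
  have h := (this M.N le_rfl).2 M.Npos
  rw [M.right] at h
  exact absurd hx.2 (not_le.2 h)

lemma Mesh.piecewisePoly_indicator_s15 {xL xR : ℝ} (M : Mesh xL xR) {n : ℕ} (hn : n < M.N)
    {j : ℕ} {q : ℝ[X]} (hq : q.natDegree ≤ j) :
    M.PiecewisePoly j ((Ioo (M.pt n) (M.pt (n + 1))).indicator fun x => q.eval x) := by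
  intro i hi
  by_cases hin : i = n
  · subst hin
    exact ⟨q, hq, fun x hx => by simp [hx]⟩
  · refine ⟨0, by simp, fun x hx => ?_⟩
    rw [indicator_of_notMem, eval_zero]
    intro hx'
    rcases lt_or_gt_of_ne hin with h | h
    · have := M.pt_le_s15 (Nat.succ_le_of_lt h) hn.le
      linarith [hx.2, hx'.1]
    · have := M.pt_le_s15 (Nat.succ_le_of_lt h) hi.le
      linarith [hx.1, hx'.2]

lemma deriv_eq_of_eq_poly {c d : ℝ} {w dw : ℝ → ℝ} {P : ℝ[X]}
    (hw : ∀ x ∈ Ioo c d, w x = P.eval x) (hd : ∀ x ∈ Ioo c d, HasDerivAt w (dw x) x) :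
    ∀ x ∈ Ioo c d, dw x = (derivative P).eval x := by
  intro x hx
  refine (hd x hx).unique ((P.hasDerivAt x).congr_of_eventuallyEq ?_)
  filter_upwards [isOpen_Ioo.mem_nhds hx] with y hy using hw y hy

lemma eq_poly_Icc {c d : ℝ} (h : c < d) {w : ℝ → ℝ} {P : ℝ[X]}
    (hc : ContinuousOn w (Icc c d)) (hw : ∀ x ∈ Ioo c d, w x = P.eval x) :
    ∀ x ∈ Icc c d, w x = P.eval x :=
  EqOn.of_subset_closure (f := w) (g := fun x => P.eval x) hw hc P.continuous.continuousOn
    Ioo_subset_Icc_self (closure_Ioo h.ne).ge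

/-- The restriction of a semidiscrete solution to one element, in terms of polynomials:
`U`, `W` represent `p`, `m`, `Ut`, `Wt` their time derivatives, and `R` represents
`π_h^{k-1} m`. The equations are those obtained from test functions supported in the element. -/
lemma PGSol.exists_local {xL xR : ℝ} {M : Mesh xL xR} {k : ℕ} {T a b : ℝ} {d : ℝ → ℝ}
    {f g : ℝ → ℝ → ℝ} (hT : 0 < T) (sol : PGSol M k T a b d f g) {n : ℕ} (hn : n < M.N) :
    ∃ U Ut W Wt R : ℝ → ℝ[X], ∀ t ∈ Icc (0 : ℝ) T,
      (U t).natDegree ≤ k ∧ (W t).natDegree ≤ k ∧ (R t).natDegree ≤ k - 1 ∧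
      (∀ x ∈ Icc (M.pt n) (M.pt (n + 1)), sol.p t x = (U t).eval x) ∧
      (∀ x ∈ Icc (M.pt n) (M.pt (n + 1)), sol.m t x = (W t).eval x) ∧
      (∀ e, HasDerivWithinAt (fun s => polyPair (M.pt n) (M.pt (n + 1)) (U s) e)
        (polyPair (M.pt n) (M.pt (n + 1)) (Ut t) e) (Icc 0 T) t) ∧
      (∀ e, HasDerivWithinAt (fun s => polyPair (M.pt n) (M.pt (n + 1)) (W s) e)
        (polyPair (M.pt n) (M.pt (n + 1)) (Wt t) e) (Icc 0 T) t) ∧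
      ∀ q : ℝ[X], q.natDegree ≤ k - 1 →
        polyPair (M.pt n) (M.pt (n + 1)) (R t) q = polyPair (M.pt n) (M.pt (n + 1)) (W t) q ∧
        a * polyPair (M.pt n) (M.pt (n + 1)) (Ut t) q +
          polyPair (M.pt n) (M.pt (n + 1)) (derivative (W t)) q =
            ∫ x in M.pt n..M.pt (n + 1), f t x * q.eval x ∧
        b * polyPair (M.pt n) (M.pt (n + 1)) (Wt t) q +
          polyPair (M.pt n) (M.pt (n + 1)) (derivative (U t)) q +
          (∫ x in M.pt n..M.pt (n + 1), d x * (R t).eval x * q.eval x) =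
            ∫ x in M.pt n..M.pt (n + 1), g t x * q.eval x := by
  have hlt := M.mono n hn
  have hL := M.left_le_pt hn.le
  have hR := M.pt_le_right (Nat.succ_le_of_lt hn)
  have hsub : Icc (M.pt n) (M.pt (n + 1)) ⊆ Icc xL xR := Icc_subset_Icc hL hR
  obtain ⟨U, Ut, hU⟩ := exists_poly_curve hlt hT k sol.p sol.dtp
    (fun t ht => sol.p_poly t ht n hn) sol.dtp_spec
  obtain ⟨W, Wt, hW⟩ := exists_poly_curve hlt hT k sol.m sol.dtm
    (fun t ht => sol.m_poly t ht n hn) sol.dtm_spec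
  have hRex : ∀ t, ∃ Q : ℝ[X], t ∈ Icc (0 : ℝ) T → Q.natDegree ≤ k - 1 ∧
      ∀ x ∈ Ioo (M.pt n) (M.pt (n + 1)), sol.pim t x = Q.eval x := by
    intro t
    by_cases ht : t ∈ Icc (0 : ℝ) T
    · obtain ⟨Q, hQ⟩ := (sol.pim_spec t ht).1 n hn
      exact ⟨Q, fun _ => hQ⟩
    · exact ⟨0, fun h => absurd h ht⟩
  choose R hRs using hRex
  refine ⟨U, Ut, W, Wt, R, fun t ht => ?_⟩
  obtain ⟨hU1, hU2, hU3, hU4⟩ := hU t ht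
  obtain ⟨hW1, hW2, hW3, hW4⟩ := hW t ht
  obtain ⟨hR1, hR2⟩ := hRs t ht
  have hxp := deriv_eq_of_eq_poly hU2 (sol.dxp_spec t ht n hn)
  have hxm := deriv_eq_of_eq_poly hW2 (sol.dxm_spec t ht n hn)
  refine ⟨hU1, hW1, hR1, eq_poly_Icc hlt ((sol.p_cont t ht).mono hsub) hU2,
    eq_poly_Icc hlt ((sol.m_cont t ht).mono hsub) hW2, hU4, hW4, fun q hq => ?_⟩
  have hpw := M.piecewisePoly_indicator_s15 hn hq
  have e0 := (sol.pim_spec t ht).2 _ hpw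
  have e1 := sol.eq1 t ht _ hpw
  have e2 := sol.eq2 t ht _ hpw
  simp only [inner2_indicator hL hlt hR] at e0 e1 e2
  refine ⟨?_, ?_, ?_⟩
  · rw [polyPair_apply, polyPair_apply]
    rw [intervalIntegral_congr_Ioo hlt (w' := fun x => (R t).eval x * q.eval x)
      (fun x hx => by rw [hR2 x hx]), intervalIntegral_congr_Ioo hlt
      (w := fun x => sol.m t x * q.eval x) (w' := fun x => (W t).eval x * q.eval x)
      (fun x hx => by rw [hW2 x hx])] at e0
    exact e0
  · rw [polyPair_apply, polyPair_apply, ← intervalIntegral.integral_const_mul, ← e1]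
    congr 1
    · exact intervalIntegral_congr_Ioo hlt fun x hx => by rw [hU3 x hx]; ring
    · exact intervalIntegral_congr_Ioo hlt fun x hx => by rw [hxm x hx]
  · rw [polyPair_apply, polyPair_apply, ← intervalIntegral.integral_const_mul, ← e2]
    congr 1
    · congr 1
      · exact intervalIntegral_congr_Ioo hlt fun x hx => by rw [hW3 x hx]; ring
      · exact intervalIntegral_congr_Ioo hlt fun x hx => by rw [hxp x hx]
    · exact intervalIntegral_congr_Ioo hlt fun x hx => by rw [hR2 x hx]

/-! ### The energy on one element -/

lemma natDegree_derivative_le_sub_one {k : ℕ} {P : ℝ[X]} (h : P.natDegree ≤ k) :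
    (derivative P).natDegree ≤ k - 1 :=
  (natDegree_derivative_le P).trans (Nat.sub_le_sub_right h 1)

lemma polyPair_derivative_add (c d : ℝ) (U W : ℝ[X]) :
    polyPair c d (derivative W) U + polyPair c d (derivative U) W =
      U.eval d * W.eval d - U.eval c * W.eval c := by
  rw [polyPair_apply, polyPair_apply, ← intervalIntegral.integral_add
    ((by fun_prop : Continuous _).intervalIntegrable _ _)
    ((by fun_prop : Continuous _).intervalIntegrable _ _), ← eval_mul, ← eval_mul]
  rw [← intervalIntegral.integral_eq_sub_of_hasDerivAt (fun x _ => (U * W).hasDerivAt x)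
    ((derivative (U * W)).continuous.intervalIntegrable _ _)]
  congr 1
  ext x
  simp only [derivative_mul, eval_add, eval_mul]
  ring

/-- The energy argument on one element for the difference of two local solutions. The element
energy `E` is `a‖π U‖² + b‖π W‖²` with `π` the projection onto polynomials of degree at most
`k - 1`, and `κ t q` stands for the friction term. The derivative of `E` is at most the flux
`-2 [U W]` through the ends of the element, and vanishing energy forces `U = W = 0`: it makes
`∂ₓ U` and `∂ₓ W` orthogonal to themselves, so `U`, `W` are constants with vanishing projection. -/
lemma element_energy {c d T a b : ℝ} (h : c < d) (hT : 0 < T) (ha : 0 < a) (hb : 0 < b)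
    {k : ℕ} (U Ut W Wt R : ℝ → ℝ[X]) (κ : ℝ → ℝ[X] → ℝ)
    (hU : ∀ t ∈ Icc (0 : ℝ) T, (U t).natDegree ≤ k)
    (hW : ∀ t ∈ Icc (0 : ℝ) T, (W t).natDegree ≤ k)
    (hR : ∀ t ∈ Icc (0 : ℝ) T, (R t).natDegree ≤ k - 1)
    (hUt : ∀ t ∈ Icc (0 : ℝ) T, ∀ e, HasDerivWithinAt (fun s => polyPair c d (U s) e)
      (polyPair c d (Ut t) e) (Icc 0 T) t)
    (hWt : ∀ t ∈ Icc (0 : ℝ) T, ∀ e, HasDerivWithinAt (fun s => polyPair c d (W s) e)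
      (polyPair c d (Wt t) e) (Icc 0 T) t)
    (hRW : ∀ t ∈ Icc (0 : ℝ) T, ∀ q : ℝ[X], q.natDegree ≤ k - 1 →
      polyPair c d (R t) q = polyPair c d (W t) q)
    (eq1 : ∀ t ∈ Icc (0 : ℝ) T, ∀ q : ℝ[X], q.natDegree ≤ k - 1 →
      a * polyPair c d (Ut t) q + polyPair c d (derivative (W t)) q = 0)
    (eq2 : ∀ t ∈ Icc (0 : ℝ) T, ∀ q : ℝ[X], q.natDegree ≤ k - 1 →
      b * polyPair c d (Wt t) q + polyPair c d (derivative (U t)) q + κ t q = 0)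
    (hκ : ∀ t ∈ Icc (0 : ℝ) T, 0 ≤ κ t (R t))
    (hκ0 : ∀ t ∈ Icc (0 : ℝ) T, R t = 0 → ∀ q, κ t q = 0) :
    ∃ E D : ℝ → ℝ, (∀ t, 0 ≤ E t) ∧ (U 0 = 0 → W 0 = 0 → E 0 = 0) ∧
      (∀ t ∈ Icc (0 : ℝ) T, HasDerivWithinAt E (D t) (Icc 0 T) t) ∧
      (∀ t ∈ Icc (0 : ℝ) T, D t ≤
        -2 * ((U t).eval d * (W t).eval d - (U t).eval c * (W t).eval c)) ∧
      ((∀ t ∈ Icc (0 : ℝ) T, E t = 0) → ∀ t ∈ Icc (0 : ℝ) T, U t = 0 ∧ W t = 0) := by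
  obtain ⟨r, e, hedeg, he⟩ := exists_orthonormal_expansion h (k - 1)
  let π : ℝ[X] → ℝ[X] := fun P => ∑ i, polyPair c d P (e i) • e i
  have hπdeg : ∀ P, (π P).natDegree ≤ k - 1 := fun P =>
    natDegree_sum_le_of_forall_le _ _ fun i _ => (natDegree_smul_le _ _).trans (hedeg i)
  have hπ : ∀ P Q, polyPair c d P (π Q) = ∑ i, polyPair c d Q (e i) * polyPair c d P (e i) := by
    intro P Q; simp [π]
  have hπadj : ∀ q : ℝ[X], q.natDegree ≤ k - 1 → ∀ P,
      polyPair c d q (π P) = polyPair c d q P := by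
    intro q hq P
    conv_rhs => rw [he q hq]
    rw [hπ, map_sum, LinearMap.sum_apply]
    refine Finset.sum_congr rfl fun i _ => ?_
    rw [map_smul, LinearMap.smul_apply, smul_eq_mul, polyPair_comm c d (e i) P, mul_comm]
  have hRπ : ∀ t ∈ Icc (0 : ℝ) T, R t = π (W t) := by
    intro t ht
    rw [he (R t) (hR t ht)]
    exact Finset.sum_congr rfl fun i _ => by rw [hRW t ht _ (hedeg i)]
  refine ⟨fun t => ∑ i, (a * polyPair c d (U t) (e i) ^ 2 + b * polyPair c d (W t) (e i) ^ 2),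
    fun t => 2 * (a * polyPair c d (Ut t) (π (U t)) + b * polyPair c d (Wt t) (π (W t))),
    fun t => Finset.sum_nonneg fun i _ => by positivity, ?_, ?_, ?_, ?_⟩
  · intro h1 h2
    simp [h1, h2]
  · intro t ht
    have : HasDerivWithinAt
        (fun t => ∑ i, (a * polyPair c d (U t) (e i) ^ 2 + b * polyPair c d (W t) (e i) ^ 2))
        (∑ i, (a * (2 * polyPair c d (U t) (e i) ^ (2 - 1) * polyPair c d (Ut t) (e i)) +
          b * (2 * polyPair c d (W t) (e i) ^ (2 - 1) * polyPair c d (Wt t) (e i))))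
        (Icc 0 T) t :=
      HasDerivWithinAt.fun_sum fun i _ =>
        (((hUt t ht (e i)).fun_pow 2).const_mul a).add (((hWt t ht (e i)).fun_pow 2).const_mul b)
    convert this using 1
    beta_reduce
    rw [hπ, hπ, Finset.mul_sum, Finset.mul_sum, ← Finset.sum_add_distrib, Finset.mul_sum]
    exact Finset.sum_congr rfl fun i _ => by ring
  · intro t ht
    have h1 := eq1 t ht _ (hπdeg (U t))
    have h2 := eq2 t ht _ (hπdeg (W t))
    have h3 := hκ t ht
    rw [hRπ t ht] at h3
    rw [hπadj _ (natDegree_derivative_le_sub_one (hW t ht))] at h1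
    rw [hπadj _ (natDegree_derivative_le_sub_one (hU t ht))] at h2
    have h4 := polyPair_derivative_add c d (U t) (W t)
    linarith
  · intro hE
    have hzero : ∀ t ∈ Icc (0 : ℝ) T, ∀ i,
        polyPair c d (U t) (e i) = 0 ∧ polyPair c d (W t) (e i) = 0 := by
      intro t ht i
      have h1 := (Finset.sum_eq_zero_iff_of_nonneg
        (fun i _ => by positivity)).1 (hE t ht) i (Finset.mem_univ i)
      have hu : 0 ≤ a * polyPair c d (U t) (e i) ^ 2 := by positivity
      have hw : 0 ≤ b * polyPair c d (W t) (e i) ^ 2 := by positivity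
      have hu0 : a * polyPair c d (U t) (e i) ^ 2 = 0 := by linarith
      have hw0 : b * polyPair c d (W t) (e i) ^ 2 = 0 := by linarith
      simp only [mul_eq_zero, ha.ne', hb.ne', false_or] at hu0 hw0
      exact ⟨pow_eq_zero_iff two_ne_zero |>.1 hu0, pow_eq_zero_iff two_ne_zero |>.1 hw0⟩
    -- The projections vanish identically in time, hence so do their time derivatives.
    have hderiv : ∀ V Vt : ℝ → ℝ[X], (∀ t ∈ Icc (0 : ℝ) T, ∀ e, HasDerivWithinAt
        (fun s => polyPair c d (V s) e) (polyPair c d (Vt t) e) (Icc 0 T) t) →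
        (∀ t ∈ Icc (0 : ℝ) T, ∀ i, polyPair c d (V t) (e i) = 0) →
        ∀ t ∈ Icc (0 : ℝ) T, ∀ q : ℝ[X], q.natDegree ≤ k - 1 → polyPair c d (Vt t) q = 0 := by
      intro V Vt hV hV0 t ht q hq
      have hi : ∀ i, polyPair c d (Vt t) (e i) = 0 := fun i =>
        (uniqueDiffOn_Icc hT t ht).eq_deriv _ (hV t ht (e i))
          ((hasDerivWithinAt_const t _ (0 : ℝ)).congr (fun s hs => hV0 s hs i) (hV0 t ht i))
      rw [he q hq]
      simp [hi]
    have hconst : ∀ V : ℝ[X], V.natDegree ≤ k → polyPair c d (derivative V) (derivative V) = 0 →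
        (∀ i, polyPair c d V (e i) = 0) → V = 0 := by
      intro V hV hdV hVi
      have hd0 := polyPair_self_eq_zero h hdV
      have hdeg : V.natDegree = 0 := derivative_eq_zero.1 hd0
      rw [he V (by omega)]
      simp [hVi]
    intro t ht
    have hR0 : R t = 0 := by
      rw [hRπ t ht]
      simp [π, (hzero t ht _).2]
    constructor
    · refine hconst _ (hU t ht) ?_ fun i => (hzero t ht i).1
      have hdeg := natDegree_derivative_le_sub_one (hU t ht)
      have h1 := eq2 t ht _ hdeg
      rw [hκ0 t ht hR0, hderiv W Wt hWt (fun t ht i => (hzero t ht i).2) t ht _ hdeg] at h1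
      linarith
    · refine hconst _ (hW t ht) ?_ fun i => (hzero t ht i).2
      have hdeg := natDegree_derivative_le_sub_one (hW t ht)
      have h1 := eq1 t ht _ hdeg
      rw [hderiv U Ut hUt (fun t ht i => (hzero t ht i).1) t ht _ hdeg] at h1
      linarith

/-- `element_energy` applied to the difference of two semidiscrete solutions with the same data
and initial values; the fluxes are expressed through the values at the mesh points. -/
lemma PGSol.element_energy {xL xR : ℝ} {M : Mesh xL xR} {k : ℕ} {T a b : ℝ} {d : ℝ → ℝ}
    {d_min d_max : ℝ} {f g : ℝ → ℝ → ℝ} (hT : 0 < T) (ha : 0 < a) (hb : 0 < b)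
    (hdmin : 0 < d_min)
    (hd : ∀ᵐ x ∂(volume.restrict (Set.Ioo xL xR)), d_min ≤ d x ∧ d x ≤ d_max)
    (sol sol' : PGSol M k T a b d f g)
    (hp0 : ∀ x ∈ Set.Icc xL xR, sol.p 0 x = sol'.p 0 x)
    (hm0 : ∀ x ∈ Set.Icc xL xR, sol.m 0 x = sol'.m 0 x) (n : ℕ) (hn : n < M.N) :
    ∃ E D : ℝ → ℝ, (∀ t, 0 ≤ E t) ∧ E 0 = 0 ∧
      (∀ t ∈ Icc (0 : ℝ) T, HasDerivWithinAt E (D t) (Icc 0 T) t) ∧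
      (∀ t ∈ Icc (0 : ℝ) T, D t ≤ -2 *
        ((sol.p t (M.pt (n + 1)) - sol'.p t (M.pt (n + 1))) *
            (sol.m t (M.pt (n + 1)) - sol'.m t (M.pt (n + 1))) -
          (sol.p t (M.pt n) - sol'.p t (M.pt n)) * (sol.m t (M.pt n) - sol'.m t (M.pt n)))) ∧
      ((∀ t ∈ Icc (0 : ℝ) T, E t = 0) → ∀ t ∈ Icc (0 : ℝ) T,
        ∀ x ∈ Icc (M.pt n) (M.pt (n + 1)), sol.p t x = sol'.p t x ∧ sol.m t x = sol'.m t x) := by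
  have hlt := M.mono n hn
  have hL := M.left_le_pt hn.le
  have hR := M.pt_le_right (Nat.succ_le_of_lt hn)
  have hsub : Icc (M.pt n) (M.pt (n + 1)) ⊆ Icc xL xR := Icc_subset_Icc hL hR
  have h0T : (0 : ℝ) ∈ Icc (0 : ℝ) T := ⟨le_rfl, hT.le⟩
  obtain ⟨U, Ut, W, Wt, R, hs⟩ := sol.exists_local hT hn
  obtain ⟨U', Ut', W', Wt', R', hs'⟩ := sol'.exists_local hT hn
  choose! u1 w1 r1 u2 w2 u3 w3 q1 using hs
  choose! u1' w1' r1' u2' w2' u3' w3' q1' using hs'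
  obtain ⟨E, D, hE1, hE2, hE3, hE4, hE5⟩ := _root_.element_energy hlt hT ha hb (k := k)
    (fun t => U t - U' t) (fun t => Ut t - Ut' t) (fun t => W t - W' t) (fun t => Wt t - Wt' t)
    (fun t => R t - R' t)
    (fun t q => (∫ x in M.pt n..M.pt (n + 1), d x * (R t).eval x * q.eval x) -
      ∫ x in M.pt n..M.pt (n + 1), d x * (R' t).eval x * q.eval x)
    (fun t ht => (natDegree_sub_le _ _).trans (max_le (u1 t ht) (u1' t ht)))
    (fun t ht => (natDegree_sub_le _ _).trans (max_le (w1 t ht) (w1' t ht)))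
    (fun t ht => (natDegree_sub_le _ _).trans (max_le (r1 t ht) (r1' t ht)))
    (fun t ht e => by
      simpa only [map_sub, LinearMap.sub_apply] using (u3 t ht e).fun_sub (u3' t ht e))
    (fun t ht e => by
      simpa only [map_sub, LinearMap.sub_apply] using (w3 t ht e).fun_sub (w3' t ht e))
    (fun t ht q hq => by
      simp only [map_sub, LinearMap.sub_apply]
      rw [(q1 t ht q hq).1, (q1' t ht q hq).1])
    (fun t ht q hq => by
      simp only [map_sub, LinearMap.sub_apply]
      linarith [(q1 t ht q hq).2.1, (q1' t ht q hq).2.1])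
    (fun t ht q hq => by
      simp only [map_sub, LinearMap.sub_apply]
      linarith [(q1 t ht q hq).2.2, (q1' t ht q hq).2.2])
    (fun t ht => friction_nonneg hlt d hdmin
      (ae_restrict_of_ae_restrict_of_subset (Ioo_subset_Ioo hL hR) hd) _ _)
    (fun t ht h q => by
      rw [sub_eq_zero.1 h, sub_self])
  have hcR : M.pt (n + 1) ∈ Icc (M.pt n) (M.pt (n + 1)) := right_mem_Icc.2 hlt.le
  have hcL : M.pt n ∈ Icc (M.pt n) (M.pt (n + 1)) := left_mem_Icc.2 hlt.le
  refine ⟨E, D, hE1, hE2 ?_ ?_, hE3, fun t ht => ?_, fun hz t ht x hx => ?_⟩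
  · refine poly_eq_zero_of_Ioo hlt _ fun x hx => ?_
    have hx := Ioo_subset_Icc_self hx
    rw [eval_sub, ← u2 0 h0T x hx, ← u2' 0 h0T x hx, hp0 x (hsub hx), sub_self]
  · refine poly_eq_zero_of_Ioo hlt _ fun x hx => ?_
    have hx := Ioo_subset_Icc_self hx
    rw [eval_sub, ← w2 0 h0T x hx, ← w2' 0 h0T x hx, hm0 x (hsub hx), sub_self]
  · have := hE4 t ht
    simp only [eval_sub] at this
    rwa [← u2 t ht _ hcR, ← u2' t ht _ hcR, ← w2 t ht _ hcR, ← w2' t ht _ hcR,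
      ← u2 t ht _ hcL, ← u2' t ht _ hcL, ← w2 t ht _ hcL, ← w2' t ht _ hcL] at this
  · obtain ⟨h1, h2⟩ := hE5 hz t ht
    rw [u2 t ht x hx, u2' t ht x hx, w2 t ht x hx, w2' t ht x hx, sub_eq_zero.1 h1,
      sub_eq_zero.1 h2]
    exact ⟨rfl, rfl⟩

end Auxiliary

/-- **Uniqueness of semidiscrete solutions.** Two semidiscrete solutions of the inexact
Petrov--Galerkin method with the same data `f`, `g` and the same initial values coincide
on all of `[0,T]`. -/
theorem semidiscrete_uniqueness
    (xL xR : ℝ) (hxLR : xL < xR) (k : ℕ) (hk : 1 ≤ k) (M : Mesh xL xR)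
    (T a b : ℝ) (d : ℝ → ℝ) (d_min d_max : ℝ) (f g : ℝ → ℝ → ℝ)
    (hT : 0 < T) (ha : 0 < a) (hb : 0 < b) (hdmin : 0 < d_min)
    (hd : ∀ᵐ x ∂(volume.restrict (Set.Ioo xL xR)), d_min ≤ d x ∧ d x ≤ d_max)
    (hf : ∀ x, ContinuousOn (fun t => f t x) (Set.Icc (0 : ℝ) T))
    (hg : ∀ x, ContinuousOn (fun t => g t x) (Set.Icc (0 : ℝ) T))
    (sol sol' : PGSol M k T a b d f g)
    (hp0 : ∀ x ∈ Set.Icc xL xR, sol.p 0 x = sol'.p 0 x)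
    (hm0 : ∀ x ∈ Set.Icc xL xR, sol.m 0 x = sol'.m 0 x) :
    ∀ t ∈ Set.Icc (0 : ℝ) T, ∀ x ∈ Set.Icc xL xR,
      sol.p t x = sol'.p t x ∧ sol.m t x = sol'.m t x := by
  choose! E D hE0 hEinit hEderiv hDle hEz using
    PGSol.element_energy hT ha hb hdmin hd sol sol' hp0 hm0
  have hFderiv : ∀ t ∈ Icc (0 : ℝ) T,
      HasDerivWithinAt (fun t => ∑ n ∈ Finset.range M.N, E n t)
        (∑ n ∈ Finset.range M.N, D n t) (Icc 0 T) t := fun t ht =>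
    HasDerivWithinAt.fun_sum fun n hn => hEderiv n (Finset.mem_range.1 hn) t ht
  -- The fluxes telescope, and `p - p'` vanishes at both ends of the interval.
  have hDnonpos : ∀ t ∈ Icc (0 : ℝ) T, ∑ n ∈ Finset.range M.N, D n t ≤ 0 := by
    intro t ht
    refine (Finset.sum_le_sum fun n hn => hDle n (Finset.mem_range.1 hn) t ht).trans ?_
    rw [← Finset.mul_sum, Finset.sum_range_sub (fun n =>
      (sol.p t (M.pt n) - sol'.p t (M.pt n)) * (sol.m t (M.pt n) - sol'.m t (M.pt n)))]
    rw [M.left, M.right, sol.p_bcL t ht, sol.p_bcR t ht, sol'.p_bcL t ht, sol'.p_bcR t ht]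
    simp
  have hanti : AntitoneOn (fun t => ∑ n ∈ Finset.range M.N, E n t) (Icc (0 : ℝ) T) := by
    refine antitoneOn_of_hasDerivWithinAt_nonpos (convex_Icc 0 T)
      (f' := fun t => ∑ n ∈ Finset.range M.N, D n t)
      (fun t ht => (hFderiv t ht).continuousWithinAt)
      (fun t ht => (hFderiv t (interior_subset ht)).mono interior_subset)
      (fun t ht => hDnonpos t (interior_subset ht))
  have hzero : ∀ n < M.N, ∀ t ∈ Icc (0 : ℝ) T, E n t = 0 := by
    intro n hn t ht
    have h1 := hanti (left_mem_Icc.2 hT.le) ht ht.1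
    have h2 : ∑ n ∈ Finset.range M.N, E n 0 = 0 :=
      Finset.sum_eq_zero fun n hn => hEinit n (Finset.mem_range.1 hn)
    have hnn : ∀ n ∈ Finset.range M.N, 0 ≤ E n t := fun n hn =>
      hE0 n (Finset.mem_range.1 hn) t
    have h3 : ∑ n ∈ Finset.range M.N, E n t = 0 :=
      le_antisymm (h1.trans h2.le) (Finset.sum_nonneg hnn)
    exact (Finset.sum_eq_zero_iff_of_nonneg hnn).1 h3 n (Finset.mem_range.2 hn)
  intro t ht x hx
  obtain ⟨n, hn, hxn⟩ := M.exists_element hx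
  exact hEz n hn (hzero n hn) t ht x hxn
end
end

section
/- Let (V, E) be a finite directed graph without self-loops, where each edge e runs from vertex α(e) to vertex ω(e) and carries a length ℓ^e > 0 and continuously differentiable functions p^e, m^e : [0, ℓ^e] → ℝ. Write p^e(α(e)) = p^e(0), p^e(ω(e)) = p^e(ℓ^e) (similarly for m^e), and n^e(α(e)) = −1, n^e(ω(e)) = +1. Let E(v) be the set of edges incident to v, V_0 = {v : |E(v)| > 1} the interior vertices and V_∂ = {v : |E(v)| = 1} the boundary vertices. Assume: (i) Σ_{e ∈ E(v)} n^e(v) m^e(v) = 0 for every v ∈ V_0 (conservation of mass at junctions); (ii) p^e(v) = p^{e'}(v) for every v ∈ V_0 and all e, e' ∈ E(v) (continuity of the pressure at junctions); (iii) p^e(v) = 0 for every v ∈ V_∂ with e ∈ E(v). Then Σ_{e ∈ E} ∫_0^{ℓ^e} [ (m^e)'(x) p^e(x) + (p^e)'(x) m^e(x) ] dx = 0. -/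
/-!
By the fundamental theorem of calculus and the product rule, each edge contributes the boundary
term `p e (ℓ e) * m e (ℓ e) - p e 0 * m e 0`. The coupling conditions provide a single nodal
pressure `P v` at each vertex `v`, shared by all incident edges, such that `P v` times the net
mass flux into `v` vanishes: at interior vertices the flux is zero, at boundary vertices `P v` is
zero. Regrouping the boundary terms by vertices turns their sum into `∑ v, P v * flux v = 0`.
-/

open MeasureTheory intervalIntegral Set

/-- The integral of `(m p)'` over one pipe; the derivatives are one-sided at the end points. -/
lemma edge_integral_eq {l : ℝ} (hl : 0 < l) {p m dp dm : ℝ → ℝ}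
    (hp : ∀ x ∈ Set.Icc (0 : ℝ) l, HasDerivWithinAt p (dp x) (Set.Icc (0 : ℝ) l) x)
    (hm : ∀ x ∈ Set.Icc (0 : ℝ) l, HasDerivWithinAt m (dm x) (Set.Icc (0 : ℝ) l) x)
    (hdp : ContinuousOn dp (Set.Icc (0 : ℝ) l)) (hdm : ContinuousOn dm (Set.Icc (0 : ℝ) l)) :
    ∫ x in (0 : ℝ)..l, (dm x * p x + dp x * m x) = p l * m l - p 0 * m 0 := by
  have cp : ContinuousOn p (Set.Icc (0 : ℝ) l) := fun x hx => (hp x hx).continuousWithinAt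
  have cm : ContinuousOn m (Set.Icc (0 : ℝ) l) := fun x hx => (hm x hx).continuousWithinAt
  refine integral_eq_sub_of_hasDerivAt_of_le (f := fun x => p x * m x) hl.le (cp.mul cm) ?_ ?_
  · intro x hx
    have hn : Set.Icc (0 : ℝ) l ∈ nhds x := Icc_mem_nhds hx.1 hx.2
    have hx' := Set.Ioo_subset_Icc_self hx
    exact (((hp x hx').hasDerivAt hn).fun_mul ((hm x hx').hasDerivAt hn)).congr_deriv (by ring)
  · apply ContinuousOn.intervalIntegrable
    rw [Set.uIcc_of_le hl.le]
    exact (hdm.mul cp).add (hdp.mul cm)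

/-- **Network integration-by-parts identity.** On a finite directed graph without
self-loops, with edge lengths `ℓ e > 0` and continuously differentiable edge functions
`p e, m e : [0, ℓ e] → ℝ` (with derivatives `dp e`, `dm e`), assume
(i) conservation of mass at every interior vertex, (ii) continuity of the pressure at
every interior vertex, and (iii) zero pressure at every boundary vertex.  Then
`Σ_e ∫_0^{ℓ e} (m' p + p' m) = 0`. -/
theorem network_integration_by_parts
    {V E : Type*} [Fintype V] [Fintype E] [DecidableEq V]
    (α ω : E → V) (hloop : ∀ e, α e ≠ ω e)
    (ℓ : E → ℝ) (hℓ : ∀ e, 0 < ℓ e)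
    (p m dp dm : E → ℝ → ℝ)
    (hp : ∀ e, ∀ x ∈ Set.Icc (0 : ℝ) (ℓ e),
      HasDerivWithinAt (p e) (dp e x) (Set.Icc (0 : ℝ) (ℓ e)) x)
    (hm : ∀ e, ∀ x ∈ Set.Icc (0 : ℝ) (ℓ e),
      HasDerivWithinAt (m e) (dm e x) (Set.Icc (0 : ℝ) (ℓ e)) x)
    (hdp : ∀ e, ContinuousOn (dp e) (Set.Icc (0 : ℝ) (ℓ e)))
    (hdm : ∀ e, ContinuousOn (dm e) (Set.Icc (0 : ℝ) (ℓ e)))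
    -- (i) conservation of mass at interior vertices
    (hmass : ∀ v : V, 1 < (Finset.univ.filter fun e => α e = v ∨ ω e = v).card →
      ∑ e : E, ((if ω e = v then m e (ℓ e) else 0) - (if α e = v then m e 0 else 0)) = 0)
    -- (ii) continuity of the pressure at interior vertices
    (hpress : ∀ v : V, 1 < (Finset.univ.filter fun e => α e = v ∨ ω e = v).card →
      ∀ e e' : E, (α e = v ∨ ω e = v) → (α e' = v ∨ ω e' = v) →
        (if α e = v then p e 0 else p e (ℓ e)) =
          (if α e' = v then p e' 0 else p e' (ℓ e')))
    -- (iii) zero pressure at boundary vertices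
    (hbdry : ∀ v : V, (Finset.univ.filter fun e => α e = v ∨ ω e = v).card = 1 →
      ∀ e : E, (α e = v ∨ ω e = v) →
        (if α e = v then p e 0 else p e (ℓ e)) = 0) :
    ∑ e : E, (∫ x in (0 : ℝ)..(ℓ e), (dm e x * p e x + dp e x * m e x)) = 0 := by
  have hP : ∀ v : V, ∃ P : ℝ,
      (∀ e, (α e = v ∨ ω e = v) → (if α e = v then p e 0 else p e (ℓ e)) = P) ∧
      P * ∑ e : E, ((if ω e = v then m e (ℓ e) else 0) - (if α e = v then m e 0 else 0)) = 0 := by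
    intro v
    rcases lt_trichotomy (Finset.univ.filter fun e => α e = v ∨ ω e = v).card 1 with h | h | h
    · -- isolated vertex: no edge is incident, so any value serves as nodal pressure
      rw [Nat.lt_one_iff, Finset.card_eq_zero, Finset.filter_eq_empty_iff] at h
      exact ⟨0, fun e he => absurd he (h (Finset.mem_univ e)), zero_mul _⟩
    · exact ⟨0, hbdry v h, zero_mul _⟩
    · obtain ⟨e₀, he₀⟩ := Finset.card_pos.mp (zero_lt_one.trans h)
      exact ⟨_, fun e he => hpress v h e e₀ he (Finset.mem_filter.mp he₀).2,
        by rw [hmass v h, mul_zero]⟩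
  choose P hP hflux using hP
  have h0 : ∀ e, p e 0 = P (α e) := fun e => by simpa using hP (α e) e (Or.inl rfl)
  -- the absence of self-loops selects the outflow end `ℓ e` at the vertex `ω e`
  have h1 : ∀ e, p e (ℓ e) = P (ω e) := fun e => by
    simpa [hloop e] using hP (ω e) e (Or.inr rfl)
  calc ∑ e : E, (∫ x in (0 : ℝ)..(ℓ e), (dm e x * p e x + dp e x * m e x))
      = ∑ e : E, (P (ω e) * m e (ℓ e) - P (α e) * m e 0) :=
        Finset.sum_congr rfl fun e _ => by
          rw [edge_integral_eq (hℓ e) (hp e) (hm e) (hdp e) (hdm e), h0, h1]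
    _ = ∑ e : E, ∑ v : V, P v *
          ((if ω e = v then m e (ℓ e) else 0) - (if α e = v then m e 0 else 0)) := by
        simp [mul_sub, Finset.sum_sub_distrib]
    _ = ∑ v : V, P v * ∑ e : E,
          ((if ω e = v then m e (ℓ e) else 0) - (if α e = v then m e 0 else 0)) := by
        rw [Finset.sum_comm]
        simp only [Finset.mul_sum]
    _ = 0 := Finset.sum_eq_zero fun v _ => hflux v
end
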